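/- arXiv:1611.01313 — 2 statements merged into one kernel-verified Lean document; each statement's English description precedes it below -/
import Mathlib

section
/- Let F be a free group and R, S, T normal subgroups of F with R ⊆ S and R ⊆ T, and let 𝐫, 𝐬, 𝐭 be the two-sided ideals of ℤ[F] generated by the augmentation ideals of R, S, T. If a ∈ D(F, 𝐫𝐬𝐬𝐭 + 𝐭𝐬𝐬𝐫), then a² ∈ D(F, 𝐫𝐬𝐬𝐬 + 𝐬𝐬𝐬𝐫 + 𝐭𝐬𝐬𝐬 + 𝐬𝐬𝐬𝐭 + Δ([S,S])𝐬) and a⁶ ∈ [S, S, S, RT], where Δ([S,S])𝐬 denotes the additive span of products (c−1)·α with c ∈ [S,S] and α ∈ 𝐬, [S,S,S,RT] = [[[S,S],S],RT], and RT is the subgroup generated by R and T. -/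
/-! Group-ring preliminaries: for a subgroup `N` of `F`, `aug N` is the additive
subgroup `Δ(N)` of `ℤ[F]` generated by `{n - 1 : n ∈ N}`, and `augI N = Δ(N)ℤ[F]`
is the corresponding (for normal `N` two-sided) ideal of `ℤ[F]`.  Products of
submodules are additive spans of products, as in the paper. -/

/-- the augmentation ideal `Δ(N)` of a subgroup `N ≤ F`, inside `ℤ[F]` -/
noncomputable def aug {F : Type} [Group F] (N : Subgroup F) :
    Submodule ℤ (MonoidAlgebra ℤ F) :=
  Submodule.span ℤ {x | ∃ n ∈ N, x = (MonoidAlgebra.of ℤ F n) - 1}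

/-- the ideal `𝐧 = Δ(N)ℤ[F]` of `ℤ[F]` -/
noncomputable def augI {F : Type} [Group F] (N : Subgroup F) :
    Submodule ℤ (MonoidAlgebra ℤ F) :=
  aug N * ⊤

/-!
Enlarging `T` to `R ⊔ T` and then `R` to `U = S ⊓ T`, let `a - 1 ∈ 𝐮𝐬𝐬𝐭 + 𝐭𝐬𝐬𝐮`. Elements of `F` are
detected by characters `χ : ⁅⁅S, S⁆, S⁆ ⊓ T → ℚ/ℤ` trivial on commutators with `T`. By the Hall–Witt
identity `(p, q, r) ↦ χ ⁅⁅p, q⁆, r⁆` is a trilinear form on `U` satisfying the Jacobi identity. The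
free group `S` carries quadratic functions with any given polarization, and crossed homomorphisms on
the free group `T` assemble these into a functional `Ψ` on `ℤ[F]` that annihilates
`𝐮𝐬𝐬𝐭 + 𝐭𝐬𝐬𝐮`, so that `Ψ (a - 1) = 0`.

The free group `S ⊔ T` has an endomorphism `ρ` with values in `T` that is the identity modulo `S`.
Splitting the trilinear form along `ρ`, the Jacobi identity gives `Ψ (a - 1) = 6 χ(a) - 6 χ(ρ a)`.
The element `ρ a` falls under the easier case `b - 1 ∈ 𝐮𝐮𝐮𝐭 + 𝐭𝐮𝐮𝐮`, where the same method shows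
`b ^ 3 ∈ ⁅⁅⁅U, U⁆, U⁆, T⁆`. Hence `6 χ(a) = 0` for all `χ`, and `a ^ 6 ∈ ⁅⁅⁅S, S⁆, S⁆, T⁆` since
`ℚ/ℤ` is injective.
-/

namespace FourFold

section LinearExtension

variable {F M : Type*} [Group F] [AddCommGroup M]

local notation "ε" => MonoidAlgebra.of ℤ F

/-- The additive extension to the group ring of a function on the group. -/
noncomputable def linearExtension (g : F → M) : MonoidAlgebra ℤ F →ₗ[ℤ] M :=
  Finsupp.linearCombination ℤ g ∘ₗ (MonoidAlgebra.coeffLinearEquiv ℤ).toLinearMap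

@[simp]
theorem linearExtension_of (g : F → M) (f : F) : linearExtension g (ε f) = g f := by
  simp [linearExtension, MonoidAlgebra.of_apply]

@[simp]
theorem linearExtension_one (g : F → M) : linearExtension g 1 = g 1 := by
  rw [← linearExtension_of g 1, map_one (MonoidAlgebra.of ℤ F)]

theorem linearMap_ext_of {G H : MonoidAlgebra ℤ F →ₗ[ℤ] M} (h : ∀ f, G (ε f) = H (ε f)) :
    G = H :=
  MonoidAlgebra.lhom_ext' fun f => LinearMap.ext_ring (h f)

theorem apply_mul_eq_of_forall_of {G H : MonoidAlgebra ℤ F →ₗ[ℤ] M} {k l : MonoidAlgebra ℤ F}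
    (h : ∀ f, G (k * ε f) = H (l * ε f)) (x : MonoidAlgebra ℤ F) : G (k * x) = H (l * x) :=
  LinearMap.congr_fun (linearMap_ext_of (G := G ∘ₗ LinearMap.mulLeft ℤ k)
    (H := H ∘ₗ LinearMap.mulLeft ℤ l) h) x

end LinearExtension

section CosetRep

variable {F : Type*} [Group F] (U : Subgroup F)

/-- A representative of the left coset `f * U` depending on the coset only, with `U` itself
represented by `1`. -/
noncomputable def cosetRep (f : F) : F := (f : F ⧸ U).out * ((1 : F) : F ⧸ U).out⁻¹

theorem cosetRep_one : cosetRep U 1 = 1 := mul_inv_cancel _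

theorem cosetRep_inv_mul_mem (f : F) : (cosetRep U f)⁻¹ * f ∈ U := by
  have h (f : F) : (f : F ⧸ U).out⁻¹ * f ∈ U := QuotientGroup.eq.1 (Quotient.out_eq _)
  simpa [cosetRep, mul_assoc] using U.mul_mem (U.inv_mem (h 1)) (h f)

variable {U}

theorem cosetRep_mul_of_mem (f : F) {u : F} (hu : u ∈ U) : cosetRep U (f * u) = cosetRep U f := by
  rw [cosetRep, cosetRep, QuotientGroup.mk_mul_of_mem f hu]

variable [U.Normal]

theorem mul_cosetRep_inv_mem (f : F) : f * (cosetRep U f)⁻¹ ∈ U := by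
  simpa [mul_assoc] using ‹U.Normal›.conj_mem _ (cosetRep_inv_mul_mem U f) (cosetRep U f)

theorem cosetRep_mul_of_mem_left {u : F} (hu : u ∈ U) (f : F) :
    cosetRep U (u * f) = cosetRep U f := by
  have h : u * f = f * (f⁻¹ * u * f) := by group
  rw [h, cosetRep_mul_of_mem f (by simpa using ‹U.Normal›.conj_mem u hu f⁻¹)]

end CosetRep

section CrossedHom

/-- Crossed homomorphisms are the sections of `V ⋊ G → G`, and those of a free group lift freely. -/
theorem exists_crossedHom {R G V : Type*} [CommRing R] [Group G] [IsFreeGroup G]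
    [AddCommGroup V] [Module R V] (ρ : Representation R G V) (f : IsFreeGroup.Generators G → V) :
    ∃ D : G → V, (∀ s t, D (s * t) = D s + ρ s (D t)) ∧ ∀ i, D (IsFreeGroup.of i) = f i := by
  let act : G →* MulAut (Multiplicative V) :=
    { toFun := fun s => AddEquiv.toMultiplicative
        { toFun := ρ s
          invFun := ρ s⁻¹
          left_inv := fun v => by simp
          right_inv := fun v => by simp
          map_add' := map_add (ρ s) }
      map_one' := by ext; simp
      map_mul' := fun s t => by ext; simp }
  let φ : G →* Multiplicative V ⋊[act] G :=
    IsFreeGroup.lift fun i => ⟨Multiplicative.ofAdd (f i), IsFreeGroup.of i⟩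
  have φ_of (i) : φ (IsFreeGroup.of i) = ⟨Multiplicative.ofAdd (f i), IsFreeGroup.of i⟩ :=
    IsFreeGroup.lift_of _ i
  have φ_right (s) : (φ s).right = s := by
    have h : SemidirectProduct.rightHom.comp φ = MonoidHom.id G :=
      IsFreeGroup.ext_hom fun i => by simp [φ_of]
    exact DFunLike.congr_fun h s
  refine ⟨fun s => (φ s).left.toAdd, fun s t => ?_, fun i => by simp [φ_of]⟩
  simp only [map_mul, SemidirectProduct.mul_left, toAdd_mul, φ_right]
  rfl

theorem closure_range_isFreeGroup_of (G : Type*) [Group G] [IsFreeGroup G] :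
    Subgroup.closure (Set.range (IsFreeGroup.of (G := G))) = ⊤ := by
  have h : Set.range (IsFreeGroup.of (G := G)) =
      (IsFreeGroup.mulEquiv G).toMonoidHom '' Set.range FreeGroup.of := by
    rw [← Set.range_comp]
    rfl
  rw [h, ← MonoidHom.map_closure, FreeGroup.closure_range_of,
    Subgroup.map_top_of_surjective _ (IsFreeGroup.mulEquiv G).surjective]

variable {F M : Type*} [Group F] [AddCommGroup M]

local notation "ε" => MonoidAlgebra.of ℤ F

/-- A family of conditions `D t k = c t` on a crossed homomorphism `D : T → Hom(ℤ[F], M)`, one for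
each pair `(k, c)` in the relation `C`, such that each condition at a product `s * t` follows from
conditions of the family at `s` and at `t`. -/
structure IsTranslationStable (T : Subgroup F) (C : MonoidAlgebra ℤ F → (F → M) → Prop) :
    Prop where
  map_one : ∀ {k c}, C k c → c 1 = 0
  translate : ∀ {k c}, C k c → ∀ s ∈ T, ∃ c', C (k * ε s) c' ∧ ∀ t ∈ T, c (s * t) = c s + c' t

variable (F M) in
/-- Right translation on the functionals on the group ring: `(s • D) x = D (x * s)`. -/
noncomputable def rightTranslation : Representation ℤ F (MonoidAlgebra ℤ F →ₗ[ℤ] M) where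
  toFun s := LinearMap.lcomp ℤ M (LinearMap.mulRight ℤ (ε s))
  map_one' := by ext; simp
  map_mul' s t := by ext; simp [mul_assoc]

theorem IsTranslationStable.exists_crossedHom {T : Subgroup F} [IsFreeGroup T]
    {C : MonoidAlgebra ℤ F → (F → M) → Prop} (hC : IsTranslationStable T C)
    (hloc : ∀ t ∈ T, ∃ g : MonoidAlgebra ℤ F →ₗ[ℤ] M, ∀ k c, C k c → g k = c t) :
    ∃ D : T → MonoidAlgebra ℤ F →ₗ[ℤ] M, (∀ s t x, D (s * t) x = D s x + D t (x * ε (s : F))) ∧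
      ∀ t k c, C k c → D t k = c t := by
  choose g hg using fun t : T => hloc t t.2
  obtain ⟨D, D_mul, D_of⟩ := FourFold.exists_crossedHom ((rightTranslation F M).comp T.subtype)
    fun i => g (IsFreeGroup.of i)
  have D_mul' (s t : T) (x) : D (s * t) x = D s x + D t (x * ε (s : F)) := by
    rw [D_mul]
    rfl
  have D_one (x) : D 1 x = 0 := by simpa [← MonoidAlgebra.one_def] using D_mul' 1 1 x
  refine ⟨D, D_mul', fun t => ?_⟩
  have ht : t ∈ Subgroup.closure (Set.range (IsFreeGroup.of (G := T))) :=
    closure_range_isFreeGroup_of T ▸ Subgroup.mem_top t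
  induction ht using Subgroup.closure_induction with
  | mem t ht =>
    obtain ⟨i, rfl⟩ := ht
    exact fun k c hc => by rw [D_of, hg _ k c hc]
  | one => exact fun k c hc => by rw [D_one, Subgroup.coe_one, hC.map_one hc]
  | mul s t _ _ ihs iht =>
    intro k c hc
    obtain ⟨c', hc', h⟩ := hC.translate hc s s.2
    rw [D_mul', ihs k c hc, iht _ c' hc', Subgroup.coe_mul, h t t.2]
  | inv s _ ihs =>
    intro k c hc
    obtain ⟨c', hc', h⟩ := hC.translate hc s⁻¹ (T.inv_mem s.2)
    have h1 := D_mul' s⁻¹ s k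
    have h2 := h s s.2
    rw [inv_mul_cancel, D_one, Subgroup.coe_inv, ihs _ c' hc'] at h1
    rw [inv_mul_cancel, hC.map_one hc] at h2
    rw [Subgroup.coe_inv]
    exact add_right_cancel (h1.symm.trans h2)

/-- Every crossed homomorphism into the functionals is of the form `D t x = Ψ (x * (t - 1))`: the
representation of `T` on functionals is coinduced. -/
theorem exists_functional_of_crossedHom {T : Subgroup F} (D : T → MonoidAlgebra ℤ F →ₗ[ℤ] M)
    (hD : ∀ s t x, D (s * t) x = D s x + D t (x * ε (s : F))) :
    ∃ Ψ : MonoidAlgebra ℤ F →ₗ[ℤ] M, ∀ t : T, ∀ x, Ψ (x * (ε (t : F) - 1)) = D t x := by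
  let tail (f : F) : T := ⟨(cosetRep T f)⁻¹ * f, cosetRep_inv_mul_mem T f⟩
  have tail_mul (f : F) (t : T) : tail (f * t) = tail f * t :=
    Subtype.ext (by simp [tail, cosetRep_mul_of_mem, mul_assoc])
  refine ⟨linearExtension fun f => D (tail f) (ε (cosetRep T f)), fun t x => ?_⟩
  suffices h : linearExtension (fun f => D (tail f) (ε (cosetRep T f))) ∘ₗ
      LinearMap.mulRight ℤ (ε (t : F) - 1) = D t from LinearMap.congr_fun h x
  refine linearMap_ext_of fun f => ?_
  rw [LinearMap.comp_apply, LinearMap.mulRight_apply, mul_sub, mul_one, ← map_mul, map_sub,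
    linearExtension_of, linearExtension_of, cosetRep_mul_of_mem f t.2, tail_mul, hD, ← map_mul]
  simp [tail]

theorem IsTranslationStable.exists_functional {T : Subgroup F} [IsFreeGroup T]
    {C : MonoidAlgebra ℤ F → (F → M) → Prop} (hC : IsTranslationStable T C)
    (hloc : ∀ t ∈ T, ∃ g : MonoidAlgebra ℤ F →ₗ[ℤ] M, ∀ k c, C k c → g k = c t) :
    ∃ Ψ : MonoidAlgebra ℤ F →ₗ[ℤ] M, ∀ t ∈ T, ∀ k c, C k c → Ψ (k * (ε t - 1)) = c t := by
  obtain ⟨D, D_mul, hDC⟩ := hC.exists_crossedHom hloc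
  obtain ⟨Ψ, hΨ⟩ := exists_functional_of_crossedHom D D_mul
  exact ⟨Ψ, fun t ht k c hc => (hΨ ⟨t, ht⟩ k).trans (hDC ⟨t, ht⟩ k c hc)⟩

end CrossedHom

section FreeSubmodule

variable {R : Type*} [CommRing R] {ι : Type*} [LinearOrder ι]

theorem exists_leading_coeff {x : ι →₀ R} (hx : x ≠ 0) :
    ∃ i, x i ≠ 0 ∧ x ∈ Finsupp.supported R R (Set.Iic i) := by
  have hs : x.support.Nonempty := Finsupp.support_nonempty_iff.2 hx
  exact ⟨x.support.max' hs, Finsupp.mem_support_iff.1 (x.support.max'_mem hs),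
    (Finsupp.mem_supported R x).2 fun i hi => x.support.le_max' i hi⟩

theorem apply_eq_zero_of_mem_supported_Iic {x : ι →₀ R} {i j : ι}
    (hx : x ∈ Finsupp.supported R R (Set.Iic i)) (hij : i < j) : x j = 0 :=
  (Finsupp.mem_supported' R x).1 hx j hij.not_ge

theorem linearIndependent_of_leading_coeff [IsDomain R] {s : Set ι} (v : s → ι →₀ R)
    (hv : ∀ i, v i i ≠ 0) (hvs : ∀ i : s, v i ∈ Finsupp.supported R R (Set.Iic (i : ι))) :
    LinearIndependent R v := by
  rw [linearIndependent_iff]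
  intro c hc
  by_contra hne
  obtain ⟨j, hj, hcj⟩ := exists_leading_coeff hne
  have hcoeff := DFunLike.congr_fun hc (j : ι)
  rw [Finsupp.linearCombination_apply, Finsupp.sum, Finsupp.finsetSum_apply,
    Finset.sum_eq_single j] at hcoeff
  · exact mul_ne_zero hj (hv j) hcoeff
  · intro i hi hij
    have hlt : i < j := lt_of_le_of_ne ((Finsupp.mem_supported R c).1 hcj hi) hij
    simp [apply_eq_zero_of_mem_supported_Iic (hvs i) hlt]
  · simp [hj]

theorem exists_mem_dvd_leading_coeff [IsPrincipalIdealRing R] (N : Submodule R (ι →₀ R)) (i : ι) :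
    ∃ y ∈ N ⊓ Finsupp.supported R R (Set.Iic i),
      ∀ x ∈ N ⊓ Finsupp.supported R R (Set.Iic i), y i ∣ x i := by
  let I : Ideal R := (N ⊓ Finsupp.supported R R (Set.Iic i)).map (Finsupp.lapply i)
  obtain ⟨y, hy, hyI⟩ : Submodule.IsPrincipal.generator I ∈ I :=
    Submodule.IsPrincipal.generator_mem I
  refine ⟨y, hy, fun x hx => ?_⟩
  rw [← Finsupp.lapply_apply (R := R), hyI, ← Submodule.IsPrincipal.mem_iff_generator_dvd]
  exact ⟨x, hx, rfl⟩

theorem mem_span_of_dvd_leading_coeff [WellFoundedLT ι] {N : Submodule R (ι →₀ R)}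
    {y : ι → ι →₀ R} (hyN : ∀ i, y i ∈ N ⊓ Finsupp.supported R R (Set.Iic i))
    (hdvd : ∀ i, ∀ x ∈ N ⊓ Finsupp.supported R R (Set.Iic i), y i i ∣ x i) {x : ι →₀ R}
    (hx : x ∈ N) : x ∈ Submodule.span R (Set.range fun i : {i | y i i ≠ 0} => y i) := by
  set Y := Submodule.span R (Set.range fun i : {i | y i i ≠ 0} => y i)
  suffices h : ∀ i, ∀ x ∈ N ⊓ Finsupp.supported R R (Set.Iic i), x ∈ Y by
    rcases eq_or_ne x 0 with rfl | h0
    · exact Y.zero_mem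
    · obtain ⟨i, -, hi⟩ := exists_leading_coeff h0
      exact h i x ⟨hx, hi⟩
  intro i
  induction i using WellFoundedLT.induction with
  | ind i ih =>
    have below (z) (hz : z ∈ N ⊓ Finsupp.supported R R (Set.Iic i)) (hzi : z i = 0) : z ∈ Y := by
      rcases eq_or_ne z 0 with rfl | h0
      · exact Y.zero_mem
      · obtain ⟨j, hj, hzj⟩ := exists_leading_coeff h0
        have hji : j ≤ i := not_lt.1 fun h => hj (apply_eq_zero_of_mem_supported_Iic hz.2 h)
        exact ih j (hji.lt_of_ne fun h => hj (h ▸ hzi)) z ⟨hz.1, hzj⟩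
    intro x hx
    obtain ⟨c, hc⟩ := hdvd i x hx
    by_cases hxi : x i = 0
    · exact below x hx hxi
    · have hyY : y i ∈ Y := Submodule.subset_span ⟨⟨i, fun h => hxi (by rw [hc, h, zero_mul])⟩, rfl⟩
      have hsub : x - c • y i ∈ Y :=
        below _ (Submodule.sub_mem _ hx (Submodule.smul_mem _ c (hyN i))) (by simp [hc, mul_comm])
      simpa using Y.add_mem hsub (Y.smul_mem c hyY)

theorem free_submodule_finsupp [WellFoundedLT ι] [IsDomain R] [IsPrincipalIdealRing R]
    (N : Submodule R (ι →₀ R)) :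
    Module.Free R N := by
  choose y hyN hdvd using exists_mem_dvd_leading_coeff N
  let v (i : {i | y i i ≠ 0}) : ι →₀ R := y i
  have hli : LinearIndependent R v :=
    linearIndependent_of_leading_coeff v (fun i => i.2) fun i => (hyN i).2
  have hspan : Submodule.span R (Set.range v) = N :=
    le_antisymm (Submodule.span_le.2 (by rintro _ ⟨i, rfl⟩; exact (hyN i).1))
      fun x hx => mem_span_of_dvd_leading_coeff hyN hdvd hx
  exact hspan ▸ Module.Free.of_basis (Module.Basis.span hli)

theorem free_submodule {V : Type*} [AddCommGroup V] [IsDomain R] [IsPrincipalIdealRing R]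
    [Module R V] [Module.Free R V] (N : Submodule R V) : Module.Free R N := by
  let b := Module.Free.chooseBasis R V
  let _ : LinearOrder (Module.Free.ChooseBasisIndex R V) := WellOrderingRel.isWellOrder.linearOrder
  have : WellFoundedLT (Module.Free.ChooseBasisIndex R V) :=
    WellOrderingRel.isWellOrder.toIsWellFounded
  have := free_submodule_finsupp (N.map b.repr.toLinearMap)
  exact Module.Free.of_equiv (b.repr.submoduleMap N).symm

end FreeSubmodule

theorem free_abelianization (G : Type*) [Group G] [IsFreeGroup G] :
    Module.Free ℤ (Additive (Abelianization G)) :=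
  Module.Free.of_equiv ((IsFreeGroup.toFreeGroup G).abelianizationCongr.toAdditive.trans
    (FreeAbelianGroup.equivFinsupp _)).symm.toIntLinearEquiv

section BilinearAlgebra

variable {V X Y Z M : Type*} [AddCommGroup V] [AddCommGroup X] [AddCommGroup Y]
  [AddCommGroup Z] [AddCommGroup M]

theorem exists_sub_flip_eq_of_isAlt [Module.Free ℤ V] {e : V →ₗ[ℤ] V →ₗ[ℤ] M} (he : e.IsAlt) :
    ∃ b : V →ₗ[ℤ] V →ₗ[ℤ] M, b - b.flip = e := by
  classical
  let B := Module.Free.chooseBasis ℤ V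
  let _ : LinearOrder (Module.Free.ChooseBasisIndex ℤ V) := linearOrderOfSTO WellOrderingRel
  refine ⟨B.constr ℤ fun i => B.constr ℤ fun j => if i < j then e (B i) (B j) else 0,
    LinearMap.ext_basis B B fun i j => ?_⟩
  simp only [LinearMap.sub_apply, LinearMap.flip_apply, Module.Basis.constr_basis]
  rcases lt_trichotomy i j with h | rfl | h
  · simp [h, h.not_gt]
  · simp [he.self_eq_zero]
  · simp [h, h.not_gt, he.neg]

theorem exists_add_flip_eq_of_symm [Module.Free ℤ V] (half : ∀ c : M, ∃ d, d + d = c)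
    {s : V →ₗ[ℤ] V →ₗ[ℤ] M} (hs : s.flip = s) : ∃ b : V →ₗ[ℤ] V →ₗ[ℤ] M, b + b.flip = s := by
  classical
  choose d hd using half
  let B := Module.Free.chooseBasis ℤ V
  let _ : LinearOrder (Module.Free.ChooseBasisIndex ℤ V) := linearOrderOfSTO WellOrderingRel
  refine ⟨B.constr ℤ fun i => B.constr ℤ fun j =>
    if i < j then s (B i) (B j) else if i = j then d (s (B i) (B j)) else 0,
    LinearMap.ext_basis B B fun i j => ?_⟩
  simp only [LinearMap.add_apply, LinearMap.flip_apply, Module.Basis.constr_basis]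
  rcases lt_trichotomy i j with h | rfl | h
  · simp [h, h.not_gt, h.ne']
  · simp [hd]
  · simpa [h, h.not_gt, h.ne'] using LinearMap.congr_fun₂ hs (B i) (B j)

local notation "ℚ/ℤ" => AddCircle (1 : ℚ)

theorem exists_add_self_eq (c : ℚ/ℤ) : ∃ d, d + d = c := by
  induction c using QuotientAddGroup.induction_on with
  | H q => exact ⟨((q / 2 : ℚ) : ℚ/ℤ), by rw [← AddCircle.coe_add, add_halves]⟩

theorem exists_comp_eq_of_ker_le {f : X →ₗ[ℤ] Y} {g : X →ₗ[ℤ] ℚ/ℤ}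
    (h : LinearMap.ker f ≤ LinearMap.ker g) : ∃ k : Y →ₗ[ℤ] ℚ/ℤ, k ∘ₗ f = g := by
  obtain ⟨k, hk⟩ := CharacterModule.dual_surjective_of_injective
    ((LinearMap.ker f).liftQ f le_rfl)
    (LinearMap.ker_eq_bot.1 (Submodule.ker_liftQ_eq_bot _ _ _ le_rfl))
    ((LinearMap.ker f).liftQ g h).toAddMonoidHom
  exact ⟨AddMonoidHom.toIntLinearMap k,
    LinearMap.ext fun x => DFunLike.congr_fun hk (Submodule.Quotient.mk x)⟩

theorem exists_compl₂_eq_of_injective [Module.Free ℤ Z] {ι : Y →ₗ[ℤ] V}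
    (hι : Function.Injective ι) (l : Z →ₗ[ℤ] Y →ₗ[ℤ] ℚ/ℤ) :
    ∃ L : Z →ₗ[ℤ] V →ₗ[ℤ] ℚ/ℤ, L.compl₂ ι = l := by
  have hsurj : Function.Surjective (LinearMap.lcomp ℤ (ℚ/ℤ) ι) := fun g =>
    exists_comp_eq_of_ker_le (by simp [LinearMap.ker_eq_bot.2 hι])
  obtain ⟨L, hL⟩ := Module.projective_lifting_property _ l hsurj
  exact ⟨L, hL⟩

/-- An arbitrary solution of `b - b.flip = e` is corrected by the symmetrization of a form on `V`
extending half of the discrepancy on `Y`. -/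
theorem exists_sub_flip_eq_compl₁₂_eq [Module.Free ℤ Y] [Module.Free ℤ V] {ι : Y →ₗ[ℤ] V}
    (hι : Function.Injective ι) {e : V →ₗ[ℤ] V →ₗ[ℤ] ℚ/ℤ} (he : e.IsAlt)
    {p : Y →ₗ[ℤ] Y →ₗ[ℤ] ℚ/ℤ} (hp : p - p.flip = e.compl₁₂ ι ι) :
    ∃ b : V →ₗ[ℤ] V →ₗ[ℤ] ℚ/ℤ, b - b.flip = e ∧ b.compl₁₂ ι ι = p := by
  obtain ⟨b, rfl⟩ := exists_sub_flip_eq_of_isAlt he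
  have hsymm : (p - b.compl₁₂ ι ι).flip = p - b.compl₁₂ ι ι := by
    ext x y
    have := LinearMap.congr_fun₂ hp x y
    simp only [LinearMap.sub_apply, LinearMap.flip_apply, LinearMap.compl₁₂_apply] at this ⊢
    rw [sub_eq_sub_iff_sub_eq_sub, ← neg_sub, this, neg_sub]
  obtain ⟨l, hl⟩ := exists_add_flip_eq_of_symm exists_add_self_eq hsymm
  obtain ⟨l₁, hl₁⟩ := exists_compl₂_eq_of_injective hι l
  obtain ⟨l₂, hl₂⟩ := exists_compl₂_eq_of_injective hι l₁.flip
  have hl₂ (x y : Y) : l₂ (ι x) (ι y) = l y x :=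
    (LinearMap.congr_fun₂ hl₂ (ι x) y).trans (LinearMap.congr_fun₂ hl₁ y x)
  refine ⟨b + l₂ + l₂.flip, LinearMap.ext₂ fun x y => ?_, LinearMap.ext₂ fun x y => ?_⟩
  · simp only [LinearMap.sub_apply, LinearMap.add_apply, LinearMap.flip_apply]
    abel
  · have h := LinearMap.congr_fun₂ hl x y
    simp only [LinearMap.add_apply, LinearMap.sub_apply, LinearMap.flip_apply,
      LinearMap.compl₁₂_apply, hl₂] at h ⊢
    rw [add_assoc, add_comm (l y x), h, add_sub_cancel]

/-- The form `z` splits along a section `σ` of `π`. -/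
theorem exists_comp_sub_flip_eq [Module.Free ℤ Y] {π : X →ₗ[ℤ] Y} (hπ : Function.Surjective π)
    {z : X →ₗ[ℤ] X →ₗ[ℤ] M} (hz : z.IsAlt)
    (hker : ∀ x y, π x = 0 → π y = 0 → z x y = 0) :
    ∃ l : Y →ₗ[ℤ] X →ₗ[ℤ] M, l.comp π - (l.comp π).flip = z := by
  obtain ⟨σ, hσ⟩ := Module.projective_lifting_property π LinearMap.id hπ
  replace hσ (y) : π (σ y) = y := LinearMap.congr_fun hσ y
  obtain ⟨l, hl⟩ := exists_sub_flip_eq_of_isAlt (e := z.compl₁₂ σ σ) fun y => hz (σ y)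
  refine ⟨z.comp σ - z.compl₁₂ σ (σ.comp π) + l.compl₂ π, LinearMap.ext₂ fun u v => ?_⟩
  have hlσ := LinearMap.congr_fun₂ hl (π u) (π v)
  have hz0 := hker (u - σ (π u)) (v - σ (π v)) (by simp [hσ]) (by simp [hσ])
  simp only [map_sub, LinearMap.sub_apply, LinearMap.add_apply, LinearMap.comp_apply,
    LinearMap.compl₂_apply, LinearMap.compl₁₂_apply, LinearMap.flip_apply] at hz0 hlσ ⊢
  rw [← hz.neg u (σ (π v)), ← hz.neg (σ (π u)) (σ (π v)), eq_add_of_sub_eq hlσ,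
    ← sub_eq_zero, ← neg_eq_zero, ← hz0]
  abel

end BilinearAlgebra

section AdditiveOn

open scoped commutatorElement

/-- The function `h` is additive on the subgroup `A`; its values off `A` are irrelevant. -/
def AdditiveOn {F M : Type*} [Group F] [AddCommGroup M] (A : Subgroup F) (h : F → M) : Prop :=
  ∀ x ∈ A, ∀ y ∈ A, h (x * y) = h x + h y

/-- The function `b` is additive on `A` in the first and on `B` in the second variable; its values
off `A × B` are irrelevant. -/
structure BiadditiveOn {F M : Type*} [Group F] [AddCommGroup M] (A B : Subgroup F)
    (b : F → F → M) : Prop where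
  left : ∀ y ∈ B, AdditiveOn A fun x => b x y
  right : ∀ x ∈ A, AdditiveOn B (b x)

namespace AdditiveOn

variable {F M N : Type*} [Group F] [AddCommGroup M] [AddCommGroup N] {A B C : Subgroup F}
  {h h' : F → M} {x y : F}

protected theorem map_mul (H : AdditiveOn A h) (hx : x ∈ A) (hy : y ∈ A) : h (x * y) = h x + h y :=
  H x hx y hy

theorem mono (H : AdditiveOn B h) (hAB : A ≤ B) : AdditiveOn A h :=
  fun x hx y hy => H x (hAB hx) y (hAB hy)

theorem zero : AdditiveOn A fun _ => (0 : M) := fun _ _ _ _ => (add_zero 0).symm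

theorem add (H : AdditiveOn A h) (H' : AdditiveOn A h') : AdditiveOn A fun x => h x + h' x :=
  fun x hx y hy => by simp only [H x hx y hy, H' x hx y hy, add_add_add_comm]

theorem map (H : AdditiveOn A h) (g : M →ₗ[ℤ] N) : AdditiveOn A fun x => g (h x) :=
  fun x hx y hy => by simp only [H x hx y hy, map_add]

theorem smul (H : AdditiveOn A h) (n : ℤ) : AdditiveOn A fun x => n • h x :=
  H.map (n • LinearMap.id)

theorem sub (H : AdditiveOn A h) (H' : AdditiveOn A h') : AdditiveOn A fun x => h x - h' x := by
  simpa only [sub_eq_add_neg, neg_one_smul] using H.add (H'.smul (-1))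

theorem comp_hom (H : AdditiveOn A h) (ρ : F →* F) (hρ : ∀ x ∈ B, ρ x ∈ A) :
    AdditiveOn B fun x => h (ρ x) :=
  fun x hx y hy => by simp only [map_mul, H _ (hρ x hx) _ (hρ y hy)]

theorem map_one (H : AdditiveOn A h) : h 1 = 0 := by
  simpa using H 1 A.one_mem 1 A.one_mem

theorem map_inv (H : AdditiveOn A h) (hx : x ∈ A) : h x⁻¹ = -h x := by
  rw [eq_neg_iff_add_eq_zero, ← H _ (A.inv_mem hx) _ hx, inv_mul_cancel, H.map_one]

theorem map_conj (H : AdditiveOn A h) (hx : x ∈ A) (hy : y ∈ A) : h (y * x * y⁻¹) = h x := by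
  rw [H _ (A.mul_mem hy hx) _ (A.inv_mem hy), H _ hy _ hx, H.map_inv hy]
  abel

theorem map_commutatorElement (H : AdditiveOn A h) (hx : x ∈ A) (hy : y ∈ A) : h ⁅x, y⁆ = 0 := by
  rw [commutatorElement_def, H _ (A.mul_mem (A.mul_mem hx hy) (A.inv_mem hx)) _ (A.inv_mem hy),
    H.map_conj hy hx, H.map_inv hy, add_neg_cancel]

theorem map_pow (H : AdditiveOn A h) (hx : x ∈ A) (n : ℕ) : h (x ^ n) = n • h x := by
  induction n with
  | zero => simp [H.map_one]
  | succ n ih => rw [pow_succ, H _ (A.pow_mem hx n) _ hx, ih, succ_nsmul]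

theorem eqOn_closure (H : AdditiveOn A h) (H' : AdditiveOn A h') {s : Set F} (hsA : s ⊆ A)
    (hs : ∀ x ∈ s, h x = h' x) (hx : x ∈ Subgroup.closure s) : h x = h' x := by
  have hA {y} (hy : y ∈ Subgroup.closure s) : y ∈ A := (Subgroup.closure_le A).2 hsA hy
  induction hx using Subgroup.closure_induction with
  | mem y hy => exact hs y hy
  | one => rw [H.map_one, H'.map_one]
  | mul y z hy hz ihy ihz => rw [H _ (hA hy) _ (hA hz), H' _ (hA hy) _ (hA hz), ihy, ihz]
  | inv y hy ih => rw [H.map_inv (hA hy), H'.map_inv (hA hy), ih]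

theorem eqOn_commutator (H : AdditiveOn A h) (H' : AdditiveOn A h') (hA : ⁅B, C⁆ ≤ A)
    (hs : ∀ x ∈ B, ∀ y ∈ C, h ⁅x, y⁆ = h' ⁅x, y⁆) (hx : x ∈ ⁅B, C⁆) : h x = h' x := by
  rw [Subgroup.commutator_def] at hA hx
  refine H.eqOn_closure H' ((Subgroup.closure_le A).1 hA) ?_ hx
  rintro _ ⟨p, hp, q, hq, rfl⟩
  exact hs p hp q hq

theorem eq_zero_of_mem_commutator (H : AdditiveOn A h) (hx : x ∈ ⁅A, A⁆) : h x = 0 :=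
  H.eqOn_commutator zero (Subgroup.commutator_le_self A)
    (fun _ hx _ hy => H.map_commutatorElement hx hy) hx

theorem eq_of_map_eq {π : F → N} (H : AdditiveOn A h) (Hπ : AdditiveOn A π)
    (hker : ∀ x ∈ A, π x = 0 → h x = 0) (hx : x ∈ A) (hy : y ∈ A) (hxy : π x = π y) :
    h x = h y := by
  have hquot : h (x * y⁻¹) = 0 := by
    refine hker _ (A.mul_mem hx (A.inv_mem hy)) ?_
    rw [Hπ _ hx _ (A.inv_mem hy), Hπ.map_inv hy, hxy, add_neg_cancel]
  rwa [H _ hx _ (A.inv_mem hy), H.map_inv hy, add_neg_eq_zero] at hquot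

theorem exists_linearMap {π : F → N} (H : AdditiveOn A h) (Hπ : AdditiveOn A π)
    (hsurj : ∀ v, ∃ x ∈ A, π x = v) (hker : ∀ x ∈ A, π x = 0 → h x = 0) :
    ∃ g : N →ₗ[ℤ] M, ∀ x ∈ A, g (π x) = h x := by
  choose s hsA hs using hsurj
  refine ⟨(AddMonoidHom.mk' (fun v => h (s v)) fun v w => ?_).toIntLinearMap, fun x hx =>
    H.eq_of_map_eq Hπ hker (hsA _) hx (hs _)⟩
  rw [← H _ (hsA v) _ (hsA w)]
  refine H.eq_of_map_eq Hπ hker (hsA _) (A.mul_mem (hsA v) (hsA w)) ?_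
  rw [hs, Hπ _ (hsA v) _ (hsA w), hs, hs]

end AdditiveOn

namespace BiadditiveOn

variable {F M X Y : Type*} [Group F] [AddCommGroup M] [AddCommGroup X] [AddCommGroup Y]
  {A B : Subgroup F} {b : F → F → M}

theorem exists_linearMap₂ (H : BiadditiveOn A B b) {π : F → X} {τ : F → Y}
    (Hπ : AdditiveOn A π) (hπ : ∀ v, ∃ x ∈ A, π x = v) (Hτ : AdditiveOn B τ)
    (hτ : ∀ v, ∃ y ∈ B, τ y = v) (hkerπ : ∀ x ∈ A, ∀ y ∈ B, π x = 0 → b x y = 0)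
    (hkerτ : ∀ x ∈ A, ∀ y ∈ B, τ y = 0 → b x y = 0) :
    ∃ β : X →ₗ[ℤ] Y →ₗ[ℤ] M, ∀ x ∈ A, ∀ y ∈ B, β (π x) (τ y) = b x y := by
  choose! β₁ hβ₁ using fun x hx => (H.right x hx).exists_linearMap Hτ hτ (hkerτ x hx)
  have ext_on {g g' : Y →ₗ[ℤ] M} (h : ∀ y ∈ B, g (τ y) = g' (τ y)) : g = g' :=
    LinearMap.ext fun v => by
      obtain ⟨y, hy, rfl⟩ := hτ v
      exact h y hy
  have Hβ₁ : AdditiveOn A β₁ := fun x hx x' hx' => ext_on fun y hy => by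
    rw [LinearMap.add_apply, hβ₁ _ (A.mul_mem hx hx') y hy, hβ₁ x hx y hy, hβ₁ x' hx' y hy]
    exact H.left y hy x hx x' hx'
  obtain ⟨β, hβ⟩ := Hβ₁.exists_linearMap Hπ hπ fun x hx h0 => ext_on fun y hy => by
    rw [hβ₁ x hx y hy, hkerπ x hx y hy h0, LinearMap.zero_apply]
  exact ⟨β, fun x hx y hy => by rw [hβ x hx, hβ₁ x hx y hy]⟩

theorem of_linearMap₂ {π : F → X} {τ : F → Y} (Hπ : AdditiveOn A π) (Hτ : AdditiveOn B τ)
    (β : X →ₗ[ℤ] Y →ₗ[ℤ] M) : BiadditiveOn A B fun x y => β (π x) (τ y) :=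
  ⟨fun y _ => Hπ.map (β.flip (τ y)), fun x _ => Hτ.map (β (π x))⟩

end BiadditiveOn

section Abelianization

variable {F M : Type*} [Group F] [AddCommGroup M]

open Classical in
/-- The class in the abelianization of `A` of an element of `A`, and `0` off `A`. -/
noncomputable def abelianClass (A : Subgroup F) (x : F) : Additive (Abelianization A) :=
  if hx : x ∈ A then Additive.ofMul (Abelianization.of ⟨x, hx⟩) else 0

variable {A B S : Subgroup F} {x : F}

theorem abelianClass_of_mem (hx : x ∈ A) :
    abelianClass A x = Additive.ofMul (Abelianization.of ⟨x, hx⟩) :=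
  dif_pos hx

theorem additiveOn_abelianClass (A : Subgroup F) : AdditiveOn A (abelianClass A) :=
  fun x hx y hy => by
    rw [abelianClass_of_mem hx, abelianClass_of_mem hy, abelianClass_of_mem (A.mul_mem hx hy),
      ← ofMul_mul, ← map_mul]
    rfl

theorem exists_mem_abelianClass_eq (A : Subgroup F) (v : Additive (Abelianization A)) :
    ∃ x ∈ A, abelianClass A x = v := by
  obtain ⟨x, hx⟩ := QuotientGroup.mk_surjective (s := commutator A) v.toMul
  exact ⟨x, x.2, (abelianClass_of_mem x.2).trans (congrArg Additive.ofMul hx)⟩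

theorem abelianClass_eq_zero_iff (hx : x ∈ A) : abelianClass A x = 0 ↔ x ∈ ⁅A, A⁆ := by
  rw [abelianClass_of_mem hx, ofMul_eq_zero, ← MonoidHom.mem_ker, Abelianization.ker_of,
    ← Subgroup.map_subtype_commutator]
  simp [hx]

theorem AdditiveOn.exists_linearMap_abelianization {h : F → M} (H : AdditiveOn A h) :
    ∃ g : Additive (Abelianization A) →ₗ[ℤ] M, ∀ x ∈ A, g (abelianClass A x) = h x :=
  H.exists_linearMap (additiveOn_abelianClass A) (exists_mem_abelianClass_eq A) fun _ hx h0 =>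
    H.eq_zero_of_mem_commutator ((abelianClass_eq_zero_iff hx).1 h0)

theorem BiadditiveOn.exists_linearMap₂_abelianization {b : F → F → M} (H : BiadditiveOn A B b) :
    ∃ β : Additive (Abelianization A) →ₗ[ℤ] Additive (Abelianization B) →ₗ[ℤ] M,
      ∀ x ∈ A, ∀ y ∈ B, β (abelianClass A x) (abelianClass B y) = b x y :=
  H.exists_linearMap₂ (additiveOn_abelianClass A) (exists_mem_abelianClass_eq A)
    (additiveOn_abelianClass B) (exists_mem_abelianClass_eq B)
    (fun _ hx y hy h0 =>
      (H.left y hy).eq_zero_of_mem_commutator ((abelianClass_eq_zero_iff hx).1 h0))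
    (fun x hx _ hy h0 =>
      (H.right x hx).eq_zero_of_mem_commutator ((abelianClass_eq_zero_iff hy).1 h0))

theorem exists_free_image [IsFreeGroup S] (hAS : A ≤ S) :
    ∃ (Y : Submodule ℤ (Additive (Abelianization S))) (π : Additive (Abelianization A) →ₗ[ℤ] Y),
      Module.Free ℤ Y ∧ Function.Surjective π ∧
      ∀ x ∈ A, (π (abelianClass A x) : Additive (Abelianization S)) = abelianClass S x := by
  have := free_abelianization S
  obtain ⟨f, hf⟩ := ((additiveOn_abelianClass S).mono hAS).exists_linearMap_abelianization
  exact ⟨LinearMap.range f, f.rangeRestrict, free_submodule _, f.surjective_rangeRestrict, hf⟩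

end Abelianization

section Characters

variable {F : Type*} [Group F] {A B S : Subgroup F} {x : F}

local notation "ℚ/ℤ" => AddCircle (1 : ℚ)

theorem exists_additive_quotient {N : Subgroup F} (hNB : N ≤ B) (hBN : ⁅B, B⁆ ≤ N) :
    ∃ (L : Submodule ℤ (Additive (Abelianization B))),
      ∀ x ∈ B, L.mkQ (abelianClass B x) = 0 ↔ x ∈ N := by
  obtain ⟨f, hf⟩ := ((additiveOn_abelianClass B).mono hNB).exists_linearMap_abelianization
  refine ⟨LinearMap.range f, fun x hx => ?_⟩
  rw [Submodule.mkQ_apply, Submodule.Quotient.mk_eq_zero]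
  refine ⟨fun ⟨v, hv⟩ => ?_, fun hxN => ⟨_, hf x hxN⟩⟩
  obtain ⟨y, hy, rfl⟩ := exists_mem_abelianClass_eq N v
  rw [hf y hy] at hv
  have hyx : y⁻¹ * x ∈ ⁅B, B⁆ := by
    rw [← abelianClass_eq_zero_iff (B.mul_mem (B.inv_mem (hNB hy)) hx),
      additiveOn_abelianClass B _ (B.inv_mem (hNB hy)) _ hx,
      (additiveOn_abelianClass B).map_inv (hNB hy), hv, neg_add_cancel]
  exact (Subgroup.mul_mem_cancel_left N (N.inv_mem hy)).1 (hBN hyx)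

theorem AdditiveOn.exists_extension {N : Subgroup F} {h : F → ℚ/ℤ} (H : AdditiveOn A h)
    (hAB : A ≤ B) (hNB : N ≤ B) (hBN : ⁅B, B⁆ ≤ N) (h0 : ∀ x ∈ A, x ∈ N → h x = 0) :
    ∃ h' : F → ℚ/ℤ, AdditiveOn B h' ∧ (∀ x ∈ A, h' x = h x) ∧ ∀ x ∈ N, h' x = 0 := by
  obtain ⟨L, hL⟩ := exists_additive_quotient hNB hBN
  have HL : AdditiveOn B fun x => L.mkQ (abelianClass B x) := (additiveOn_abelianClass B).map L.mkQ
  obtain ⟨q, hq⟩ := (HL.mono hAB).exists_linearMap_abelianization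
  obtain ⟨g, hg⟩ := H.exists_linearMap_abelianization
  obtain ⟨k, hk⟩ := exists_comp_eq_of_ker_le (f := q) (g := g) fun v hv => by
    obtain ⟨x, hx, rfl⟩ := exists_mem_abelianClass_eq A v
    rw [LinearMap.mem_ker, hq x hx] at hv
    rw [LinearMap.mem_ker, hg x hx, h0 x hx ((hL x (hAB hx)).1 hv)]
  refine ⟨fun x => k (L.mkQ (abelianClass B x)), HL.map k, fun x hx => ?_, fun x hx => ?_⟩
  · beta_reduce
    rw [← hq x hx, ← LinearMap.comp_apply, hk, hg x hx]
  · beta_reduce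
    rw [(hL x (hNB hx)).2 hx, map_zero]

theorem mem_of_forall_additiveOn_eq_zero {N : Subgroup F} (hNB : N ≤ B) (hBN : ⁅B, B⁆ ≤ N)
    (hx : x ∈ B)
    (h : ∀ h : F → ℚ/ℤ, AdditiveOn B h → (∀ y ∈ N, h y = 0) → h x = 0) : x ∈ N := by
  obtain ⟨L, hL⟩ := exists_additive_quotient hNB hBN
  rw [← hL x hx]
  refine CharacterModule.eq_zero_of_character_apply fun c => ?_
  refine h (fun x => c (L.mkQ (abelianClass B x)))
    (((additiveOn_abelianClass B).map L.mkQ).map (AddMonoidHom.toIntLinearMap c)) fun y hy => ?_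
  rw [(hL y (hNB hy)).2 hy, map_zero]

end Characters

section BiadditiveExtension

variable {F : Type*} [Group F] {A S : Subgroup F}

local notation "ℚ/ℤ" => AddCircle (1 : ℚ)

theorem exists_biadditiveOn_extension [IsFreeGroup S] (hAS : A ≤ S) {e p : F → F → ℚ/ℤ}
    (he : BiadditiveOn S S e) (he_self : ∀ s ∈ S, e s s = 0) (hp : BiadditiveOn A A p)
    (hp_left : ∀ x ∈ A, ∀ y ∈ A, x ∈ ⁅S, S⁆ → p x y = 0)
    (hp_right : ∀ x ∈ A, ∀ y ∈ A, y ∈ ⁅S, S⁆ → p x y = 0)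
    (hpe : ∀ x ∈ A, ∀ y ∈ A, p x y - p y x = e x y) :
    ∃ b : F → F → ℚ/ℤ, BiadditiveOn S S b ∧ (∀ x ∈ S, ∀ y ∈ S, b x y - b y x = e x y) ∧
      ∀ x ∈ A, ∀ y ∈ A, b x y = p x y := by
  have := free_abelianization S
  obtain ⟨Y, π, hY, π_surj, π_coe⟩ := exists_free_image hAS
  have Hπ : AdditiveOn A fun x => π (abelianClass A x) := (additiveOn_abelianClass A).map π
  have hπ (v : Y) : ∃ x ∈ A, π (abelianClass A x) = v := by
    obtain ⟨v, rfl⟩ := π_surj v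
    obtain ⟨x, hx, rfl⟩ := exists_mem_abelianClass_eq A v
    exact ⟨x, hx, rfl⟩
  have mem_of_eq_zero (x) (hx : x ∈ A) (h0 : π (abelianClass A x) = 0) : x ∈ ⁅S, S⁆ := by
    rw [← abelianClass_eq_zero_iff (hAS hx), ← π_coe x hx, h0, Submodule.coe_zero]
  obtain ⟨e', he'⟩ := he.exists_linearMap₂_abelianization
  obtain ⟨p', hp'⟩ := hp.exists_linearMap₂ Hπ hπ Hπ hπ
    (fun x hx y hy h0 => hp_left x hx y hy (mem_of_eq_zero x hx h0))
    (fun x hx y hy h0 => hp_right x hx y hy (mem_of_eq_zero y hy h0))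
  have he'_alt : e'.IsAlt := fun v => by
    obtain ⟨s, hs, rfl⟩ := exists_mem_abelianClass_eq S v
    rw [he' s hs s hs, he_self s hs]
  have hp'e' : p' - p'.flip = e'.compl₁₂ Y.subtype Y.subtype := LinearMap.ext₂ fun v w => by
    obtain ⟨x, hx, rfl⟩ := hπ v
    obtain ⟨y, hy, rfl⟩ := hπ w
    simp only [LinearMap.sub_apply, LinearMap.flip_apply, LinearMap.compl₁₂_apply,
      Submodule.subtype_apply, hp' x hx y hy, hp' y hy x hx, π_coe x hx, π_coe y hy,
      he' x (hAS hx) y (hAS hy), hpe x hx y hy]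
  obtain ⟨b, hb, hbp⟩ := exists_sub_flip_eq_compl₁₂_eq Y.subtype_injective he'_alt hp'e'
  refine ⟨fun x y => b (abelianClass S x) (abelianClass S y),
    .of_linearMap₂ (additiveOn_abelianClass S) (additiveOn_abelianClass S) b,
    fun x hx y hy => ?_, fun x hx y hy => ?_⟩
  · rw [← he' x hx y hy, ← hb]
    rfl
  · rw [← hp' x hx y hy, ← hbp, LinearMap.compl₁₂_apply, Submodule.subtype_apply,
      Submodule.subtype_apply, π_coe x hx, π_coe y hy]

theorem exists_biadditiveOn_sub_swap_eq [IsFreeGroup S] (hAS : A ≤ S) {z : F → F → ℚ/ℤ}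
    (hz : BiadditiveOn A A z) (hz_self : ∀ u ∈ A, z u u = 0)
    (hz_zero : ∀ u ∈ A, ∀ v ∈ A, u ∈ ⁅S, S⁆ → v ∈ ⁅S, S⁆ → z u v = 0) :
    ∃ l : F → F → ℚ/ℤ, BiadditiveOn A A l ∧ (∀ u ∈ A, ∀ v ∈ A, u ∈ ⁅S, S⁆ → l u v = 0) ∧
      ∀ u ∈ A, ∀ v ∈ A, l u v - l v u = z u v := by
  obtain ⟨Y, π, hY, π_surj, π_coe⟩ := exists_free_image hAS
  have π_eq_zero_iff (x) (hx : x ∈ A) : π (abelianClass A x) = 0 ↔ x ∈ ⁅S, S⁆ := by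
    rw [← abelianClass_eq_zero_iff (hAS hx), ← π_coe x hx, Submodule.coe_eq_zero]
  obtain ⟨z', hz'⟩ := hz.exists_linearMap₂_abelianization
  have hz'_alt : z'.IsAlt := fun v => by
    obtain ⟨u, hu, rfl⟩ := exists_mem_abelianClass_eq A v
    rw [hz' u hu u hu, hz_self u hu]
  obtain ⟨l, hl⟩ := exists_comp_sub_flip_eq π_surj hz'_alt fun v w hv hw => by
    obtain ⟨x, hx, rfl⟩ := exists_mem_abelianClass_eq A v
    obtain ⟨y, hy, rfl⟩ := exists_mem_abelianClass_eq A w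
    rw [hz' x hx y hy]
    exact hz_zero x hx y hy ((π_eq_zero_iff x hx).1 hv) ((π_eq_zero_iff y hy).1 hw)
  refine ⟨fun x y => l (π (abelianClass A x)) (abelianClass A y),
    .of_linearMap₂ ((additiveOn_abelianClass A).map π) (additiveOn_abelianClass A) l,
    fun x hx y _ hxS => ?_, fun x hx y hy => ?_⟩
  · beta_reduce
    rw [(π_eq_zero_iff x hx).2 hxS, map_zero, LinearMap.zero_apply]
  · rw [← hz' x hx y hy, ← hl]
    rfl

end BiadditiveExtension

end AdditiveOn

section QuadraticOn

open scoped commutatorElement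

/-- The function `φ` is quadratic on the subgroup `A` with polar form `b`. -/
def QuadraticOn {F M : Type*} [Group F] [AddCommGroup M] (A : Subgroup F) (b : F → F → M)
    (φ : F → M) : Prop :=
  ∀ x ∈ A, ∀ y ∈ A, φ (x * y) = φ x + φ y + b x y

variable {F M : Type*} [Group F] [AddCommGroup M] {A : Subgroup F} {b : F → F → M} {φ : F → M}
  {x y z : F}

theorem AdditiveOn.quadraticOn (H : AdditiveOn A φ) : QuadraticOn A (fun _ _ => 0) φ :=
  fun x hx y hy => by rw [H x hx y hy, add_zero]

namespace BiadditiveOn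

theorem zero {B : Subgroup F} : BiadditiveOn A B fun _ _ => (0 : M) :=
  ⟨fun _ _ => AdditiveOn.zero, fun _ _ => AdditiveOn.zero⟩

theorem map_mul_left {B : Subgroup F} (hb : BiadditiveOn A B b) (hx : x ∈ A) (hy : y ∈ A)
    (hz : z ∈ B) : b (x * y) z = b x z + b y z :=
  hb.left z hz x hx y hy

theorem map_mul_right {B : Subgroup F} (hb : BiadditiveOn A B b) (hx : x ∈ A) (hy : y ∈ B)
    (hz : z ∈ B) : b x (y * z) = b x y + b x z :=
  hb.right x hx y hy z hz

end BiadditiveOn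

namespace QuadraticOn

theorem map_one (hφ : QuadraticOn A b φ) (hb : BiadditiveOn A A b) : φ 1 = 0 := by
  simpa [(hb.left 1 A.one_mem).map_one] using hφ 1 A.one_mem 1 A.one_mem

theorem additiveOn_commutator (hφ : QuadraticOn A b φ) (hb : BiadditiveOn A A b) :
    AdditiveOn ⁅A, A⁆ φ := fun x hx y hy => by
  have hA : ⁅A, A⁆ ≤ A := Subgroup.commutator_le_self A
  rw [hφ x (hA hx) y (hA hy), (hb.left y (hA hy)).eq_zero_of_mem_commutator hx, add_zero]

theorem map_commutatorElement (hφ : QuadraticOn A b φ) (hb : BiadditiveOn A A b) (hx : x ∈ A)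
    (hy : y ∈ A) : φ ⁅x, y⁆ = b x y - b y x := by
  have hxy : ⁅x, y⁆ ∈ ⁅A, A⁆ := Subgroup.commutator_mem_commutator hx hy
  have h := hφ ⁅x, y⁆ (Subgroup.commutator_le_self A hxy) (y * x) (A.mul_mem hy hx)
  rw [(hb.left _ (A.mul_mem hy hx)).eq_zero_of_mem_commutator hxy, hφ y hy x hx,
    show ⁅x, y⁆ * (y * x) = x * y by rw [commutatorElement_def]; group, hφ x hx y hy] at h
  rw [eq_sub_iff_add_eq, ← add_right_cancel_iff (a := φ x + φ y), add_comm (b x y), h]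
  abel

theorem eq_zero_of_mem_commutator_commutator (hφ : QuadraticOn A b φ) (hb : BiadditiveOn A A b)
    (hx : x ∈ ⁅⁅A, A⁆, A⁆) : φ x = 0 := by
  have hA : ⁅A, A⁆ ≤ A := Subgroup.commutator_le_self A
  refine (hφ.additiveOn_commutator hb).eqOn_commutator AdditiveOn.zero
    (Subgroup.commutator_mono hA le_rfl) (fun p hp q hq => ?_) hx
  rw [hφ.map_commutatorElement hb (hA hp) hq, (hb.left q hq).eq_zero_of_mem_commutator hp,
    (hb.right q hq).eq_zero_of_mem_commutator hp, sub_zero]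

theorem map_mul_mul (hφ : QuadraticOn A b φ) (hb : BiadditiveOn A A b) (hx : x ∈ A) (hy : y ∈ A)
    (hz : z ∈ A) : φ (x * y * z) = φ (x * z) + φ (y * z) - φ z + b x y := by
  rw [hφ _ (A.mul_mem hx hy) _ hz, hφ x hx y hy, hφ x hx z hz, hφ y hy z hz,
    hb.map_mul_left hx hy hz]
  abel

end QuadraticOn

theorem exists_quadraticOn [IsFreeGroup A] (hb : BiadditiveOn A A b) :
    ∃ φ : F → M, QuadraticOn A b φ := by
  let ε := MonoidAlgebra.of ℤ F
  let C (k : MonoidAlgebra ℤ F) (c : F → M) : Prop :=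
    ∃ x ∈ A, ∃ y ∈ A, k = (ε x - 1) * ε y ∧ c = b x
  have hC : IsTranslationStable A C :=
    { map_one := by
        rintro k c ⟨x, hx, y, -, rfl, rfl⟩
        exact (hb.right x hx).map_one
      translate := by
        rintro k c ⟨x, hx, y, hy, rfl, rfl⟩ s hs
        exact ⟨b x, ⟨x, hx, y * s, A.mul_mem hy hs, by rw [mul_assoc, map_mul], rfl⟩,
          hb.right x hx s hs⟩ }
  obtain ⟨Ψ, hΨ⟩ := hC.exists_functional fun z hz => ⟨linearExtension fun f => b f z, by
    rintro k c ⟨x, hx, y, hy, rfl, rfl⟩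
    rw [sub_mul, one_mul, ← map_mul, map_sub, linearExtension_of, linearExtension_of,
      hb.map_mul_left hx hy hz, add_sub_cancel_right]⟩
  refine ⟨fun x => Ψ (ε x - 1), fun x hx y hy => ?_⟩
  simp only [← hΨ y hy _ _ ⟨x, hx, 1, A.one_mem, rfl, rfl⟩, ← map_add]
  rw [map_mul, map_one]
  congr 1
  noncomm_ring

theorem exists_quadraticOn_eqOn_commutator [IsFreeGroup A] {e : F → M} (hb : BiadditiveOn A A b)
    (he : AdditiveOn ⁅A, A⁆ e) (hbe : ∀ x ∈ A, ∀ y ∈ A, b x y - b y x = e ⁅x, y⁆) :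
    ∃ φ : F → M, QuadraticOn A b φ ∧ ∀ x ∈ ⁅A, A⁆, φ x = e x := by
  obtain ⟨φ, hφ⟩ := exists_quadraticOn hb
  refine ⟨φ, hφ, fun x hx => ?_⟩
  exact (hφ.additiveOn_commutator hb).eqOn_commutator he le_rfl
    (fun p hp q hq => by rw [hφ.map_commutatorElement hb hp hq, hbe p hp q hq]) hx

end QuadraticOn

section CentralCharacter

open scoped commutatorElement

/-- The function `χ` is a character of `N` which is trivial on `⁅N, T⁆`. -/
structure IsCentralCharacter {F M : Type*} [Group F] [AddCommGroup M] (N T : Subgroup F)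
    (χ : F → M) : Prop where
  additiveOn : AdditiveOn N χ
  map_commutator : ∀ x ∈ ⁅N, T⁆, χ x = 0

/-- The function `τ` has the formal properties of `p, q, r ↦ χ ⁅⁅p, q⁆, r⁆` on the subgroup `A`, for
a character `χ` of the third term of the lower central series of `A`. -/
structure IsJacobiForm {F M : Type*} [Group F] [AddCommGroup M] (A : Subgroup F)
    (τ : F → F → F → M) : Prop where
  additiveOn_left : ∀ q ∈ A, ∀ r ∈ A, AdditiveOn A fun p => τ p q r
  additiveOn_right : ∀ p ∈ A, ∀ q ∈ A, AdditiveOn A (τ p q)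
  swap : ∀ p ∈ A, ∀ q ∈ A, ∀ r ∈ A, τ q p r = -τ p q r
  jacobi : ∀ p ∈ A, ∀ q ∈ A, ∀ r ∈ A, τ p q r + τ q r p + τ r p q = 0

variable {F M : Type*} [Group F] [AddCommGroup M] {A B N T V : Subgroup F} {χ : F → M}

namespace IsJacobiForm

variable {τ : F → F → F → M} {p q r : F}

theorem additiveOn_middle (h : IsJacobiForm A τ) (hp : p ∈ A) (hr : r ∈ A) :
    AdditiveOn A fun q => τ p q r := fun q hq q' hq' => by
  have hqq' : τ (q * q') p r = τ q p r + τ q' p r := h.additiveOn_left p hp r hr q hq q' hq'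
  simp only [h.swap _ (A.mul_mem hq hq') p hp r hr, hqq', neg_add, ← h.swap _ hq p hp r hr,
    ← h.swap _ hq' p hp r hr]

theorem rotate (h : IsJacobiForm A τ) (hp : p ∈ A) (hq : q ∈ A) (hr : r ∈ A) :
    τ r p q = -τ p q r - τ q r p := by
  rw [← neg_add', eq_neg_iff_add_eq_zero, add_comm, h.jacobi p hp q hq r hr]

theorem apply_right_eq_zero (h : IsJacobiForm A τ) (hr : r ∈ A) (h0 : ∀ p ∈ A, ∀ q ∈ A, τ r p q = 0)
    (hp : p ∈ A) (hq : q ∈ A) : τ p q r = 0 := by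
  have h_jacobi := h.jacobi p hp q hq r hr
  rwa [h.swap r hr q hq p hp, h0 q hq p hp, h0 p hp q hq, neg_zero, add_zero, add_zero] at h_jacobi

theorem biadditiveOn_left (h : IsJacobiForm A τ) (hr : r ∈ A) :
    BiadditiveOn A A fun p q => τ p q r :=
  ⟨fun q hq => h.additiveOn_left q hq r hr, fun _ hp => h.additiveOn_middle hp hr⟩

theorem biadditiveOn_right (h : IsJacobiForm A τ) (hp : p ∈ A) : BiadditiveOn A A (τ p) :=
  ⟨fun _ hr => h.additiveOn_middle hp hr, h.additiveOn_right p hp⟩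

end IsJacobiForm

namespace IsCentralCharacter

variable [N.Normal]

theorem map_conj (h : IsCentralCharacter N T χ) {n t : F} (hn : n ∈ N) (ht : t ∈ T) :
    χ (t * n * t⁻¹) = χ n := by
  have htn : ⁅t, n⁆ ∈ ⁅N, T⁆ := by
    rw [Subgroup.commutator_comm]
    exact Subgroup.commutator_mem_commutator ht hn
  rw [← MulAut.conj_apply, conj_eq_commutatorElement_mul,
    h.additiveOn _ (Subgroup.commutator_le_left _ _ htn) _ hn, h.map_commutator _ htn, zero_add]

theorem biadditiveOn (h : IsCentralCharacter N T χ) (hA : A ≤ T) (hB : B ≤ T) (hAB : ⁅A, B⁆ ≤ N) :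
    BiadditiveOn A B fun x y => χ ⁅x, y⁆ := by
  have mem {x y : F} (hx : x ∈ A) (hy : y ∈ B) : ⁅x, y⁆ ∈ N :=
    hAB (Subgroup.commutator_mem_commutator hx hy)
  have conj_mem {x y : F} (t : F) (hx : x ∈ A) (hy : y ∈ B) : t * ⁅x, y⁆ * t⁻¹ ∈ N :=
    ‹N.Normal›.conj_mem _ (mem hx hy) t
  refine ⟨fun z hz x hx y hy => ?_, fun x hx y hy z hz => ?_⟩
  · simp only [commutatorElement_mul_left_eq_conj_mul]
    rw [h.additiveOn _ (conj_mem x hy hz) _ (mem hx hz), h.map_conj (mem hy hz) (hA hx), add_comm]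
  · simp only [commutatorElement_mul_right_eq_mul_conj, mul_assoc ⁅x, y⁆]
    rw [h.additiveOn _ (mem hx hy) _ (conj_mem y hx hz), h.map_conj (mem hx hz) (hB hy)]

variable [V.Normal]

theorem map_commutatorElement_conj_left (h : IsCentralCharacter N T χ) (hA : A ≤ T) (hV : V ≤ T)
    (hVA : ⁅V, A⁆ ≤ N) {x y a : F} (hx : x ∈ V) (hy : y ∈ A) (ha : a ∈ A) :
    χ ⁅a * x * a⁻¹, y⁆ = χ ⁅x, y⁆ := by
  have hax : ⁅a, x⁆ ∈ ⁅V, A⁆ := by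
    rw [Subgroup.commutator_comm]
    exact Subgroup.commutator_mem_commutator ha hx
  rw [← MulAut.conj_apply, conj_eq_commutatorElement_mul,
    (h.biadditiveOn hV hA hVA).map_mul_left (Subgroup.commutator_le_left V A hax) hx hy,
    h.map_commutator _ (Subgroup.commutator_mem_commutator (hVA hax) (hA hy)), zero_add]

theorem isJacobiForm (h : IsCentralCharacter N T χ) (hA : A ≤ T) (hV : V ≤ T) (hAV : ⁅A, A⁆ ≤ V)
    (hVA : ⁅V, A⁆ ≤ N) : IsJacobiForm A fun p q r => χ ⁅⁅p, q⁆, r⁆ := by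
  have hb : BiadditiveOn V A fun x y => χ ⁅x, y⁆ := h.biadditiveOn hV hA hVA
  have mem {p q : F} (hp : p ∈ A) (hq : q ∈ A) : ⁅p, q⁆ ∈ V :=
    hAV (Subgroup.commutator_mem_commutator hp hq)
  have swap {p q r : F} (hp : p ∈ A) (hq : q ∈ A) (hr : r ∈ A) :
      χ ⁅⁅q, p⁆, r⁆ = -χ ⁅⁅p, q⁆, r⁆ := by
    rw [← commutatorElement_inv p q]
    exact (hb.left r hr).map_inv (mem hp hq)
  have right {p q : F} (hp : p ∈ A) (hq : q ∈ A) : AdditiveOn A fun r => χ ⁅⁅p, q⁆, r⁆ :=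
    hb.right _ (mem hp hq)
  refine ⟨fun q hq r hr p hp p' hp' => ?_, fun p hp q hq => right hp hq,
    fun p hp q hq r hr => swap hp hq hr, fun p hp q hq r hr => ?_⟩
  · simp only [commutatorElement_mul_left_eq_conj_mul p p' q]
    rw [hb.map_mul_left (‹V.Normal›.conj_mem _ (mem hp' hq) p) (mem hp hq) hr,
      h.map_commutatorElement_conj_left hA hV hVA (mem hp' hq) hr hp, add_comm]
  · have mem_N {p q r s : F} (hp : p ∈ A) (hq : q ∈ A) (hr : r ∈ A) (hs : s ∈ A) :
        ⁅⁅p, q⁆, s * r * s⁻¹⁆ ∈ N := hVA <| Subgroup.commutator_mem_commutator (mem hp hq)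
      (A.mul_mem (A.mul_mem hs hr) (A.inv_mem hs))
    have h_HallWitt := congrArg χ (commutatorElement_commutatorElement_conj_mul p q r)
    rwa [h.additiveOn _ (N.mul_mem (mem_N hp hq hr hq) (mem_N hq hr hp hr)) _ (mem_N hr hp hq hp),
      h.additiveOn _ (mem_N hp hq hr hq) _ (mem_N hq hr hp hr), (right hp hq).map_conj hr hq,
      (right hq hr).map_conj hp hr, (right hr hp).map_conj hq hp, h.additiveOn.map_one]
      at h_HallWitt

theorem map_conj_commutator (h : IsCentralCharacter N T χ) {p q r t : F} (hn : ⁅⁅p, q⁆, r⁆ ∈ N)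
    (ht : t ∈ T) : χ ⁅⁅t * p * t⁻¹, t * q * t⁻¹⁆, t * r * t⁻¹⁆ = χ ⁅⁅p, q⁆, r⁆ := by
  rw [← conjugate_commutatorElement, ← conjugate_commutatorElement, h.map_conj hn ht]

end IsCentralCharacter

end CentralCharacter

section GroupRing

open scoped commutatorElement

variable {F M : Type*} [Group F] [AddCommGroup M] {A U : Subgroup F}

local notation "ε" => MonoidAlgebra.of ℤ F

theorem of_mul_of_sub_one (t s : F) : ε t * (ε s - 1) = (ε (t * s * t⁻¹) - 1) * ε t := by
  rw [mul_sub, sub_mul, mul_one, one_mul, ← map_mul, ← map_mul, inv_mul_cancel_right]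

theorem of_sub_one_mul_of (s t : F) : (ε s - 1) * ε t = ε t * (ε (t⁻¹ * s * t) - 1) := by
  rw [of_mul_of_sub_one]
  group

theorem of_sub_one_mul_of_sub_one_mul_eq_sub (x s s' f : F) :
    (ε x - 1) * (ε s - 1) * (ε s' - 1) * ε f =
      (ε (x * s * x⁻¹) - 1) * (ε (x * s' * x⁻¹) - 1) * ε (x * f) -
        (ε s - 1) * (ε s' - 1) * ε f := by
  rw [map_mul (MonoidAlgebra.of ℤ F) x f, ← mul_assoc, mul_assoc _ _ (ε x), ← of_mul_of_sub_one,
    ← mul_assoc, ← of_mul_of_sub_one]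
  noncomm_ring

theorem of_commutatorElement_sub_one (x r : F) :
    ε ⁅x, r⁆ - 1 = (ε x - 1) * (ε r - 1) - (ε r - 1) * (ε x - 1) -
      (ε ⁅x, r⁆ - 1) * (ε (r * x) - 1) := by
  have h : ε ⁅x, r⁆ * (ε r * ε x) = ε x * ε r := by
    simp only [← map_mul, commutatorElement_def]
    group
  rw [map_mul, sub_mul _ _ (ε r * ε x - 1), mul_sub _ (ε r * ε x), h]
  noncomm_ring

theorem of_mul_sub_one (x y : F) :
    ε (x * y) - 1 = ε x - 1 + (ε y - 1) + (ε x - 1) * (ε y - 1) := by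
  rw [map_mul]
  noncomm_ring

theorem additiveOn_apply_of_sub_one {Ψ : MonoidAlgebra ℤ F →ₗ[ℤ] M}
    (h : ∀ x ∈ A, ∀ y ∈ A, Ψ ((ε x - 1) * (ε y - 1)) = 0) :
    AdditiveOn A fun x => Ψ (ε x - 1) := fun x hx y hy => by
  simp only [of_mul_sub_one, map_add, h x hx y hy, add_zero]

theorem quadraticOn_apply_of_sub_one {Ψ : MonoidAlgebra ℤ F →ₗ[ℤ] M} {b : F → F → M}
    (h : ∀ x ∈ A, ∀ y ∈ A, Ψ ((ε x - 1) * (ε y - 1)) = b x y) :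
    QuadraticOn A b fun x => Ψ (ε x - 1) := fun x hx y hy => by
  simp only [of_mul_sub_one, map_add, h x hx y hy]

theorem apply_of_commutatorElement_sub_one {Ψ : MonoidAlgebra ℤ F →ₗ[ℤ] M} {x r : F}
    (h : Ψ ((ε ⁅x, r⁆ - 1) * (ε (r * x) - 1)) = 0) :
    Ψ (ε ⁅x, r⁆ - 1) = Ψ ((ε x - 1) * (ε r - 1)) - Ψ ((ε r - 1) * (ε x - 1)) := by
  rw [of_commutatorElement_sub_one, map_sub, map_sub, h, sub_zero]

end GroupRing

section GlueCosets

variable {F M : Type*} [Group F] {U : Subgroup F}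

local notation "ε" => MonoidAlgebra.of ℤ F

/-- The function on `F` given on each coset `U * k` by a function on `U`: its value at `u * k` is
`φ k u` whenever `k` is the chosen representative of its coset. -/
noncomputable def glueCosets (U : Subgroup F) (φ : F → F → M) (f : F) : M :=
  φ (cosetRep U f) (f * (cosetRep U f)⁻¹)

theorem glueCosets_of_mem (φ : F → F → M) {u : F} (hu : u ∈ U) : glueCosets U φ u = φ 1 u := by
  have h : cosetRep U u = 1 := by rw [← one_mul u, cosetRep_mul_of_mem 1 hu, cosetRep_one]
  rw [glueCosets, h, inv_one, mul_one]

variable [U.Normal]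

theorem glueCosets_mul (φ : F → F → M) {u : F} (hu : u ∈ U) (f : F) :
    glueCosets U φ (u * f) = φ (cosetRep U f) (u * (f * (cosetRep U f)⁻¹)) := by
  rw [glueCosets, cosetRep_mul_of_mem_left hu, mul_assoc]

variable [AddCommGroup M] {φ : F → F → M}

theorem linearExtension_glueCosets_of_additiveOn (hφ : ∀ k, AdditiveOn U (φ k)) {u : F} (hu : u ∈ U)
    (f : F) : linearExtension (glueCosets U φ) ((ε u - 1) * ε f) = φ (cosetRep U f) u := by
  rw [sub_mul, one_mul, ← map_mul, map_sub, linearExtension_of, linearExtension_of,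
    glueCosets_mul φ hu, (hφ _).map_mul hu (mul_cosetRep_inv_mem f), glueCosets,
    add_sub_cancel_right]

theorem linearExtension_glueCosets_of_quadraticOn {b : F → F → F → M}
    (hb : ∀ k, BiadditiveOn U U (b k)) (hφ : ∀ k, QuadraticOn U (b k) (φ k)) {u v : F} (hu : u ∈ U)
    (hv : v ∈ U) (f : F) :
    linearExtension (glueCosets U φ) ((ε u - 1) * (ε v - 1) * ε f) = b (cosetRep U f) u v := by
  have h : (ε u - 1) * (ε v - 1) * ε f = ε (u * v * f) - ε (u * f) - ε (v * f) + ε f := by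
    simp only [map_mul]
    noncomm_ring
  rw [h, map_add, map_sub, map_sub]
  simp only [linearExtension_of, glueCosets_mul φ (U.mul_mem hu hv), glueCosets_mul φ hu,
    glueCosets_mul φ hv, (hφ _).map_mul_mul (hb _) hu hv (mul_cosetRep_inv_mem f)]
  rw [glueCosets]
  abel

end GlueCosets

section CubicFunctional

open scoped commutatorElement

variable {F M : Type*} [Group F] [AddCommGroup M] {U T : Subgroup F} [U.Normal] {χ : F → M}

local notation "ε" => MonoidAlgebra.of ℤ F

theorem IsCentralCharacter.isJacobiForm_lowerCentral (hχ : IsCentralCharacter ⁅⁅U, U⁆, U⁆ T χ)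
    (hUT : U ≤ T) : IsJacobiForm U fun p q r => χ ⁅⁅p, q⁆, r⁆ :=
  hχ.isJacobiForm hUT ((Subgroup.commutator_le_self U).trans hUT) le_rfl le_rfl

/-- The coefficient is `3 = 2 + 1`: expanding `⁅x, r⁆ - 1` for `x = ⁅p, q⁆`, the product
`(x - 1) * (r - 1)` contributes `2 • χ ⁅x, r⁆` and `(r - 1) * (x - 1)` contributes `-χ ⁅x, r⁆`. -/
theorem apply_of_sub_one_eq_three_smul (hχ : IsCentralCharacter ⁅⁅U, U⁆, U⁆ T χ) (hUT : U ≤ T)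
    {Ψ : MonoidAlgebra ℤ F →ₗ[ℤ] M}
    (hΨ : ∀ p ∈ U, ∀ q ∈ U, ∀ r ∈ U, Ψ ((ε p - 1) * (ε q - 1) * (ε r - 1)) = χ ⁅⁅p, q⁆, r⁆)
    {x : F} (hx : x ∈ ⁅⁅U, U⁆, U⁆) : Ψ (ε x - 1) = (3 : ℤ) • χ x := by
  have hτ := hχ.isJacobiForm_lowerCentral hUT
  have hU2 : ⁅U, U⁆ ≤ U := Subgroup.commutator_le_self U
  have hU3 : ⁅⁅U, U⁆, U⁆ ≤ ⁅U, U⁆ := Subgroup.commutator_mono hU2 le_rfl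
  have quad_left {r} (hr : r ∈ U) : QuadraticOn U (fun p q => χ ⁅⁅p, q⁆, r⁆)
      fun x => Ψ ((ε x - 1) * (ε r - 1)) :=
    quadraticOn_apply_of_sub_one (Ψ := Ψ ∘ₗ LinearMap.mulRight ℤ (ε r - 1))
      fun p hp q hq => hΨ p hp q hq r hr
  have quad_right {r} (hr : r ∈ U) : QuadraticOn U (fun p q => χ ⁅⁅r, p⁆, q⁆)
      fun x => Ψ ((ε r - 1) * (ε x - 1)) :=
    quadraticOn_apply_of_sub_one (Ψ := Ψ ∘ₗ LinearMap.mulLeft ℤ (ε r - 1))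
      fun p hp q hq => by
        rw [← hΨ r hr p hp q hq, mul_assoc, LinearMap.comp_apply, LinearMap.mulLeft_apply]
  have add_left {r} (hr : r ∈ U) := (quad_left hr).additiveOn_commutator (hτ.biadditiveOn_left hr)
  have add_right {r} (hr : r ∈ U) :=
    (quad_right hr).additiveOn_commutator (hτ.biadditiveOn_right hr)
  have left_eq_zero {x r} (hx : x ∈ ⁅⁅U, U⁆, U⁆) (hr : r ∈ U) : Ψ ((ε x - 1) * (ε r - 1)) = 0 :=
    (quad_left hr).eq_zero_of_mem_commutator_commutator (hτ.biadditiveOn_left hr) hx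
  have left_sub_right {x r} (hx : x ∈ ⁅U, U⁆) (hr : r ∈ U) :
      Ψ ((ε x - 1) * (ε r - 1)) - Ψ ((ε r - 1) * (ε x - 1)) = (3 : ℤ) • χ ⁅x, r⁆ := by
    refine ((add_left hr).sub (add_right hr)).eqOn_commutator
      (((hχ.biadditiveOn (hU2.trans hUT) hUT le_rfl).left r hr).smul 3) le_rfl
      (fun p hp q hq => ?_) hx
    simp only [(quad_left hr).map_commutatorElement (hτ.biadditiveOn_left hr) hp hq,
      (quad_right hr).map_commutatorElement (hτ.biadditiveOn_right hr) hp hq]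
    have h_swap : χ ⁅⁅q, p⁆, r⁆ = -χ ⁅⁅p, q⁆, r⁆ := hτ.swap p hp q hq r hr
    have h_swap' : χ ⁅⁅r, q⁆, p⁆ = -χ ⁅⁅q, r⁆, p⁆ := hτ.swap q hq r hr p hp
    have h_jacobi : χ ⁅⁅r, p⁆, q⁆ = -(χ ⁅⁅p, q⁆, r⁆ + χ ⁅⁅q, r⁆, p⁆) :=
      eq_neg_of_add_eq_zero_right (hτ.jacobi p hp q hq r hr)
    rw [h_swap, h_swap', h_jacobi]
    abel
  have add := additiveOn_apply_of_sub_one fun x (hx : x ∈ ⁅⁅U, U⁆, U⁆) y hy =>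
    left_eq_zero hx (hU2 (hU3 hy))
  refine add.eqOn_commutator (hχ.additiveOn.smul 3) le_rfl (fun x hx r hr => ?_) hx
  rw [apply_of_commutatorElement_sub_one
    (left_eq_zero (Subgroup.commutator_mem_commutator hx hr) (U.mul_mem hr (hU2 hx))),
    left_sub_right hx hr]

theorem exists_cubic_functional [IsFreeGroup U] (hχ : IsCentralCharacter ⁅⁅U, U⁆, U⁆ T χ)
    (hUT : U ≤ T) : ∃ Ψ : MonoidAlgebra ℤ F →ₗ[ℤ] M, ∀ p ∈ U, ∀ q ∈ U, ∀ f, ∀ r ∈ U,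
      Ψ ((ε p - 1) * (ε q - 1) * ε f * (ε r - 1)) = χ ⁅⁅p, q⁆, f * r * f⁻¹⁆ := by
  have hτ := hχ.isJacobiForm_lowerCentral hUT
  have conj_mem (f : F) {r : F} (hr : r ∈ U) : f * r * f⁻¹ ∈ U := ‹U.Normal›.conj_mem r hr f
  have map_conj {p q r s : F} (hp : p ∈ U) (hq : q ∈ U) (hr : r ∈ U) (hs : s ∈ U) :
      χ ⁅⁅p, q⁆, s * r * s⁻¹⁆ = χ ⁅⁅p, q⁆, r⁆ := (hτ.additiveOn_right p hp q hq).map_conj hr hs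
  let C (k : MonoidAlgebra ℤ F) (c : F → M) : Prop := ∃ p ∈ U, ∃ q ∈ U, ∃ f,
    k = (ε p - 1) * (ε q - 1) * ε f ∧ c = fun r => χ ⁅⁅p, q⁆, f * r * f⁻¹⁆
  have hC : IsTranslationStable U C :=
    { map_one := by
        rintro k c ⟨p, -, q, -, f, rfl, rfl⟩
        simp [hχ.additiveOn.map_one]
      translate := by
        rintro k c ⟨p, hp, q, hq, f, rfl, rfl⟩ s hs
        refine ⟨_, ⟨p, hp, q, hq, f * s, by rw [mul_assoc, ← map_mul], rfl⟩, fun r hr => ?_⟩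
        have h_mul : f * (s * r) * f⁻¹ = f * s * f⁻¹ * (f * r * f⁻¹) := by group
        have h_conj : f * s * r * (f * s)⁻¹ = f * s * f⁻¹ * (f * r * f⁻¹) * (f * s * f⁻¹)⁻¹ := by
          group
        simp only [h_mul, h_conj, map_conj hp hq (conj_mem f hr) (conj_mem f hs)]
        exact hτ.additiveOn_right p hp q hq _ (conj_mem f hs) _ (conj_mem f hr) }
  have hloc (r) (hr : r ∈ U) : ∃ g : MonoidAlgebra ℤ F →ₗ[ℤ] M, ∀ k c, C k c → g k = c r := by
    have hb (k : F) := hτ.biadditiveOn_left (conj_mem k hr)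
    choose φ hφ using fun k => exists_quadraticOn (hb k)
    refine ⟨linearExtension (glueCosets U φ), ?_⟩
    rintro k c ⟨p, hp, q, hq, f, rfl, rfl⟩
    rw [linearExtension_glueCosets_of_quadraticOn hb hφ hp hq,
      ← map_conj hp hq (conj_mem _ hr) (mul_cosetRep_inv_mem f)]
    group
  obtain ⟨Ψ, hΨ⟩ := hC.exists_functional hloc
  exact ⟨Ψ, fun p hp q hq f r hr => hΨ r hr _ _ ⟨p, hp, q, hq, f, rfl, rfl⟩⟩

end CubicFunctional

section AugmentationIdeal

variable {F : Type} [Group F] {M N : Subgroup F}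

local notation "ε" => MonoidAlgebra.of ℤ F

theorem span_range_of : Submodule.span ℤ (Set.range ε) = ⊤ := by
  refine Submodule.eq_top_iff'.2 fun x => ?_
  induction x using MonoidAlgebra.induction_on with
  | of f => exact Submodule.subset_span ⟨f, rfl⟩
  | add x y hx hy => exact Submodule.add_mem _ hx hy
  | smul n x hx => exact Submodule.smul_mem _ n hx

theorem top_mul_top : (⊤ : Submodule ℤ (MonoidAlgebra ℤ F)) * ⊤ = ⊤ :=
  eq_top_iff.2 fun x _ => one_mul x ▸ Submodule.mul_mem_mul trivial trivial

theorem augI_mul_top (N : Subgroup F) : augI N * ⊤ = augI N := by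
  rw [augI, mul_assoc, top_mul_top]

theorem aug_mono (h : M ≤ N) : aug M ≤ aug N :=
  Submodule.span_mono fun _ ⟨n, hn, hx⟩ => ⟨n, h hn, hx⟩

theorem augI_mono (h : M ≤ N) : augI M ≤ augI N :=
  mul_le_mul' (aug_mono h) le_rfl

theorem of_sub_one_mul_mem_augI {n : F} (hn : n ∈ N) (y : MonoidAlgebra ℤ F) :
    (ε n - 1) * y ∈ augI N :=
  Submodule.mul_mem_mul (Submodule.subset_span ⟨n, hn, rfl⟩) trivial

theorem of_sub_one_mem_augI {n : F} (hn : n ∈ N) : ε n - 1 ∈ augI N := by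
  simpa using of_sub_one_mul_mem_augI hn 1

theorem augI_le {P : Submodule ℤ (MonoidAlgebra ℤ F)}
    (h : ∀ n ∈ N, ∀ f, (ε n - 1) * ε f ∈ P) : augI N ≤ P := by
  rw [augI, aug, ← span_range_of, Submodule.span_mul_span, Submodule.span_le]
  rintro _ ⟨_, ⟨n, hn, rfl⟩, _, ⟨f, rfl⟩, rfl⟩
  exact h n hn f

theorem mem_of_of_sub_one_mem_augI {a : F} (ha : ε a - 1 ∈ augI N) : a ∈ N := by
  classical
  have h_le : augI N ≤ LinearMap.ker
      (linearExtension fun f : F => if f ∈ N then (1 : ℤ) else 0) := augI_le fun n hn f => by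
    rw [LinearMap.mem_ker, sub_mul, one_mul, ← map_mul, map_sub, linearExtension_of,
      linearExtension_of, sub_eq_zero]
    simp only [Subgroup.mul_mem_cancel_left N hn]
  by_contra h
  have := h_le ha
  rw [LinearMap.mem_ker, map_sub, linearExtension_of, linearExtension_one] at this
  simp [h] at this

theorem top_mul_aug (N : Subgroup F) [N.Normal] : ⊤ * aug N = aug N * ⊤ := by
  rw [← span_range_of, aug, Submodule.span_mul_span, Submodule.span_mul_span]
  congr 1
  ext x
  constructor
  · rintro ⟨_, ⟨f, rfl⟩, _, ⟨n, hn, rfl⟩, rfl⟩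
    exact ⟨_, ⟨_, ‹N.Normal›.conj_mem n hn f, rfl⟩, _, ⟨f, rfl⟩, (of_mul_of_sub_one f n).symm⟩
  · rintro ⟨_, ⟨n, hn, rfl⟩, _, ⟨f, rfl⟩, rfl⟩
    exact ⟨_, ⟨f, rfl⟩, _, ⟨_, by simpa using ‹N.Normal›.conj_mem n hn f⁻¹, rfl⟩,
      (of_sub_one_mul_of n f).symm⟩

theorem top_mul_augI (N : Subgroup F) [N.Normal] : ⊤ * augI N = augI N := by
  rw [augI, ← mul_assoc, top_mul_aug, mul_assoc, top_mul_top]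

theorem fourfold_le {A B C D : Subgroup F} [B.Normal] [C.Normal] [D.Normal]
    {P : Submodule ℤ (MonoidAlgebra ℤ F)}
    (h : ∀ p ∈ A, ∀ q ∈ B, ∀ r ∈ C, ∀ f, ∀ s ∈ D,
      (ε p - 1) * (ε q - 1) * (ε r - 1) * ε f * (ε s - 1) ∈ P) :
    augI A * augI B * augI C * augI D ≤ P := by
  have mul_top (X : Submodule ℤ (MonoidAlgebra ℤ F)) (N : Subgroup F) [N.Normal] :
      X * ⊤ * augI N = X * aug N * ⊤ := by rw [mul_assoc, top_mul_augI, augI, mul_assoc]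
  have h_eq : augI A * augI B * augI C * augI D = aug A * aug B * aug C * ⊤ * aug D := by
    rw [augI, mul_top, mul_top, mul_top, mul_assoc _ (aug D), ← top_mul_aug, ← mul_assoc]
  rw [h_eq, ← span_range_of]
  simp only [aug, Submodule.span_mul_span]
  rw [Submodule.span_le]
  rintro _ ⟨_, ⟨_, ⟨_, ⟨_, ⟨p, hp, rfl⟩, _, ⟨q, hq, rfl⟩, rfl⟩, _, ⟨r, hr, rfl⟩, rfl⟩,
    _, ⟨f, rfl⟩, rfl⟩, _, ⟨s, hs, rfl⟩, rfl⟩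
  exact h p hp q hq r hr f s hs

end AugmentationIdeal

section MixedIdeal

variable {F : Type} [Group F] {M N U S T : Subgroup F} {a : F}

local notation "ε" => MonoidAlgebra.of ℤ F

/-- The ideal `𝐮𝐬𝐬𝐭 + 𝐭𝐬𝐬𝐮` attached to three subgroups `U`, `S`, `T`. -/
noncomputable def mixedIdeal (U S T : Subgroup F) : Submodule ℤ (MonoidAlgebra ℤ F) :=
  augI U * augI S * augI S * augI T + augI T * augI S * augI S * augI U

theorem mixedIdeal_mono (hU : M ≤ U) (hT : N ≤ T) : mixedIdeal M S N ≤ mixedIdeal U S T := by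
  have := augI_mono hU
  have := augI_mono hT
  simp only [mixedIdeal, Submodule.add_eq_sup]
  gcongr

theorem mixedIdeal_mul_top (U S T : Subgroup F) :
    mixedIdeal U S T * ⊤ = mixedIdeal U S T := by
  simp only [mixedIdeal, Submodule.add_eq_sup, Submodule.sup_mul, mul_assoc, augI_mul_top]

theorem of_sq_sub_one_mem {I : Submodule ℤ (MonoidAlgebra ℤ F)} (hI : I * ⊤ ≤ I)
    (ha : ε a - 1 ∈ I) : ε (a ^ 2) - 1 ∈ I := by
  have h : ε (a ^ 2) - 1 = (ε a - 1) * (ε a + 1) := by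
    rw [map_pow]
    noncomm_ring
  exact h ▸ hI (Submodule.mul_mem_mul ha trivial)

theorem mul_mem_mixedIdeal {u s s' t : F} (hu : u ∈ U) (hs : s ∈ S) (hs' : s' ∈ S) (ht : t ∈ T)
    (y : MonoidAlgebra ℤ F) :
    (ε u - 1) * (ε s - 1) * (ε s' - 1) * y * (ε t - 1) ∈ mixedIdeal U S T := by
  rw [mul_assoc _ _ y]
  exact Submodule.mem_sup_left (Submodule.mul_mem_mul (Submodule.mul_mem_mul (Submodule.mul_mem_mul
    (of_sub_one_mem_augI hu) (of_sub_one_mem_augI hs)) (of_sub_one_mul_mem_augI hs' y))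
    (of_sub_one_mem_augI ht))

theorem mixedIdeal_comm : mixedIdeal U S T = mixedIdeal T S U := by
  rw [mixedIdeal, mixedIdeal, add_comm]

theorem mul_mem_mixedIdeal' {u s s' t : F} (hu : u ∈ U) (hs : s ∈ S) (hs' : s' ∈ S) (ht : t ∈ T)
    (y : MonoidAlgebra ℤ F) :
    (ε t - 1) * (ε s - 1) * (ε s' - 1) * y * (ε u - 1) ∈ mixedIdeal U S T := by
  rw [mixedIdeal_comm]
  exact mul_mem_mixedIdeal ht hs hs' hu y

theorem mixedIdeal_le [U.Normal] [S.Normal] [T.Normal] {P : Submodule ℤ (MonoidAlgebra ℤ F)}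
    (h : ∀ u ∈ U, ∀ s ∈ S, ∀ s' ∈ S, ∀ f, ∀ t ∈ T,
      (ε u - 1) * (ε s - 1) * (ε s' - 1) * ε f * (ε t - 1) ∈ P)
    (h' : ∀ t ∈ T, ∀ s ∈ S, ∀ s' ∈ S, ∀ f, ∀ u ∈ U,
      (ε t - 1) * (ε s - 1) * (ε s' - 1) * ε f * (ε u - 1) ∈ P) :
    mixedIdeal U S T ≤ P :=
  sup_le (fourfold_le h) (fourfold_le h')

theorem mixedIdeal_le_augI [U.Normal] : mixedIdeal U S T ≤ augI U := by
  refine sup_le ?_ ((mul_le_mul' le_top le_rfl).trans (top_mul_augI U).le)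
  calc augI U * augI S * augI S * augI T ≤ augI U * ⊤ * ⊤ * ⊤ :=
        mul_le_mul' (mul_le_mul' (mul_le_mul' le_rfl le_top) le_top) le_top
    _ = augI U := by simp only [augI_mul_top]

theorem apply_of_sub_one_eq_zero {M : Type*} [AddCommGroup M] [S.Normal] [T.Normal] {a : F}
    (ha : ε a - 1 ∈ mixedIdeal (S ⊓ T) S T) {Ψ : MonoidAlgebra ℤ F →ₗ[ℤ] M}
    (h : ∀ u ∈ S ⊓ T, ∀ s ∈ S, ∀ s' ∈ S, ∀ f, ∀ t ∈ T,
      Ψ ((ε u - 1) * (ε s - 1) * (ε s' - 1) * ε f * (ε t - 1)) = 0)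
    (h' : ∀ t ∈ T, ∀ s ∈ S, ∀ s' ∈ S, ∀ f, ∀ u ∈ S ⊓ T,
      Ψ ((ε t - 1) * (ε s - 1) * (ε s' - 1) * ε f * (ε u - 1)) = 0) : Ψ (ε a - 1) = 0 :=
  mixedIdeal_le (P := LinearMap.ker Ψ) h h' ha

end MixedIdeal

section Functoriality

variable {F : Type} [Group F]

local notation "ε" => MonoidAlgebra.of ℤ _

theorem map_augI_le {G : Type} [Group G] {N : Subgroup F} {N' : Subgroup G} {ρ : F →* G}
    (h : ∀ n ∈ N, ρ n ∈ N') :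
    (augI N).map (MonoidAlgebra.mapDomainAlgHom ℤ ℤ ρ).toLinearMap ≤ augI N' := by
  rw [Submodule.map_le_iff_le_comap]
  refine augI_le fun n hn f => ?_
  rw [Submodule.mem_comap, AlgHom.toLinearMap_apply, map_mul, map_sub, map_one]
  simpa [MonoidAlgebra.of_apply] using of_sub_one_mul_mem_augI (h n hn) (ε (ρ f))

theorem of_map_sub_one_mem_mixedIdeal {G : Type} [Group G] {U S T : Subgroup F}
    {U' S' T' : Subgroup G} {ρ : F →* G} (hU : ∀ u ∈ U, ρ u ∈ U') (hS : ∀ s ∈ S, ρ s ∈ S')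
    (hT : ∀ t ∈ T, ρ t ∈ T') {a : F} (ha : ε a - 1 ∈ mixedIdeal U S T) :
    ε (ρ a) - 1 ∈ mixedIdeal U' S' T' := by
  have h_le : (mixedIdeal U S T).map (MonoidAlgebra.mapDomainAlgHom ℤ ℤ ρ).toLinearMap ≤
      mixedIdeal U' S' T' := by
    simp only [mixedIdeal, Submodule.add_eq_sup, Submodule.map_sup, Submodule.map_mul]
    have := map_augI_le hU
    have := map_augI_le hS
    have := map_augI_le hT
    gcongr
  have := h_le (Submodule.mem_map_of_mem ha)
  rw [AlgHom.toLinearMap_apply, map_sub, map_one] at this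
  simpa [MonoidAlgebra.of_apply] using this

/-- The projection of `ℤ[F]` onto `ℤ[K]` that forgets the elements of `F` outside `K`. -/
noncomputable def restrictSupport (K : Subgroup F) : MonoidAlgebra ℤ F →ₗ[ℤ] MonoidAlgebra ℤ K :=
  open scoped Classical in linearExtension fun f => if h : f ∈ K then ε ⟨f, h⟩ else 0

variable {K : Subgroup F}

theorem restrictSupport_of (k : K) : restrictSupport K (ε (k : F)) = ε k := by
  simp only [restrictSupport, linearExtension_of, SetLike.coe_mem, dif_pos]

theorem restrictSupport_of_eq_zero {f : F} (hf : f ∉ K) : restrictSupport K (ε f) = 0 := by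
  rw [restrictSupport, linearExtension_of, dif_neg hf]

theorem restrictSupport_of_mul (k : K) (x : MonoidAlgebra ℤ F) :
    restrictSupport K (ε (k : F) * x) = ε k * restrictSupport K x := by
  suffices h : restrictSupport K ∘ₗ LinearMap.mulLeft ℤ (ε (k : F)) =
      LinearMap.mulLeft ℤ (ε k) ∘ₗ restrictSupport K from LinearMap.congr_fun h x
  refine linearMap_ext_of fun f => ?_
  simp only [LinearMap.comp_apply, LinearMap.mulLeft_apply, ← map_mul]
  by_cases hf : f ∈ K
  · lift f to K using hf
    rw [restrictSupport_of, ← Subgroup.coe_mul, restrictSupport_of, map_mul]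
  · rw [restrictSupport_of_eq_zero hf, mul_zero, restrictSupport_of_eq_zero]
    rwa [Subgroup.mul_mem_cancel_left _ k.2]

theorem restrictSupport_mul_of (x : MonoidAlgebra ℤ F) (k : K) :
    restrictSupport K (x * ε (k : F)) = restrictSupport K x * ε k := by
  suffices h : restrictSupport K ∘ₗ LinearMap.mulRight ℤ (ε (k : F)) =
      LinearMap.mulRight ℤ (ε k) ∘ₗ restrictSupport K from LinearMap.congr_fun h x
  refine linearMap_ext_of fun f => ?_
  simp only [LinearMap.comp_apply, LinearMap.mulRight_apply, ← map_mul]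
  by_cases hf : f ∈ K
  · lift f to K using hf
    rw [restrictSupport_of, ← Subgroup.coe_mul, restrictSupport_of, map_mul]
  · rw [restrictSupport_of_eq_zero hf, zero_mul, restrictSupport_of_eq_zero]
    rwa [Subgroup.mul_mem_cancel_right _ k.2]

theorem of_sub_one_mem_mixedIdeal_subgroupOf {U S T : Subgroup F} [U.Normal] [S.Normal] [T.Normal]
    (hU : U ≤ K) (hS : S ≤ K) (hT : T ≤ K) {a : K} (ha : ε (a : F) - 1 ∈ mixedIdeal U S T) :
    ε a - 1 ∈ mixedIdeal (U.subgroupOf K) (S.subgroupOf K) (T.subgroupOf K) := by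
  have map_one : restrictSupport K 1 = 1 := by
    simpa [← MonoidAlgebra.one_def] using restrictSupport_of (1 : K)
  have left (k : K) (x) : restrictSupport K ((ε (k : F) - 1) * x) =
      (ε k - 1) * restrictSupport K x := by
    rw [sub_mul, sub_mul, map_sub, restrictSupport_of_mul, one_mul, one_mul]
  have right (x) (k : K) : restrictSupport K (x * (ε (k : F) - 1)) =
      restrictSupport K x * (ε k - 1) := by
    rw [mul_sub, mul_sub, map_sub, restrictSupport_mul_of, mul_one, mul_one]
  have factor (u s s' : K) (f : F) (t : K) : restrictSupport K ((ε (u : F) - 1) * (ε (s : F) - 1) *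
      (ε (s' : F) - 1) * ε f * (ε (t : F) - 1)) =
      (ε u - 1) * (ε s - 1) * (ε s' - 1) * restrictSupport K (ε f) * (ε t - 1) := by
    simp only [right, mul_assoc, left]
  have h_le : mixedIdeal U S T ≤ (mixedIdeal (U.subgroupOf K) (S.subgroupOf K)
      (T.subgroupOf K)).comap (restrictSupport K) :=
    mixedIdeal_le
      (fun u hu s hs s' hs' f t ht => by
        rw [Submodule.mem_comap, factor ⟨u, hU hu⟩ ⟨s, hS hs⟩ ⟨s', hS hs'⟩ f ⟨t, hT ht⟩]
        exact mul_mem_mixedIdeal (U := U.subgroupOf K) hu hs hs' ht _)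
      (fun t ht s hs s' hs' f u hu => by
        rw [Submodule.mem_comap, factor ⟨t, hT ht⟩ ⟨s, hS hs⟩ ⟨s', hS hs'⟩ f ⟨u, hU hu⟩]
        exact mul_mem_mixedIdeal' (T := T.subgroupOf K) hu hs hs' ht _)
  simpa only [Submodule.mem_comap, map_sub, restrictSupport_of, map_one] using h_le ha

end Functoriality

section CubicIdeal

open scoped commutatorElement

variable {F : Type} [Group F] {U : Subgroup F} [U.Normal] {b : F}

local notation "ε" => MonoidAlgebra.of ℤ F
local notation "ℚ/ℤ" => AddCircle (1 : ℚ)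

theorem apply_of_sub_one_eq_zero_of_cubic {M : Type*} [AddCommGroup M]
    (hb : ε b - 1 ∈ mixedIdeal U U ⊤) {Ψ : MonoidAlgebra ℤ F →ₗ[ℤ] M} {c : F → F → F → M}
    (hΨ : ∀ u ∈ U, ∀ v ∈ U, ∀ w ∈ U, ∀ f, Ψ ((ε u - 1) * (ε v - 1) * (ε w - 1) * ε f) = c u v w)
    (hc : ∀ u ∈ U, ∀ v ∈ U, ∀ w ∈ U, ∀ t,
      c (t * u * t⁻¹) (t * v * t⁻¹) (t * w * t⁻¹) = c u v w) :
    Ψ (ε b - 1) = 0 := by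
  have conj_mem {u : F} (hu : u ∈ U) (t : F) : t * u * t⁻¹ ∈ U := ‹U.Normal›.conj_mem u hu t
  have h_le : mixedIdeal U U ⊤ ≤ LinearMap.ker Ψ := by
    refine mixedIdeal_le (fun u hu v hv w hw f t _ => ?_) fun t _ u hu v hv f w hw => ?_
    · rw [LinearMap.mem_ker, mul_sub, mul_one, map_sub, mul_assoc _ (ε f), ← map_mul,
        hΨ u hu v hv w hw, hΨ u hu v hv w hw, sub_self]
    · have conj (g s : F) : ε (g * s * g⁻¹) - 1 = ε g * (ε s - 1) * ε g⁻¹ := by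
        rw [of_mul_of_sub_one, mul_assoc (_ - 1), ← map_mul, mul_inv_cancel, map_one, mul_one]
      have cancel (g : F) (x) : ε g⁻¹ * (ε g * x) = x := by
        rw [← mul_assoc, ← map_mul, inv_mul_cancel, map_one, one_mul]
      have h_conj : (ε t - 1) * (ε u - 1) * (ε v - 1) * ε f * (ε w - 1) =
          (ε (t * u * t⁻¹) - 1) * (ε (t * v * t⁻¹) - 1) * (ε (t * (f * w * f⁻¹) * t⁻¹) - 1) *
            ε (t * f) - (ε u - 1) * (ε v - 1) * (ε (f * w * f⁻¹) - 1) * ε f := by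
        have h_inv : ε f⁻¹ * ε f = 1 := by simpa using cancel f 1
        simp only [conj, map_mul (MonoidAlgebra.of ℤ F) t f]
        simp only [mul_assoc, cancel, h_inv, mul_one]
        rw [sub_mul (ε t), one_mul]
      rw [LinearMap.mem_ker, h_conj, map_sub, hΨ u hu v hv _ (conj_mem hw f),
        hΨ _ (conj_mem hu t) _ (conj_mem hv t) _ (conj_mem (conj_mem hw f) t),
        hc u hu v hv _ (conj_mem hw f), sub_self]
  exact h_le hb

theorem QuadraticOn.eq_zero_of_cubic {M : Type*} [AddCommGroup M]
    (hb : ε b - 1 ∈ mixedIdeal U U ⊤) {φ : F → M} {l : F → F → M} (hl : BiadditiveOn U U l)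
    (hφ : QuadraticOn U l φ) : φ b = 0 := by
  have hΨ {u v : F} (hu : u ∈ U) (hv : v ∈ U) (f : F) :
      linearExtension (glueCosets U fun _ => φ) ((ε u - 1) * (ε v - 1) * ε f) = l u v :=
    linearExtension_glueCosets_of_quadraticOn (b := fun _ => l) (fun _ => hl) (fun _ => hφ) hu hv f
  have hb_zero : linearExtension (glueCosets U fun _ => φ) (ε b - 1) = 0 :=
    apply_of_sub_one_eq_zero_of_cubic hb (c := fun _ _ _ => 0)
      (fun u hu v hv w _ f => by
        rw [mul_assoc _ (ε w - 1), sub_mul (ε w), one_mul, ← map_mul, mul_sub, map_sub,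
          hΨ hu hv, hΨ hu hv, sub_self])
      fun _ _ _ _ _ _ _ => rfl
  have hbU : b ∈ U := mem_of_of_sub_one_mem_augI (mixedIdeal_le_augI hb)
  rwa [map_sub, linearExtension_of, linearExtension_one, glueCosets_of_mem _ hbU,
    glueCosets_of_mem _ U.one_mem, hφ.map_one hl, sub_zero] at hb_zero

theorem mem_commutator_of_cubic (hb : ε b - 1 ∈ mixedIdeal U U ⊤) : b ∈ ⁅U, U⁆ :=
  mem_of_forall_additiveOn_eq_zero (Subgroup.commutator_le_self U) le_rfl
    (mem_of_of_sub_one_mem_augI (mixedIdeal_le_augI hb)) fun _ hη _ =>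
      hη.quadraticOn.eq_zero_of_cubic hb .zero

theorem mem_commutator_commutator_of_cubic [IsFreeGroup U] (hb : ε b - 1 ∈ mixedIdeal U U ⊤) :
    b ∈ ⁅⁅U, U⁆, U⁆ := by
  have hU : ⁅U, U⁆ ≤ U := Subgroup.commutator_le_self U
  refine mem_of_forall_additiveOn_eq_zero (Subgroup.commutator_mono hU le_rfl)
    (Subgroup.commutator_mono le_rfl hU) (mem_commutator_of_cubic hb) fun ξ hξ hξ_zero => ?_
  have hξ_comm : BiadditiveOn U U fun x y => ξ ⁅x, y⁆ :=
    IsCentralCharacter.biadditiveOn (T := U) ⟨hξ, hξ_zero⟩ le_rfl le_rfl le_rfl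
  obtain ⟨l, hl, hl_sub, -⟩ := exists_biadditiveOn_extension (A := ⊥) (p := fun _ _ => 0) bot_le
    hξ_comm (fun s _ => by simp [hξ.map_one]) .zero (fun _ _ _ _ _ => rfl)
    (fun _ _ _ _ _ => rfl) fun x hx y hy => by
      rw [Subgroup.mem_bot.1 hx, Subgroup.mem_bot.1 hy]
      simp [hξ.map_one]
  obtain ⟨φ, hφ, hφ_eq⟩ := exists_quadraticOn_eqOn_commutator hl hξ hl_sub
  rw [← hφ_eq b (mem_commutator_of_cubic hb), hφ.eq_zero_of_cubic hb hl]

theorem pow_three_mem_of_cubic [IsFreeGroup U] (hb : ε b - 1 ∈ mixedIdeal U U ⊤) :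
    b ^ 3 ∈ ⁅⁅⁅U, U⁆, U⁆, (⊤ : Subgroup F)⁆ := by
  have hb_mem := mem_commutator_commutator_of_cubic hb
  refine mem_of_forall_additiveOn_eq_zero (Subgroup.commutator_le_left _ _)
    (Subgroup.commutator_mono le_rfl le_top) (Subgroup.pow_mem _ hb_mem 3) fun χ hχ hχ_zero => ?_
  have hχ' : IsCentralCharacter ⁅⁅U, U⁆, U⁆ ⊤ χ := ⟨hχ, hχ_zero⟩
  obtain ⟨Ψ, hΨ⟩ := exists_cubic_functional hχ' le_top
  have hΨ_of_mul {u v w : F} (hu : u ∈ U) (hv : v ∈ U) (hw : w ∈ U) (f : F) :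
      Ψ ((ε u - 1) * (ε v - 1) * (ε w - 1) * ε f) = χ ⁅⁅u, v⁆, w⁆ := by
    rw [mul_assoc _ (ε w - 1), of_sub_one_mul_of, ← mul_assoc, hΨ u hu v hv f _
      (by simpa using ‹U.Normal›.conj_mem w hw f⁻¹)]
    group
  have hΨ_one : Ψ (ε b - 1) = 0 := apply_of_sub_one_eq_zero_of_cubic hb
    (fun u hu v hv w hw f => hΨ_of_mul hu hv hw f) fun u hu v hv w hw t => by
      rw [← conjugate_commutatorElement, ← conjugate_commutatorElement]
      exact hχ'.map_conj (Subgroup.commutator_mem_commutator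
        (Subgroup.commutator_mem_commutator hu hv) hw) (Subgroup.mem_top t)
  rw [hχ.map_pow hb_mem, ← hΨ_one, apply_of_sub_one_eq_three_smul hχ' le_top
    (fun p hp q hq r hr => by rw [← hΨ_of_mul hp hq hr 1, map_one, mul_one]) hb_mem]
  norm_cast

end CubicIdeal

section Projection

open scoped commutatorElement

variable {F : Type*} [Group F]

theorem commutator_inf_le {S T : Subgroup F} : ⁅S ⊓ T, S ⊓ T⁆ ≤ ⁅S, S⁆ ⊓ T :=
  le_inf (Subgroup.commutator_mono inf_le_left inf_le_left)
    ((Subgroup.commutator_le_self _).trans inf_le_right)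

theorem commutator_inf_le_inf {S T : Subgroup F} : ⁅S, S⁆ ⊓ T ≤ S ⊓ T :=
  inf_le_inf_right T (Subgroup.commutator_le_self S)

/-- The endomorphism `ρ` maps `F` into `T` and is the identity modulo `S`. -/
structure IsProjectionAlong (S T : Subgroup F) (ρ : F →* F) : Prop where
  apply_mem : ∀ f, ρ f ∈ T
  mul_inv_mem : ∀ f, f * (ρ f)⁻¹ ∈ S

theorem exists_isProjectionAlong [IsFreeGroup F] {S T : Subgroup F} [S.Normal] (hST : S ⊔ T = ⊤) :
    ∃ ρ : F →* F, IsProjectionAlong S T ρ := by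
  have h (f : F) : ∃ t : T, (t : F ⧸ S) = f := by
    obtain ⟨s, hs, t, ht, rfl⟩ := Set.mem_mul.1 <|
      (Subgroup.normal_mul S T).subset (hST ▸ Subgroup.mem_top f)
    exact ⟨⟨t, ht⟩, by simp [(QuotientGroup.eq_one_iff s).2 hs]⟩
  choose τ hτ using h
  let ρ : F →* F := T.subtype.comp (IsFreeGroup.lift fun i => τ (IsFreeGroup.of i))
  have hρ : (QuotientGroup.mk' S).comp ρ = QuotientGroup.mk' S :=
    IsFreeGroup.ext_hom fun i => by simp [ρ, hτ]
  refine ⟨ρ, fun f => SetLike.coe_mem _, fun f => ?_⟩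
  rw [← QuotientGroup.eq_one_iff, QuotientGroup.mk_mul, QuotientGroup.mk_inv, mul_inv_eq_one]
  exact (DFunLike.congr_fun hρ f).symm

/-- The element `t * (ρ t)⁻¹`, which measures how far `t` is from being fixed by `ρ`. -/
def defect (ρ : F →* F) (t : F) : F :=
  t * (ρ t)⁻¹

theorem defect_mul_apply (ρ : F →* F) (t : F) : defect ρ t * ρ t = t :=
  inv_mul_cancel_right t (ρ t)

theorem conj_defect_mul (ρ : F →* F) (f s t : F) :
    ρ f * defect ρ (s * t) * (ρ f)⁻¹ =
      ρ f * defect ρ s * (ρ f)⁻¹ * (ρ (f * s) * defect ρ t * (ρ (f * s))⁻¹) := by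
  simp only [defect, map_mul]
  group

theorem defect_mul (ρ : F →* F) (s t : F) :
    defect ρ (s * t) = defect ρ s * (ρ s * defect ρ t * (ρ s)⁻¹) := by
  simpa using conj_defect_mul ρ 1 s t

@[simp]
theorem defect_one (ρ : F →* F) : defect ρ 1 = 1 := by
  simp [defect]

namespace IsProjectionAlong

variable {S T : Subgroup F} {ρ : F →* F}

theorem apply_mem_inf (hρ : IsProjectionAlong S T ρ) {s : F} (hs : s ∈ S) : ρ s ∈ S ⊓ T :=
  ⟨by simpa [Subgroup.mul_mem_cancel_left S hs] using hρ.mul_inv_mem s, hρ.apply_mem s⟩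

theorem defect_mem (hρ : IsProjectionAlong S T ρ) {t : F} (ht : t ∈ T) : defect ρ t ∈ S ⊓ T :=
  ⟨hρ.mul_inv_mem t, T.mul_mem ht (T.inv_mem (hρ.apply_mem t))⟩

theorem apply_mem_commutator (hρ : IsProjectionAlong S T ρ) {x : F} (hx : x ∈ ⁅S, S⁆) :
    ρ x ∈ ⁅S ⊓ T, S ⊓ T⁆ := by
  have hS : S.map ρ ≤ S ⊓ T := Subgroup.map_le_iff_le_comap.2 fun _ => hρ.apply_mem_inf
  have := Subgroup.mem_map_of_mem ρ hx
  rw [Subgroup.map_commutator] at this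
  exact Subgroup.commutator_mono hS hS this

theorem apply_mem_commutator_commutator (hρ : IsProjectionAlong S T ρ) {x : F}
    (hx : x ∈ ⁅⁅S, S⁆, S⁆) : ρ x ∈ ⁅⁅S ⊓ T, S ⊓ T⁆, S ⊓ T⁆ := by
  have := Subgroup.mem_map_of_mem ρ hx
  rw [Subgroup.map_commutator] at this
  exact Subgroup.commutator_mono
    (Subgroup.map_le_iff_le_comap.2 fun _ => hρ.apply_mem_commutator)
    (Subgroup.map_le_iff_le_comap.2 fun _ => hρ.apply_mem_inf) this

theorem additiveOn_comp_defect {M : Type*} [AddCommGroup M] (hρ : IsProjectionAlong S T ρ)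
    {h : F → M} (H : AdditiveOn (S ⊓ T) h) :
    AdditiveOn (S ⊓ T) fun x => h (defect ρ x) := fun x hx y hy => by
  have hρx := hρ.apply_mem_inf hx.1
  have hdy := hρ.defect_mem hy.2
  simp only [defect_mul, H.map_mul (hρ.defect_mem hx.2) (mul_mem (mul_mem hρx hdy) (inv_mem hρx)),
    H.map_conj hdy hρx]

end IsProjectionAlong

end Projection

section ProjectedElement

open scoped commutatorElement

variable {F : Type} [Group F] {S T : Subgroup F} {ρ : F →* F} {a : F}

local notation "ε" => MonoidAlgebra.of ℤ _

namespace IsProjectionAlong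

theorem of_codRestrict_sub_one_mem (hρ : IsProjectionAlong S T ρ)
    (ha : ε a - 1 ∈ mixedIdeal (S ⊓ T) S T) : ε (ρ.codRestrict T hρ.apply_mem a) - 1 ∈
      mixedIdeal ((S ⊓ T).subgroupOf T) ((S ⊓ T).subgroupOf T) ⊤ :=
  of_map_sub_one_mem_mixedIdeal (ρ := ρ.codRestrict T hρ.apply_mem)
    (fun _ hu => hρ.apply_mem_inf (Subgroup.mem_inf.1 hu).1) (fun _ => hρ.apply_mem_inf)
    (fun _ _ => Subgroup.mem_top _) ha

variable [S.Normal] [T.Normal]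

theorem apply_mem_commutator_commutator_of_mixedIdeal [IsFreeGroup T]
    (hρ : IsProjectionAlong S T ρ) (ha : ε a - 1 ∈ mixedIdeal (S ⊓ T) S T) :
    ρ a ∈ ⁅⁅S ⊓ T, S ⊓ T⁆, S ⊓ T⁆ := by
  have := Subgroup.mem_map_of_mem T.subtype
    (mem_commutator_commutator_of_cubic (hρ.of_codRestrict_sub_one_mem ha))
  simpa only [Subgroup.map_commutator, Subgroup.map_subgroupOf_eq_of_le inf_le_right,
    Subgroup.subtype_apply, MonoidHom.codRestrict_apply] using this

theorem apply_pow_three_mem [IsFreeGroup T] (hρ : IsProjectionAlong S T ρ)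
    (ha : ε a - 1 ∈ mixedIdeal (S ⊓ T) S T) :
    ρ a ^ 3 ∈ ⁅⁅⁅S ⊓ T, S ⊓ T⁆, S ⊓ T⁆, T⁆ := by
  have := Subgroup.mem_map_of_mem T.subtype
    (pow_three_mem_of_cubic (hρ.of_codRestrict_sub_one_mem ha))
  simpa only [Subgroup.map_commutator, Subgroup.map_subgroupOf_eq_of_le inf_le_right,
    ← MonoidHom.range_eq_map, Subgroup.range_subtype, map_pow, Subgroup.subtype_apply,
    MonoidHom.codRestrict_apply] using this

end IsProjectionAlong

end ProjectedElement

section DefectFunctional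

open scoped commutatorElement

variable {F : Type} [Group F] {S T : Subgroup F} [S.Normal] [T.Normal] {ρ : F →* F} {a : F}

local notation "ε" => MonoidAlgebra.of ℤ F

theorem apply_of_sub_one_eq_zero_of_cubic_left {M : Type*} [AddCommGroup M]
    (ha : ε a - 1 ∈ mixedIdeal (S ⊓ T) S T) {Ψ : MonoidAlgebra ℤ F →ₗ[ℤ] M}
    (h : ∀ s ∈ S, ∀ s' ∈ S, ∀ f, ∀ t ∈ T, Ψ ((ε s - 1) * (ε s' - 1) * ε f * (ε t - 1)) = 0) :
    Ψ (ε a - 1) = 0 := by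
  have h_mul (x : F) {s s' t : F} (hs : s ∈ S) (hs' : s' ∈ S) (f : F) (ht : t ∈ T) :
      Ψ ((ε x - 1) * (ε s - 1) * (ε s' - 1) * ε f * (ε t - 1)) = 0 := by
    rw [of_sub_one_mul_of_sub_one_mul_eq_sub, sub_mul, map_sub,
      h _ (‹S.Normal›.conj_mem s hs x) _ (‹S.Normal›.conj_mem s' hs' x) _ t ht,
      h s hs s' hs' f t ht, sub_zero]
  exact apply_of_sub_one_eq_zero ha (fun u _ _ hs _ hs' f _ ht => h_mul u hs hs' f ht)
    fun t _ _ hs _ hs' f _ hu => h_mul t hs hs' f hu.2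

namespace IsProjectionAlong

theorem map_defect_eq_zero {M : Type*} [AddCommGroup M] (hρ : IsProjectionAlong S T ρ)
    (ha : ε a - 1 ∈ mixedIdeal (S ⊓ T) S T) {η : F → M} (hη : AdditiveOn (S ⊓ T) η) :
    η (defect ρ a) = 0 := by
  have conj_mem (f : F) {t : F} (ht : t ∈ T) : ρ f * defect ρ t * (ρ f)⁻¹ ∈ S ⊓ T :=
    Subgroup.Normal.conj_mem inferInstance _ (hρ.defect_mem ht) _
  let D (t : F) : MonoidAlgebra ℤ F →ₗ[ℤ] M :=
    linearExtension fun f => η (ρ f * defect ρ t * (ρ f)⁻¹)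
  have hD (s t : T) (x) : D (s * t) x = D s x + D t (x * ε (s : F)) := by
    suffices h : D (s * t) = D s + D t ∘ₗ LinearMap.mulRight ℤ (ε (s : F)) from
      LinearMap.congr_fun h x
    refine linearMap_ext_of fun f => ?_
    simp only [D, LinearMap.add_apply, LinearMap.comp_apply, LinearMap.mulRight_apply, ← map_mul,
      linearExtension_of, conj_defect_mul]
    exact hη _ (conj_mem f s.2) _ (conj_mem _ t.2)
  have hD_zero {s t : F} (hs : s ∈ S) (ht : t ∈ T) (x) : D t ((ε s - 1) * x) = 0 := by
    have h_of (f : F) : D t (ε s * ε f) = D t (1 * ε f) := by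
      have h_conj : ρ (s * f) * defect ρ t * (ρ (s * f))⁻¹ =
          ρ s * (ρ f * defect ρ t * (ρ f)⁻¹) * (ρ s)⁻¹ := by
        rw [map_mul]
        group
      rw [one_mul, ← map_mul, linearExtension_of, linearExtension_of, h_conj,
        hη.map_conj (conj_mem f ht) (hρ.apply_mem_inf hs)]
    rw [sub_mul, map_sub, apply_mul_eq_of_forall_of h_of x, sub_self]
  obtain ⟨Ψ, hΨ⟩ := exists_functional_of_crossedHom (fun t : T => D t) hD
  have hΨa : Ψ (1 * (ε a - 1)) = η (defect ρ a) := by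
    have haT : a ∈ T := (mem_of_of_sub_one_mem_augI (mixedIdeal_le_augI ha)).2
    simpa [D] using hΨ ⟨a, haT⟩ 1
  rw [← hΨa, one_mul]
  refine apply_of_sub_one_eq_zero_of_cubic_left ha fun s hs s' _ f t ht => ?_
  rw [hΨ ⟨t, ht⟩, mul_assoc]
  exact hD_zero hs ht _

theorem mem_commutator_of_mixedIdeal [IsFreeGroup T] (hρ : IsProjectionAlong S T ρ)
    (ha : ε a - 1 ∈ mixedIdeal (S ⊓ T) S T) : a ∈ ⁅S ⊓ T, S ⊓ T⁆ := by
  have haU : a ∈ S ⊓ T := mem_of_of_sub_one_mem_augI (mixedIdeal_le_augI ha)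
  have h_defect : defect ρ a ∈ ⁅S ⊓ T, S ⊓ T⁆ :=
    mem_of_forall_additiveOn_eq_zero (Subgroup.commutator_le_self _) le_rfl
      (hρ.defect_mem haU.2) fun η hη _ => hρ.map_defect_eq_zero ha hη
  have h_apply : ρ a ∈ ⁅S ⊓ T, S ⊓ T⁆ :=
    Subgroup.commutator_mono (Subgroup.commutator_le_self _) le_rfl
      (hρ.apply_mem_commutator_commutator_of_mixedIdeal ha)
  rw [← defect_mul_apply ρ a]
  exact mul_mem h_defect h_apply

end IsProjectionAlong

end DefectFunctional

section BilinearFunctional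

open scoped commutatorElement

variable {F : Type} [Group F] {S T : Subgroup F} {ρ : F →* F}

theorem IsProjectionAlong.biadditiveOn_defect_add_apply {M : Type*} [AddCommGroup M]
    (hρ : IsProjectionAlong S T ρ) {l z : F → F → M} (hl : BiadditiveOn (S ⊓ T) (S ⊓ T) l)
    (hz : BiadditiveOn (S ⊓ T) (S ⊓ T) z) :
    BiadditiveOn (S ⊓ T) (S ⊓ T) fun p w => l (defect ρ p) w + z (ρ p) w where
  left w hw := (hρ.additiveOn_comp_defect (hl.left w hw)).add
    ((hz.left w hw).comp_hom ρ fun _ hp => hρ.apply_mem_inf hp.1)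
  right _ hp := (hl.right _ (hρ.defect_mem hp.2)).add (hz.right _ (hρ.apply_mem_inf hp.1))

theorem IsProjectionAlong.defect_form_sub_swap {M : Type*} [AddCommGroup M]
    (hρ : IsProjectionAlong S T ρ) {l z : F → F → M} (hz : BiadditiveOn (S ⊓ T) (S ⊓ T) z)
    (hz_swap : ∀ u ∈ S ⊓ T, ∀ v ∈ S ⊓ T, z v u = -z u v)
    (hl : ∀ u ∈ S ⊓ T, ∀ v ∈ S ⊓ T, l u v - l v u = z u v) {u v : F} (hu : u ∈ S ⊓ T)
    (hv : v ∈ S ⊓ T) :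
    (l (defect ρ u) (defect ρ v) + z (ρ u) (defect ρ v)) -
      (l (defect ρ v) (defect ρ u) + z (ρ v) (defect ρ u)) = z u v - z (ρ u) (ρ v) := by
  have hdu := hρ.defect_mem hu.2
  have hdv := hρ.defect_mem hv.2
  have hρu := hρ.apply_mem_inf hu.1
  have hρv := hρ.apply_mem_inf hv.1
  have hz_mul : z u v = z (defect ρ u * ρ u) (defect ρ v * ρ v) := by
    rw [defect_mul_apply, defect_mul_apply]
  rw [hz_mul, hz.map_mul_left hdu hρu (mul_mem hdv hρv), hz.map_mul_right hdu hdv hρv,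
    hz.map_mul_right hρu hdv hρv, hz_swap _ hdu _ hρv, ← hl _ hdu _ hdv]
  abel

variable [S.Normal] [T.Normal] {a : F}

local notation "ε" => MonoidAlgebra.of ℤ F
local notation "ℚ/ℤ" => AddCircle (1 : ℚ)

namespace IsProjectionAlong

theorem exists_bilinear_functional [IsFreeGroup T] (hρ : IsProjectionAlong S T ρ)
    {c : F → F → ℚ/ℤ} (hc : BiadditiveOn (S ⊓ T) (S ⊓ T) c)
    (hc_zero : ∀ p ∈ S ⊓ T, p ∈ ⁅S, S⁆ → ∀ w ∈ S ⊓ T, c p w = 0) :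
    ∃ Ψ : MonoidAlgebra ℤ F →ₗ[ℤ] ℚ/ℤ,
      (∀ s ∈ S, ∀ s' ∈ S, ∀ f, ∀ t ∈ T, Ψ ((ε s - 1) * (ε s' - 1) * ε f * (ε t - 1)) = 0) ∧
      ∀ p ∈ S ⊓ T, ∀ t ∈ T, Ψ ((ε p - 1) * (ε t - 1)) = c p (defect ρ t) := by
  have conj_mem (f : F) {t : F} (ht : t ∈ T) : ρ f * defect ρ t * (ρ f)⁻¹ ∈ S ⊓ T :=
    Subgroup.Normal.conj_mem inferInstance _ (hρ.defect_mem ht) _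
  let C (k : MonoidAlgebra ℤ F) (d : F → ℚ/ℤ) : Prop :=
    (∃ s ∈ S, ∃ s' ∈ S, ∃ f, k = (ε s - 1) * (ε s' - 1) * ε f ∧ d = fun _ => 0) ∨
      ∃ p ∈ S ⊓ T, ∃ f, k = (ε p - 1) * ε f ∧ d = fun t => c p (ρ f * defect ρ t * (ρ f)⁻¹)
  have hC : IsTranslationStable T C :=
    { map_one := by
        rintro k d (⟨s, -, s', -, f, rfl, rfl⟩ | ⟨p, hp, f, rfl, rfl⟩)
        · rfl
        · simp [(hc.right p hp).map_one]
      translate := by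
        rintro k d (⟨s, hs, s', hs', f, rfl, rfl⟩ | ⟨p, hp, f, rfl, rfl⟩) t ht
        · exact ⟨_, .inl ⟨s, hs, s', hs', f * t, by rw [mul_assoc, ← map_mul], rfl⟩, by simp⟩
        · refine ⟨_, .inr ⟨p, hp, f * t, by rw [mul_assoc, ← map_mul], rfl⟩, fun t' ht' => ?_⟩
          simp only [conj_defect_mul]
          exact hc.right p hp _ (conj_mem f ht) _ (conj_mem _ ht') }
  have hloc (t) (ht : t ∈ T) : ∃ g : MonoidAlgebra ℤ F →ₗ[ℤ] ℚ/ℤ, ∀ k d, C k d → g k = d t := by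
    choose φ hφ hφ_apply _ using fun k =>
      (hc.left _ (conj_mem k ht)).exists_extension inf_le_left
        (Subgroup.commutator_le_self S) le_rfl fun p hp hp' => hc_zero p hp hp' _ (conj_mem k ht)
    refine ⟨linearExtension (glueCosets S φ), ?_⟩
    rintro k d (⟨s, hs, s', hs', f, rfl, rfl⟩ | ⟨p, hp, f, rfl, rfl⟩)
    · exact linearExtension_glueCosets_of_quadraticOn (fun _ => .zero)
        (fun k => (hφ k).quadraticOn) hs hs' f
    · rw [linearExtension_glueCosets_of_additiveOn hφ hp.1, hφ_apply _ _ hp,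
        ← (hc.right p hp).map_conj (conj_mem _ ht) (hρ.apply_mem_inf (mul_cosetRep_inv_mem f))]
      simp only [map_mul, map_inv]
      group
  obtain ⟨Ψ, hΨ⟩ := hC.exists_functional hloc
  refine ⟨Ψ, fun s hs s' hs' f t ht => hΨ t ht _ _ (.inl ⟨s, hs, s', hs', f, rfl, rfl⟩),
    fun p hp t ht => ?_⟩
  simpa only [map_one, mul_one, one_mul, inv_one] using hΨ t ht _ _ (.inr ⟨p, hp, 1, rfl, rfl⟩)

theorem exists_functional_of_centralCharacter [IsFreeGroup S] [IsFreeGroup T]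
    (hρ : IsProjectionAlong S T ρ) {ξ : F → ℚ/ℤ}
    (hξ : IsCentralCharacter ⁅S ⊓ T, S ⊓ T⁆ (S ⊓ T) ξ)
    (hξ_zero : ∀ x ∈ ⁅⁅S, S⁆ ⊓ T, ⁅S, S⁆ ⊓ T⁆, ξ x = 0) :
    ∃ Ψ : MonoidAlgebra ℤ F →ₗ[ℤ] ℚ/ℤ,
      (∀ s ∈ S, ∀ s' ∈ S, ∀ f, ∀ t ∈ T, Ψ ((ε s - 1) * (ε s' - 1) * ε f * (ε t - 1)) = 0) ∧
      ∀ x ∈ ⁅S ⊓ T, S ⊓ T⁆, Ψ (ε x - 1) = ξ x - ξ (ρ x) := by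
  have h_le : ⁅S ⊓ T, S ⊓ T⁆ ≤ S ⊓ T := Subgroup.commutator_le_self _
  have hz := hξ.biadditiveOn le_rfl le_rfl le_rfl
  obtain ⟨l, hl, hl_zero, hl_swap⟩ := exists_biadditiveOn_sub_swap_eq (S := S) inf_le_left hz
    (fun u _ => by rw [commutatorElement_self, hξ.additiveOn.map_one]) fun u hu v hv hu' hv' =>
      hξ_zero _ (Subgroup.commutator_mem_commutator ⟨hu', hu.2⟩ ⟨hv', hv.2⟩)
  have hc_zero (p) (hp : p ∈ S ⊓ T) (hp' : p ∈ ⁅S, S⁆) (w) (hw : w ∈ S ⊓ T) :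
      l (defect ρ p) w + ξ ⁅ρ p, w⁆ = 0 := by
    have hρp := hρ.apply_mem_commutator hp'
    rw [hl_zero _ (hρ.defect_mem hp.2) _ hw (mul_mem hp' (inv_mem (commutator_inf_le hρp).1)),
      zero_add]
    exact (hz.left w hw).eq_zero_of_mem_commutator hρp
  obtain ⟨Ψ, hΨ_zero, hΨ⟩ :=
    hρ.exists_bilinear_functional (hρ.biadditiveOn_defect_add_apply hl hz) hc_zero
  have hΨ_comm (x) (hx : x ∈ ⁅S ⊓ T, S ⊓ T⁆) (y) (hy : y ∈ S ⊓ T) :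
      Ψ ((ε x - 1) * (ε y - 1)) = 0 := by
    rw [hΨ x (h_le hx) y hy.2,
      hc_zero x (h_le hx) (commutator_inf_le hx).1 _ (hρ.defect_mem hy.2)]
  refine ⟨Ψ, hΨ_zero, fun x hx => ?_⟩
  refine (additiveOn_apply_of_sub_one fun x hx y hy => hΨ_comm x hx y (h_le hy)).eqOn_commutator
    (hξ.additiveOn.sub (hξ.additiveOn.comp_hom ρ fun x hx =>
      hρ.apply_mem_commutator (commutator_inf_le hx).1)) le_rfl (fun u hu v hv => ?_) hx
  rw [apply_of_commutatorElement_sub_one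
    (hΨ_comm _ (Subgroup.commutator_mem_commutator hu hv) _ (mul_mem hv hu)),
    hΨ u hu v hv.2, hΨ v hv u hu.2, map_commutatorElement]
  refine hρ.defect_form_sub_swap hz (fun u hu v hv => ?_) hl_swap hu hv
  rw [← commutatorElement_inv,
    hξ.additiveOn.map_inv (Subgroup.commutator_mem_commutator hu hv)]

theorem mem_sup_of_mixedIdeal [IsFreeGroup S] [IsFreeGroup T] (hρ : IsProjectionAlong S T ρ)
    (ha : ε a - 1 ∈ mixedIdeal (S ⊓ T) S T) :
    a ∈ ⁅⁅S, S⁆ ⊓ T, ⁅S, S⁆ ⊓ T⁆ ⊔ ⁅⁅S ⊓ T, S ⊓ T⁆, S ⊓ T⁆ := by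
  have haU := hρ.mem_commutator_of_mixedIdeal ha
  have h_le : ⁅⁅S, S⁆ ⊓ T, ⁅S, S⁆ ⊓ T⁆ ⊔ ⁅⁅S ⊓ T, S ⊓ T⁆, S ⊓ T⁆ ≤ ⁅S ⊓ T, S ⊓ T⁆ :=
    sup_le (Subgroup.commutator_mono commutator_inf_le_inf commutator_inf_le_inf)
      (Subgroup.commutator_mono (Subgroup.commutator_le_self _) le_rfl)
  refine mem_of_forall_additiveOn_eq_zero h_le
    ((Subgroup.commutator_mono commutator_inf_le commutator_inf_le).trans le_sup_left)
    haU fun ξ hξ hξ_zero => ?_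
  obtain ⟨Ψ, hΨ_zero, hΨ⟩ := hρ.exists_functional_of_centralCharacter
    ⟨hξ, fun x hx => hξ_zero x (Subgroup.mem_sup_right hx)⟩
    fun x hx => hξ_zero x (Subgroup.mem_sup_left hx)
  have hξρ : ξ (ρ a) = 0 :=
    hξ_zero _ (Subgroup.mem_sup_right (hρ.apply_mem_commutator_commutator_of_mixedIdeal ha))
  have hΨa := hΨ a haU
  rw [apply_of_sub_one_eq_zero_of_cubic_left ha hΨ_zero, hξρ, sub_zero] at hΨa
  exact hΨa.symm

end IsProjectionAlong

end BilinearFunctional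

section SplitForm

open scoped commutatorElement

variable {F M : Type*} [Group F] [AddCommGroup M] {A : Subgroup F} {τ : F → F → F → M} {ρ : F →* F}
  {p q r w : F}

/-- The bilinear form on `A`, depending on `τ`, `ρ` and the parameter `w`, whose alternation is
`3 (τ p q w + τ (ρ p) (ρ q) w)`, see `IsJacobiForm.splitForm_sub_swap`. Its coefficients are chosen
so that `IsJacobiForm.three_smul_sub_splitForm` holds as well. -/
def splitForm (τ : F → F → F → M) (ρ : F →* F) (w p q : F) : M :=
  τ p w q - (2 : ℤ) • τ q w p - τ p w (ρ q) - τ (ρ q) w p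
    - τ (ρ p) w q - τ q w (ρ p) + τ (ρ p) w (ρ q) - (2 : ℤ) • τ (ρ q) w (ρ p)

namespace IsJacobiForm

theorem permutations (h : IsJacobiForm A τ) (hp : p ∈ A) (hq : q ∈ A) (hr : r ∈ A) :
    τ q p r = -τ p q r ∧ τ r q p = -τ q r p ∧ τ r p q = -τ p q r - τ q r p ∧
      τ p r q = τ p q r + τ q r p := by
  refine ⟨h.swap p hp q hq r hr, h.swap q hq r hr p hp, h.rotate hp hq hr, ?_⟩
  rw [h.swap r hr p hp q hq, h.rotate hp hq hr]
  abel

variable (h : IsJacobiForm A τ) (hρ : ∀ u ∈ A, ρ u ∈ A)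
include h hρ

theorem biadditiveOn_splitForm (hw : w ∈ A) : BiadditiveOn A A (splitForm τ ρ w) where
  left q hq := by
    have left {q} (hq : q ∈ A) := h.additiveOn_left w hw q hq
    have right {q} (hq : q ∈ A) := h.additiveOn_right q hq w hw
    exact (left hq).sub ((right hq).smul 2) |>.sub (left (hρ q hq)) |>.sub (right (hρ q hq))
      |>.sub ((left hq).comp_hom ρ hρ) |>.sub ((right hq).comp_hom ρ hρ)
      |>.add ((left (hρ q hq)).comp_hom ρ hρ) |>.sub (((right (hρ q hq)).smul 2).comp_hom ρ hρ)
  right p hp := by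
    have left {p} (hp : p ∈ A) := h.additiveOn_left w hw p hp
    have right {p} (hp : p ∈ A) := h.additiveOn_right p hp w hw
    exact (right hp).sub ((left hp).smul 2) |>.sub ((right hp).comp_hom ρ hρ)
      |>.sub ((left hp).comp_hom ρ hρ) |>.sub (right (hρ p hp)) |>.sub (left (hρ p hp))
      |>.add ((right (hρ p hp)).comp_hom ρ hρ) |>.sub (((left (hρ p hp)).comp_hom ρ hρ).smul 2)

theorem additiveOn_splitForm (hp : p ∈ A) (hq : q ∈ A) :
    AdditiveOn A fun w => splitForm τ ρ w p q := by
  have middle {p q} (hp : p ∈ A) (hq : q ∈ A) := h.additiveOn_middle hp hq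
  have hP := hρ p hp
  have hQ := hρ q hq
  exact (middle hp hq).sub ((middle hq hp).smul 2) |>.sub (middle hp hQ) |>.sub (middle hQ hp)
    |>.sub (middle hP hq) |>.sub (middle hq hP) |>.add (middle hP hQ)
    |>.sub ((middle hQ hP).smul 2)

theorem splitForm_sub_swap (hp : p ∈ A) (hq : q ∈ A) (hw : w ∈ A) :
    splitForm τ ρ w p q - splitForm τ ρ w q p =
      (3 : ℤ) • τ p q w + (3 : ℤ) • τ (ρ p) (ρ q) w := by
  obtain ⟨-, -, -, a⟩ := h.permutations hp hq hw
  obtain ⟨-, -, -, b⟩ := h.permutations (hρ p hp) hq hw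
  obtain ⟨-, -, -, c⟩ := h.permutations hp (hρ q hq) hw
  obtain ⟨-, -, -, d⟩ := h.permutations (hρ p hp) (hρ q hq) hw
  simp only [splitForm, a, b, c, d]
  abel

theorem splitForm_left_eq_zero (hp : p ∈ A) (hτp : ∀ x ∈ A, ∀ y ∈ A, τ p x y = 0)
    (hτρp : ∀ x ∈ A, ∀ y ∈ A, τ (ρ p) x y = 0) (hq : q ∈ A) (hw : w ∈ A) :
    splitForm τ ρ w p q = 0 := by
  simp only [splitForm, hτp w hw _ hq, hτp w hw _ (hρ q hq), hτρp w hw _ hq,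
    hτρp w hw _ (hρ q hq), h.apply_right_eq_zero hp hτp hq hw,
    h.apply_right_eq_zero hp hτp (hρ q hq) hw, h.apply_right_eq_zero (hρ p hp) hτρp hq hw,
    h.apply_right_eq_zero (hρ p hp) hτρp (hρ q hq) hw, smul_zero, sub_zero, add_zero]

theorem splitForm_right_eq_zero (hq : q ∈ A) (hτq : ∀ x ∈ A, ∀ y ∈ A, τ q x y = 0)
    (hτρq : ∀ x ∈ A, ∀ y ∈ A, τ (ρ q) x y = 0) (hp : p ∈ A) (hw : w ∈ A) :
    splitForm τ ρ w p q = 0 := by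
  simp only [splitForm, hτq w hw _ hp, hτq w hw _ (hρ p hp), hτρq w hw _ hp,
    hτρq w hw _ (hρ p hp), h.apply_right_eq_zero hq hτq hp hw,
    h.apply_right_eq_zero hq hτq (hρ p hp) hw, h.apply_right_eq_zero (hρ q hq) hτρq hp hw,
    h.apply_right_eq_zero (hρ q hq) hτρq (hρ p hp) hw, smul_zero, sub_zero, add_zero]

theorem three_smul_sub_splitForm (hp : p ∈ A) (hq : q ∈ A) (hr : r ∈ A) :
    (3 : ℤ) • τ p q (defect ρ r) + (3 : ℤ) • τ (ρ p) (ρ q) (defect ρ r) -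
        (splitForm τ ρ (defect ρ q) r p - splitForm τ ρ (defect ρ p) r q) =
      (6 : ℤ) • τ p q r - (6 : ℤ) • τ (ρ p) (ρ q) (ρ r) := by
  have hP := hρ p hp
  have hQ := hρ q hq
  have hR := hρ r hr
  have map_defect {g : F → M} (hg : AdditiveOn A g) {x : F} (hx : x ∈ A) :
      g (defect ρ x) = g x - g (ρ x) := by
    rw [defect, hg.map_mul hx (inv_mem (hρ x hx)), hg.map_inv (hρ x hx), sub_eq_add_neg]
  rw [map_defect (h.additiveOn_right p hp q hq) hr, map_defect (h.additiveOn_right _ hP _ hQ) hr,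
    map_defect (h.additiveOn_splitForm hρ hr hp) hq,
    map_defect (h.additiveOn_splitForm hρ hr hq) hp]
  obtain ⟨a₁, a₂, a₃, -⟩ := h.permutations hp hq hr
  obtain ⟨b₁, b₂, b₃, -⟩ := h.permutations hP hq hr
  obtain ⟨c₁, c₂, c₃, -⟩ := h.permutations hp hQ hr
  obtain ⟨d₁, d₂, d₃, -⟩ := h.permutations hP hQ hr
  obtain ⟨a₅, a₆, a₇, -⟩ := h.permutations hp hq hR
  obtain ⟨b₅, b₆, b₇, -⟩ := h.permutations hP hq hR
  obtain ⟨c₅, c₆, c₇, -⟩ := h.permutations hp hQ hR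
  obtain ⟨d₅, d₆, d₇, -⟩ := h.permutations hP hQ hR
  simp only [splitForm, a₁, a₂, a₃, b₁, b₂, b₃, c₁, c₂, c₃, d₁, d₂, d₃, a₅, a₆, a₇, b₅, b₆, b₇,
    c₅, c₆, c₇, d₅, d₆, d₇]
  abel

end IsJacobiForm

end SplitForm

section QuadraticFunctional

open scoped commutatorElement

variable {F M : Type*} [Group F] [AddCommGroup M] {S : Subgroup F} [S.Normal] {b : F → F → M}
  {φ : F → M}

local notation "ε" => MonoidAlgebra.of ℤ F

theorem QuadraticOn.apply_cosetRep_inv_mul (hφ : QuadraticOn S b φ) {s : F} (hs : s ∈ S) (f : F) :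
    φ ((cosetRep S (s * f))⁻¹ * (s * f)) =
      φ ((cosetRep S f)⁻¹ * f) + φ (f⁻¹ * s * f) + b ((cosetRep S f)⁻¹ * f) (f⁻¹ * s * f) := by
  have h_mul : (cosetRep S f)⁻¹ * (s * f) = (cosetRep S f)⁻¹ * f * (f⁻¹ * s * f) := by group
  rw [cosetRep_mul_of_mem_left hs, h_mul, hφ _ (cosetRep_inv_mul_mem S f) _
    (by simpa using ‹S.Normal›.conj_mem s hs f⁻¹)]

theorem QuadraticOn.exists_functional (hφ : QuadraticOn S b φ) (hb : BiadditiveOn S S b) :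
    ∃ g : MonoidAlgebra ℤ F →ₗ[ℤ] M,
      (∀ s ∈ S, ∀ s' ∈ S, ∀ f,
        g ((ε s - 1) * (ε s' - 1) * ε f) = b (f⁻¹ * s * f) (f⁻¹ * s' * f)) ∧
      ∀ u ∈ ⁅S, S⁆, ∀ f, g ((ε u - 1) * ε f) = φ (f⁻¹ * u * f) := by
  have conj_mem {s : F} (hs : s ∈ S) (f : F) : f⁻¹ * s * f ∈ S := by
    simpa using ‹S.Normal›.conj_mem s hs f⁻¹
  refine ⟨linearExtension fun f => φ ((cosetRep S f)⁻¹ * f), fun s hs s' hs' f => ?_,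
    fun u hu f => ?_⟩
  · have h_expand : (ε s - 1) * (ε s' - 1) * ε f =
        ε (s * s' * f) - ε (s * f) - (ε (s' * f) - ε f) := by
      simp only [map_mul]
      noncomm_ring
    have h_conj : f⁻¹ * (s * s') * f = f⁻¹ * s * f * (f⁻¹ * s' * f) := by group
    simp only [h_expand, map_sub, linearExtension_of, hφ.apply_cosetRep_inv_mul (S.mul_mem hs hs'),
      hφ.apply_cosetRep_inv_mul hs, hφ.apply_cosetRep_inv_mul hs', h_conj]
    rw [hφ _ (conj_mem hs f) _ (conj_mem hs' f),
      hb.map_mul_right (cosetRep_inv_mul_mem S f) (conj_mem hs f) (conj_mem hs' f)]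
    abel
  · have hu' : f⁻¹ * u * f ∈ ⁅S, S⁆ := by
      simpa using (inferInstance : ⁅S, S⁆.Normal).conj_mem u hu f⁻¹
    rw [sub_mul, one_mul, ← map_mul, map_sub, linearExtension_of, linearExtension_of,
      hφ.apply_cosetRep_inv_mul (Subgroup.commutator_le_self S hu),
      (hb.right _ (cosetRep_inv_mul_mem S f)).eq_zero_of_mem_commutator hu']
    abel

end QuadraticFunctional

section CommutatorPairing

open scoped commutatorElement

/-- The pairing of `⁅S, S⁆ ⊓ T` with `S ⊓ T` that is required of a bilinear form on `S` with values
`splitForm` on `S ⊓ T`, as an alternation on commutators. -/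
def commutatorPairing {F M : Type*} [Group F] [AddCommGroup M] (χ : F → M) (ρ : F →* F)
    (u w : F) : M :=
  (3 : ℤ) • χ ⁅u, w⁆ + (3 : ℤ) • χ ⁅ρ u, w⁆

variable {F M : Type*} [Group F] [AddCommGroup M] {S T : Subgroup F} {ρ : F →* F} {χ : F → M}

theorem IsCentralCharacter.commutatorPairing_eq_zero (hχ : IsCentralCharacter (⁅⁅S, S⁆, S⁆ ⊓ T) T χ)
    (hρ : IsProjectionAlong S T ρ) {u w : F} (hu : u ∈ ⁅⁅S, S⁆, S⁆ ⊓ T) (hw : w ∈ T) :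
    commutatorPairing χ ρ u w = 0 := by
  have hρu : ρ u ∈ ⁅⁅S, S⁆, S⁆ ⊓ T :=
    ⟨Subgroup.commutator_mono (Subgroup.commutator_mono inf_le_left inf_le_left) inf_le_left
      (hρ.apply_mem_commutator_commutator hu.1), hρ.apply_mem u⟩
  rw [commutatorPairing, hχ.map_commutator _ (Subgroup.commutator_mem_commutator hu hw),
    hχ.map_commutator _ (Subgroup.commutator_mem_commutator hρu hw), smul_zero, add_zero]

variable [S.Normal] [T.Normal]

theorem commutator_inf_commutator_le : ⁅⁅S, S⁆ ⊓ T, S ⊓ T⁆ ≤ ⁅⁅S, S⁆, S⁆ ⊓ T :=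
  le_inf (Subgroup.commutator_mono inf_le_left inf_le_left)
    ((Subgroup.commutator_le_right _ _).trans inf_le_right)

namespace IsCentralCharacter

theorem biadditiveOn_inf (hχ : IsCentralCharacter (⁅⁅S, S⁆, S⁆ ⊓ T) T χ) :
    BiadditiveOn (⁅S, S⁆ ⊓ T) (S ⊓ T) fun x y => χ ⁅x, y⁆ :=
  hχ.biadditiveOn inf_le_right inf_le_right commutator_inf_commutator_le

theorem isJacobiForm_inf (hχ : IsCentralCharacter (⁅⁅S, S⁆, S⁆ ⊓ T) T χ) :
    IsJacobiForm (S ⊓ T) fun p q r => χ ⁅⁅p, q⁆, r⁆ :=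
  hχ.isJacobiForm inf_le_right inf_le_right commutator_inf_le commutator_inf_commutator_le

theorem apply_commutatorElement_eq_zero (hχ : IsCentralCharacter (⁅⁅S, S⁆, S⁆ ⊓ T) T χ) {u v : F}
    (hu : u ∈ ⁅S, S⁆ ⊓ T) (hv : v ∈ ⁅S ⊓ T, S ⊓ T⁆) : χ ⁅u, v⁆ = 0 :=
  (hχ.biadditiveOn_inf.right u hu).eq_zero_of_mem_commutator hv

theorem biadditiveOn_commutatorPairing (hχ : IsCentralCharacter (⁅⁅S, S⁆, S⁆ ⊓ T) T χ)
    (hρ : IsProjectionAlong S T ρ) :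
    BiadditiveOn (⁅S, S⁆ ⊓ T) (S ⊓ T) (commutatorPairing χ ρ) := by
  have hρ_mem (u) (hu : u ∈ ⁅S, S⁆ ⊓ T) : ρ u ∈ ⁅S, S⁆ ⊓ T :=
    commutator_inf_le (hρ.apply_mem_commutator hu.1)
  have hb := hχ.biadditiveOn_inf
  exact ⟨fun w hw => ((hb.left w hw).smul 3).add (((hb.left w hw).smul 3).comp_hom ρ hρ_mem),
    fun u hu => ((hb.right u hu).smul 3).add ((hb.right _ (hρ_mem u hu)).smul 3)⟩

theorem commutatorPairing_conj (hχ : IsCentralCharacter (⁅⁅S, S⁆, S⁆ ⊓ T) T χ)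
    (hρ : IsProjectionAlong S T ρ) {t u w : F} (ht : t ∈ T) (hu : u ∈ ⁅S, S⁆ ⊓ T)
    (hw : w ∈ S ⊓ T) :
    commutatorPairing χ ρ u (ρ t * w * (ρ t)⁻¹) = commutatorPairing χ ρ (t⁻¹ * u * t) w := by
  have hu' : t⁻¹ * u * t ∈ ⁅S, S⁆ ⊓ T := by
    simpa using (inferInstance : (⁅S, S⁆ ⊓ T).Normal).conj_mem u hu t⁻¹
  have hw' : ρ t * w * (ρ t)⁻¹ ∈ S ⊓ T := (inferInstance : (S ⊓ T).Normal).conj_mem w hw _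
  have map_conj {v : F} (hv : v ∈ ⁅S, S⁆ ⊓ T) :
      χ ⁅ρ t * v * (ρ t)⁻¹, ρ t * w * (ρ t)⁻¹⁆ = χ ⁅v, w⁆ := by
    rw [← conjugate_commutatorElement, hχ.map_conj (commutator_inf_commutator_le
      (Subgroup.commutator_mem_commutator hv hw)) (hρ.apply_mem t)]
  have h_conj : ρ t * (t⁻¹ * u * t) * (ρ t)⁻¹ = (defect ρ t)⁻¹ * u * (defect ρ t)⁻¹⁻¹ := by
    rw [defect]
    group
  have h_conj' : ρ t * ρ (t⁻¹ * u * t) * (ρ t)⁻¹ = ρ u := by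
    simp only [map_mul, map_inv]
    group
  rw [commutatorPairing, commutatorPairing, ← map_conj hu',
    ← map_conj (commutator_inf_le (hρ.apply_mem_commutator hu'.1)), h_conj, h_conj',
    hχ.map_commutatorElement_conj_left inf_le_right inf_le_right commutator_inf_commutator_le hu hw'
      (inv_mem (hρ.defect_mem ht))]

theorem splitForm_conj (hχ : IsCentralCharacter (⁅⁅S, S⁆, S⁆ ⊓ T) T χ)
    (hρ : IsProjectionAlong S T ρ) {t p q w : F} (ht : t ∈ T) (hp : p ∈ S ⊓ T) (hq : q ∈ S ⊓ T)
    (hw : w ∈ S ⊓ T) :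
    splitForm (fun p q r => χ ⁅⁅p, q⁆, r⁆) ρ (ρ t * w * (ρ t)⁻¹) p q =
      splitForm (fun p q r => χ ⁅⁅p, q⁆, r⁆) ρ w (t⁻¹ * p * t) (t⁻¹ * q * t) := by
  let R (x x' : F) : Prop :=
    x ∈ S ⊓ T ∧ x' ∈ S ⊓ T ∧ ∃ g ∈ S ⊓ T, ρ t * x' * (ρ t)⁻¹ = g * x * g⁻¹
  have hR {u : F} (hu : u ∈ S ⊓ T) : R u (t⁻¹ * u * t) := by
    refine ⟨hu, by simpa using (inferInstance : (S ⊓ T).Normal).conj_mem u hu t⁻¹,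
      (defect ρ t)⁻¹, inv_mem (hρ.defect_mem ht), ?_⟩
    rw [defect]
    group
  have hRρ {u : F} (hu : u ∈ S ⊓ T) : R (ρ u) (ρ (t⁻¹ * u * t)) := by
    refine ⟨hρ.apply_mem_inf hu.1, hρ.apply_mem_inf (hR hu).2.1.1, 1, one_mem _, ?_⟩
    simp only [map_mul, map_inv]
    group
  have h_conj {x x' y y' : F} (hx : R x x') (hy : R y y') :
      χ ⁅⁅x, ρ t * w * (ρ t)⁻¹⁆, y⁆ = χ ⁅⁅x', w⁆, y'⁆ := by
    obtain ⟨hx, hx', g, hg, hgx⟩ := hx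
    obtain ⟨hy, hy', k, hk, hky⟩ := hy
    have hw' : ρ t * w * (ρ t)⁻¹ ∈ S ⊓ T := (inferInstance : (S ⊓ T).Normal).conj_mem w hw _
    have hgx_mem : g * x * g⁻¹ ∈ S ⊓ T := mul_mem (mul_mem hg hx) (inv_mem hg)
    have hn : ⁅⁅x', w⁆, y'⁆ ∈ ⁅⁅S, S⁆, S⁆ ⊓ T := commutator_inf_commutator_le <|
      Subgroup.commutator_mem_commutator
        (commutator_inf_le (Subgroup.commutator_mem_commutator hx' hw)) hy'
    rw [← hχ.map_conj_commutator hn (hρ.apply_mem t), hgx, hky,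
      (hχ.isJacobiForm_inf.additiveOn_right _ hgx_mem _ hw').map_conj hy hk,
      (hχ.isJacobiForm_inf.additiveOn_left _ hw' _ hy).map_conj hx hg]
  simp only [splitForm, h_conj (hR hp) (hR hq), h_conj (hR hp) (hRρ hq), h_conj (hRρ hp) (hR hq),
    h_conj (hRρ hp) (hRρ hq), h_conj (hR hq) (hR hp), h_conj (hRρ hq) (hR hp),
    h_conj (hR hq) (hRρ hp), h_conj (hRρ hq) (hRρ hp)]

end IsCentralCharacter

end CommutatorPairing

section TrilinearFunctional

open scoped commutatorElement

variable {F : Type*} [Group F] {S T : Subgroup F} [S.Normal] [T.Normal] {ρ : F →* F}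

local notation "ε" => MonoidAlgebra.of ℤ F
local notation "ℚ/ℤ" => AddCircle (1 : ℚ)

variable {χ : F → ℚ/ℤ}

namespace IsCentralCharacter

theorem exists_quadraticOn_splitForm [IsFreeGroup S]
    (hχ : IsCentralCharacter (⁅⁅S, S⁆, S⁆ ⊓ T) T χ) (hρ : IsProjectionAlong S T ρ) {w : F}
    (hw : w ∈ S ⊓ T) : ∃ b : F → F → ℚ/ℤ, ∃ φ : F → ℚ/ℤ, BiadditiveOn S S b ∧ QuadraticOn S b φ ∧
      (∀ u ∈ ⁅S, S⁆ ⊓ T, φ u = commutatorPairing χ ρ u w) ∧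
      ∀ p ∈ S ⊓ T, ∀ q ∈ S ⊓ T, b p q = splitForm (fun p q r => χ ⁅⁅p, q⁆, r⁆) ρ w p q := by
  have hτ := hχ.isJacobiForm_inf
  have hρU (u) (hu : u ∈ S ⊓ T) : ρ u ∈ S ⊓ T := hρ.apply_mem_inf hu.1
  have hSS : ⁅S, S⁆ ≤ S := Subgroup.commutator_le_self S
  have τ_eq_zero {v : F} (hv : v ∈ ⁅S, S⁆ ⊓ T) (x) (hx : x ∈ S ⊓ T) (y) (hy : y ∈ S ⊓ T) :
      χ ⁅⁅v, x⁆, y⁆ = 0 :=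
    hχ.map_commutator _ <| Subgroup.commutator_mem_commutator (commutator_inf_commutator_le
      (Subgroup.commutator_mem_commutator hv hx)) hy.2
  have hρV {v : F} (hv : v ∈ ⁅S, S⁆) : ρ v ∈ ⁅S, S⁆ ⊓ T :=
    commutator_inf_le (hρ.apply_mem_commutator hv)
  obtain ⟨e, he, he_apply, he_zero⟩ :=
    ((hχ.biadditiveOn_commutatorPairing hρ).left w hw).exists_extension inf_le_left
      (Subgroup.commutator_le_left ⁅S, S⁆ S) (Subgroup.commutator_mono le_rfl hSS)
      fun u hu hu' => hχ.commutatorPairing_eq_zero hρ ⟨hu', hu.2⟩ hw.2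
  have he_comm : BiadditiveOn S S fun x y => e ⁅x, y⁆ :=
    (⟨he, he_zero⟩ : IsCentralCharacter ⁅S, S⁆ S e).biadditiveOn le_rfl le_rfl le_rfl
  obtain ⟨b, hb, hb_swap, hb_apply⟩ := exists_biadditiveOn_extension inf_le_left he_comm
    (fun x _ => by rw [commutatorElement_self, he.map_one]) (hτ.biadditiveOn_splitForm hρU hw)
    (fun x hx y hy hx' => hτ.splitForm_left_eq_zero hρU hx (τ_eq_zero ⟨hx', hx.2⟩)
      (τ_eq_zero (hρV hx')) hy hw)
    (fun x hx y hy hy' => hτ.splitForm_right_eq_zero hρU hy (τ_eq_zero ⟨hy', hy.2⟩)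
      (τ_eq_zero (hρV hy')) hx hw)
    fun x hx y hy => by
      rw [hτ.splitForm_sub_swap hρU hx hy hw, he_apply _
        (commutator_inf_le (Subgroup.commutator_mem_commutator hx hy)), commutatorPairing,
        map_commutatorElement]
  obtain ⟨φ, hφ, hφe⟩ := exists_quadraticOn_eqOn_commutator hb he fun x hx y hy => hb_swap x hx y hy
  exact ⟨b, φ, hb, hφ, fun u hu => by rw [hφe u hu.1, he_apply u hu], hb_apply⟩

theorem exists_local_functional [IsFreeGroup S]
    (hχ : IsCentralCharacter (⁅⁅S, S⁆, S⁆ ⊓ T) T χ) (hρ : IsProjectionAlong S T ρ) {w : F}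
    (hw : w ∈ S ⊓ T) : ∃ g : MonoidAlgebra ℤ F →ₗ[ℤ] ℚ/ℤ,
      (∀ x, ∀ s ∈ S, ∀ s' ∈ S, ∀ f, g ((ε x - 1) * (ε s - 1) * (ε s' - 1) * ε f) = 0) ∧
      (∀ u ∈ ⁅S, S⁆ ⊓ T, ∀ f,
        g ((ε u - 1) * ε f) = commutatorPairing χ ρ (f⁻¹ * u * f) w) ∧
      ∀ p ∈ S ⊓ T, ∀ q ∈ S ⊓ T, ∀ f, g ((ε p - 1) * (ε q - 1) * ε f) =
        splitForm (fun p q r => χ ⁅⁅p, q⁆, r⁆) ρ w (f⁻¹ * p * f) (f⁻¹ * q * f) := by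
  obtain ⟨b, φ, hb, hφ, hφ_apply, hb_apply⟩ := hχ.exists_quadraticOn_splitForm hρ hw
  obtain ⟨g, hg_mul, hg⟩ := hφ.exists_functional hb
  have conj_mem {N : Subgroup F} [N.Normal] {u : F} (hu : u ∈ N) (f : F) : f⁻¹ * u * f ∈ N := by
    simpa using ‹N.Normal›.conj_mem u hu f⁻¹
  refine ⟨g, fun x s hs s' hs' f => ?_,
    fun u hu f => by rw [hg u hu.1, hφ_apply _ (conj_mem hu f)],
    fun p hp q hq f => by
      rw [hg_mul p hp.1 q hq.1, hb_apply _ (conj_mem hp f) _ (conj_mem hq f)]⟩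
  have h_conj (s : F) : (x * f)⁻¹ * (x * s * x⁻¹) * (x * f) = f⁻¹ * s * f := by group
  rw [of_sub_one_mul_of_sub_one_mul_eq_sub, map_sub,
    hg_mul _ (‹S.Normal›.conj_mem s hs x) _ (‹S.Normal›.conj_mem s' hs' x), hg_mul s hs s' hs',
    h_conj, h_conj, sub_self]

end IsCentralCharacter

/-- `Ψ` annihilates the products of four factors from `F`, `S`, `S`, `T`, and is given by the
commutator pairing and the split form of `χ` on the products with a factor from `⁅S, S⁆ ⊓ T` or two
factors from `S ⊓ T` in place of the first three. -/
structure IsTrilinearFunctional {M : Type*} [AddCommGroup M] (S T : Subgroup F) (χ : F → M)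
    (ρ : F →* F) (Ψ : MonoidAlgebra ℤ F →ₗ[ℤ] M) : Prop where
  cubic : ∀ x, ∀ s ∈ S, ∀ s' ∈ S, ∀ f, ∀ t ∈ T,
    Ψ ((ε x - 1) * (ε s - 1) * (ε s' - 1) * ε f * (ε t - 1)) = 0
  pairing : ∀ u ∈ ⁅S, S⁆ ⊓ T, ∀ t ∈ T,
    Ψ ((ε u - 1) * (ε t - 1)) = commutatorPairing χ ρ u (defect ρ t)
  split : ∀ p ∈ S ⊓ T, ∀ q ∈ S ⊓ T, ∀ t ∈ T, Ψ ((ε p - 1) * (ε q - 1) * (ε t - 1)) =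
    splitForm (fun p q r => χ ⁅⁅p, q⁆, r⁆) ρ (defect ρ t) p q

/-- The values `c t` on `k * (t - 1)`, for `t ∈ T`, that are prescribed for a functional
satisfying `IsTrilinearFunctional`, in a form closed under translation by `T`. -/
inductive TrilinearConstraint (S T : Subgroup F) (χ : F → ℚ/ℤ) (ρ : F →* F) :
    MonoidAlgebra ℤ F → (F → ℚ/ℤ) → Prop
  | cubic (x : F) {s s' : F} (hs : s ∈ S) (hs' : s' ∈ S) (f : F) :
    TrilinearConstraint S T χ ρ ((ε x - 1) * (ε s - 1) * (ε s' - 1) * ε f) fun _ => 0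
  | pairing {u : F} (hu : u ∈ ⁅S, S⁆ ⊓ T) (f : F) :
    TrilinearConstraint S T χ ρ ((ε u - 1) * ε f) fun t =>
      commutatorPairing χ ρ (f⁻¹ * u * f) (defect ρ t)
  | split {p q : F} (hp : p ∈ S ⊓ T) (hq : q ∈ S ⊓ T) (f : F) :
    TrilinearConstraint S T χ ρ ((ε p - 1) * (ε q - 1) * ε f) fun t =>
      splitForm (fun p q r => χ ⁅⁅p, q⁆, r⁆) ρ (defect ρ t) (f⁻¹ * p * f) (f⁻¹ * q * f)

namespace IsCentralCharacter

theorem isTranslationStable_trilinearConstraint (hχ : IsCentralCharacter (⁅⁅S, S⁆, S⁆ ⊓ T) T χ)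
    (hρ : IsProjectionAlong S T ρ) : IsTranslationStable T (TrilinearConstraint S T χ ρ) := by
  have conj_mem {N : Subgroup F} [N.Normal] {u : F} (hu : u ∈ N) (f : F) : f⁻¹ * u * f ∈ N := by
    simpa using ‹N.Normal›.conj_mem u hu f⁻¹
  have conj_mul (f t u : F) : (f * t)⁻¹ * u * (f * t) = t⁻¹ * (f⁻¹ * u * f) * t := by group
  have hw_mem {s t : F} (ht : t ∈ T) : ρ s * defect ρ t * (ρ s)⁻¹ ∈ S ⊓ T :=
    (inferInstance : (S ⊓ T).Normal).conj_mem _ (hρ.defect_mem ht) _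
  have hpair {u : F} (hu : u ∈ ⁅S, S⁆ ⊓ T) := (hχ.biadditiveOn_commutatorPairing hρ).right u hu
  have hsplit {p q : F} (hp : p ∈ S ⊓ T) (hq : q ∈ S ⊓ T) :=
    hχ.isJacobiForm_inf.additiveOn_splitForm (fun u hu => hρ.apply_mem_inf hu.1) hp hq
  constructor
  · rintro k c (⟨x, hs, hs', f⟩ | ⟨hu, f⟩ | ⟨hp, hq, f⟩)
    · rfl
    · simpa using (hpair (conj_mem hu f)).map_one
    · simpa using (hsplit (conj_mem hp f) (conj_mem hq f)).map_one
  · rintro k c (⟨x, hs, hs', f⟩ | ⟨hu, f⟩ | ⟨hp, hq, f⟩) t ht <;>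
      simp only [mul_assoc _ (ε f), ← map_mul]
    · exact ⟨_, .cubic x hs hs' (f * t), by simp⟩
    · refine ⟨_, .pairing hu (f * t), fun t' ht' => ?_⟩
      rw [defect_mul, conj_mul, (hpair (conj_mem hu f)).map_mul (hρ.defect_mem ht) (hw_mem ht'),
        hχ.commutatorPairing_conj hρ ht (conj_mem hu f) (hρ.defect_mem ht')]
    · refine ⟨_, .split hp hq (f * t), fun t' ht' => ?_⟩
      rw [defect_mul, conj_mul, conj_mul,
        (hsplit (conj_mem hp f) (conj_mem hq f)).map_mul (hρ.defect_mem ht) (hw_mem ht'),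
        hχ.splitForm_conj hρ ht (conj_mem hp f) (conj_mem hq f) (hρ.defect_mem ht')]

theorem exists_isTrilinearFunctional [IsFreeGroup S] [IsFreeGroup T]
    (hχ : IsCentralCharacter (⁅⁅S, S⁆, S⁆ ⊓ T) T χ) (hρ : IsProjectionAlong S T ρ) :
    ∃ Ψ, IsTrilinearFunctional S T χ ρ Ψ := by
  have hloc (t) (ht : t ∈ T) : ∃ g : MonoidAlgebra ℤ F →ₗ[ℤ] ℚ/ℤ,
      ∀ k c, TrilinearConstraint S T χ ρ k c → g k = c t := by
    obtain ⟨g, h_cubic, h_pairing, h_split⟩ := hχ.exists_local_functional hρ (hρ.defect_mem ht)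
    refine ⟨g, ?_⟩
    rintro k c (⟨x, hs, hs', f⟩ | ⟨hu, f⟩ | ⟨hp, hq, f⟩)
    exacts [h_cubic x _ hs _ hs' f, h_pairing _ hu f, h_split _ hp _ hq f]
  obtain ⟨Ψ, hΨ⟩ := (hχ.isTranslationStable_trilinearConstraint hρ).exists_functional hloc
  refine ⟨Ψ, fun x s hs s' hs' f t ht => hΨ t ht _ _ (.cubic x hs hs' f), fun u hu t ht => ?_,
    fun p hp q hq t ht => ?_⟩
  · simpa only [map_one, mul_one, one_mul, inv_one] using hΨ t ht _ _ (.pairing hu 1)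
  · simpa only [map_one, mul_one, one_mul, inv_one] using hΨ t ht _ _ (.split hp hq 1)

end IsCentralCharacter

end TrilinearFunctional

section SixfoldCharacter

open scoped commutatorElement

variable {F : Type*} [Group F] {S T : Subgroup F} [S.Normal] [T.Normal] {ρ : F →* F}

local notation "ε" => MonoidAlgebra.of ℤ F

namespace IsCentralCharacter

variable {M : Type*} [AddCommGroup M] {χ : F → M} (hχ : IsCentralCharacter (⁅⁅S, S⁆, S⁆ ⊓ T) T χ)
  (hρ : IsProjectionAlong S T ρ)
include hχ

theorem apply_commutatorElement_swap {x r : F} (hx : x ∈ ⁅S, S⁆ ⊓ T) (hr : r ∈ S ⊓ T) :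
    χ ⁅r, x⁆ = -χ ⁅x, r⁆ := by
  rw [← commutatorElement_inv, hχ.additiveOn.map_inv
    (commutator_inf_commutator_le (Subgroup.commutator_mem_commutator hx hr))]

include hρ

theorem commutatorPairing_defect {x r : F} (hx : x ∈ ⁅S, S⁆ ⊓ T) (hr : r ∈ ⁅S, S⁆ ⊓ T) :
    commutatorPairing χ ρ x (defect ρ r) = (3 : ℤ) • χ ⁅x, r⁆ := by
  have hpair := (hχ.biadditiveOn_commutatorPairing hρ).right x hx
  have hρr := hρ.apply_mem_commutator hr.1
  have hρx := hρ.apply_mem_commutator hx.1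
  have hρr_mem := Subgroup.commutator_le_self _ hρr
  rw [defect, hpair.map_mul (commutator_inf_le_inf hr) (inv_mem hρr_mem), hpair.map_inv hρr_mem,
    hpair.eq_zero_of_mem_commutator hρr, commutatorPairing,
    hχ.apply_commutatorElement_swap hr (Subgroup.commutator_le_self _ hρx),
    hχ.apply_commutatorElement_eq_zero hr hρx]
  simp

variable {Ψ : MonoidAlgebra ℤ F →ₗ[ℤ] M} (hΨ : IsTrilinearFunctional S T χ ρ Ψ)
include hΨ

omit [T.Normal] in
theorem additiveOn_functional : AdditiveOn (⁅⁅S, S⁆, S⁆ ⊓ T) fun x => Ψ (ε x - 1) :=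
  additiveOn_apply_of_sub_one fun x hx y hy => by
    rw [hΨ.pairing x (inf_le_inf_right T (Subgroup.commutator_le_left _ _) hx) y hy.2,
      hχ.commutatorPairing_eq_zero hρ hx (hρ.defect_mem hy.2).2]

theorem functional_commutatorElement {x r : F} (hx : x ∈ ⁅S, S⁆ ⊓ T) (hr : r ∈ S ⊓ T) :
    Ψ (ε ⁅x, r⁆ - 1) =
      commutatorPairing χ ρ x (defect ρ r) - Ψ ((ε r - 1) * (ε x - 1)) := by
  have hxr : ⁅x, r⁆ ∈ ⁅⁅S, S⁆, S⁆ ⊓ T :=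
    commutator_inf_commutator_le (Subgroup.commutator_mem_commutator hx hr)
  have hrx : r * x ∈ T := mul_mem hr.2 hx.2
  rw [apply_of_commutatorElement_sub_one, hΨ.pairing x hx r hr.2]
  rw [hΨ.pairing _ (inf_le_inf_right T (Subgroup.commutator_le_left _ _) hxr) _ hrx,
    hχ.commutatorPairing_eq_zero hρ hxr (hρ.defect_mem hrx).2]

theorem functional_commutatorElement_eq_six_smul {x r : F} (hx : x ∈ ⁅S, S⁆ ⊓ T)
    (hr : r ∈ ⁅S, S⁆ ⊓ T) :
    Ψ (ε ⁅x, r⁆ - 1) = (6 : ℤ) • χ ⁅x, r⁆ - (6 : ℤ) • χ (ρ ⁅x, r⁆) := by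
  have hρ_zero : χ (ρ ⁅x, r⁆) = 0 := by
    rw [map_commutatorElement]
    exact hχ.apply_commutatorElement_eq_zero
      (commutator_inf_le (hρ.apply_mem_commutator hx.1)) (hρ.apply_mem_commutator hr.1)
  rw [hχ.functional_commutatorElement hρ hΨ hx (commutator_inf_le_inf hr), hΨ.pairing r hr x hx.2,
    hχ.commutatorPairing_defect hρ hx hr, hχ.commutatorPairing_defect hρ hr hx,
    hχ.apply_commutatorElement_swap hx (commutator_inf_le_inf hr), hρ_zero]
  module

theorem functional_doubleCommutator_eq_six_smul {x r : F} (hx : x ∈ ⁅S ⊓ T, S ⊓ T⁆)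
    (hr : r ∈ S ⊓ T) :
    Ψ (ε ⁅x, r⁆ - 1) = (6 : ℤ) • χ ⁅x, r⁆ - (6 : ℤ) • χ (ρ ⁅x, r⁆) := by
  have hτ := hχ.isJacobiForm_inf
  have hρU (u) (hu : u ∈ S ⊓ T) : ρ u ∈ S ⊓ T := hρ.apply_mem_inf hu.1
  let b (y z : F) : M := splitForm (fun p q r => χ ⁅⁅p, q⁆, r⁆) ρ (defect ρ z) r y
  have hb : BiadditiveOn (S ⊓ T) (S ⊓ T) b :=
    ⟨fun z hz => (hτ.biadditiveOn_splitForm hρU (hρ.defect_mem hz.2)).right r hr,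
      fun y hy => hρ.additiveOn_comp_defect (hτ.additiveOn_splitForm hρU hr hy)⟩
  have hφ : QuadraticOn (S ⊓ T) b fun y => Ψ ((ε r - 1) * (ε y - 1)) :=
    quadraticOn_apply_of_sub_one (Ψ := Ψ ∘ₗ LinearMap.mulLeft ℤ (ε r - 1)) fun y hy z hz => by
      simpa only [LinearMap.comp_apply, LinearMap.mulLeft_apply, mul_assoc]
        using hΨ.split r hr y hy z hz.2
  have h_pair := ((hχ.biadditiveOn_commutatorPairing hρ).left _ (hρ.defect_mem hr.2)).mono
    commutator_inf_le
  have h_χ := (hχ.biadditiveOn_inf.left r hr).mono commutator_inf_le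
  have h_χρ := ((hχ.biadditiveOn_inf.left _ (hρU r hr)).mono commutator_inf_le).comp_hom ρ
    fun x hx => hρ.apply_mem_commutator (commutator_inf_le (S := S) (T := T) hx).1
  rw [hχ.functional_commutatorElement hρ hΨ (commutator_inf_le hx) hr, map_commutatorElement]
  refine (h_pair.sub (hφ.additiveOn_commutator hb)).eqOn_commutator
    ((h_χ.smul 6).sub (h_χρ.smul 6)) le_rfl (fun p hp q hq => ?_) hx
  rw [hφ.map_commutatorElement hb hp hq, commutatorPairing, map_commutatorElement]
  exact hτ.three_smul_sub_splitForm hρU hp hq hr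

theorem functional_eq_six_smul {x : F}
    (hx : x ∈ ⁅⁅S, S⁆ ⊓ T, ⁅S, S⁆ ⊓ T⁆ ⊔ ⁅⁅S ⊓ T, S ⊓ T⁆, S ⊓ T⁆) :
    Ψ (ε x - 1) = (6 : ℤ) • χ x - (6 : ℤ) • χ (ρ x) := by
  have hρ_mem (y) (hy : y ∈ ⁅⁅S, S⁆, S⁆ ⊓ T) : ρ y ∈ ⁅⁅S, S⁆, S⁆ ⊓ T :=
    commutator_inf_commutator_le
      (Subgroup.commutator_mono commutator_inf_le le_rfl (hρ.apply_mem_commutator_commutator hy.1))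
  rw [Subgroup.commutator_def (⁅S, S⁆ ⊓ T), Subgroup.commutator_def ⁅S ⊓ T, S ⊓ T⁆,
    ← Subgroup.closure_union] at hx
  refine (hχ.additiveOn_functional hρ hΨ).eqOn_closure
    ((hχ.additiveOn.smul 6).sub ((hχ.additiveOn.smul 6).comp_hom ρ hρ_mem)) ?_ ?_ hx
  · rintro _ (⟨x, hx, r, hr, rfl⟩ | ⟨x, hx, r, hr, rfl⟩)
    · exact commutator_inf_commutator_le
        (Subgroup.commutator_mem_commutator hx (commutator_inf_le_inf hr))
    · exact commutator_inf_commutator_le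
        (Subgroup.commutator_mem_commutator (commutator_inf_le hx) hr)
  · rintro _ (⟨x, hx, r, hr, rfl⟩ | ⟨x, hx, r, hr, rfl⟩)
    · exact hχ.functional_commutatorElement_eq_six_smul hρ hΨ hx hr
    · exact hχ.functional_doubleCommutator_eq_six_smul hρ hΨ hx hr

end IsCentralCharacter

end SixfoldCharacter

section SixthPower

open scoped commutatorElement

variable {F : Type} [Group F] {S T : Subgroup F} [S.Normal] [T.Normal] {a : F}

local notation "ε" => MonoidAlgebra.of ℤ F
local notation "ℚ/ℤ" => AddCircle (1 : ℚ)

theorem IsCentralCharacter.six_smul_apply_eq_zero [IsFreeGroup S] [IsFreeGroup T] {ρ : F →* F}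
    {χ : F → ℚ/ℤ} (hχ : IsCentralCharacter (⁅⁅S, S⁆, S⁆ ⊓ T) T χ) (hρ : IsProjectionAlong S T ρ)
    (ha : ε a - 1 ∈ mixedIdeal (S ⊓ T) S T) : (6 : ℤ) • χ a = 0 := by
  obtain ⟨Ψ, hΨ⟩ := hχ.exists_isTrilinearFunctional hρ
  have hΨa : Ψ (ε a - 1) = 0 := apply_of_sub_one_eq_zero ha
    (fun u _ => hΨ.cubic u) fun t _ s hs s' hs' f u hu => hΨ.cubic t s hs s' hs' f u hu.2
  have h_le : ⁅⁅S ⊓ T, S ⊓ T⁆, S ⊓ T⁆ ≤ ⁅⁅S, S⁆, S⁆ ⊓ T :=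
    (Subgroup.commutator_mono commutator_inf_le le_rfl).trans commutator_inf_commutator_le
  have hρa : 3 • χ (ρ a) = 0 := by
    rw [← hχ.additiveOn.map_pow (h_le (hρ.apply_mem_commutator_commutator_of_mixedIdeal ha))]
    exact hχ.map_commutator _ (Subgroup.commutator_mono h_le le_rfl (hρ.apply_pow_three_mem ha))
  have h_six := hχ.functional_eq_six_smul hρ hΨ (hρ.mem_sup_of_mixedIdeal ha)
  have hρa_six : (6 : ℤ) • χ (ρ a) = 2 • 3 • χ (ρ a) := by module
  rw [hΨa, hρa_six, hρa, smul_zero, sub_zero] at h_six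
  exact h_six.symm

theorem IsProjectionAlong.pow_six_mem [IsFreeGroup S] [IsFreeGroup T] {ρ : F →* F}
    (hρ : IsProjectionAlong S T ρ) (ha : ε a - 1 ∈ mixedIdeal (S ⊓ T) S T) :
    a ^ 6 ∈ ⁅⁅⁅S, S⁆, S⁆, T⁆ := by
  have h_le : ⁅⁅S, S⁆ ⊓ T, ⁅S, S⁆ ⊓ T⁆ ⊔ ⁅⁅S ⊓ T, S ⊓ T⁆, S ⊓ T⁆ ≤ ⁅⁅S, S⁆, S⁆ ⊓ T :=
    sup_le
      ((Subgroup.commutator_mono le_rfl commutator_inf_le_inf).trans commutator_inf_commutator_le)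
      ((Subgroup.commutator_mono commutator_inf_le le_rfl).trans commutator_inf_commutator_le)
  have ha_mem := h_le (hρ.mem_sup_of_mixedIdeal ha)
  refine mem_of_forall_additiveOn_eq_zero (B := ⁅⁅S, S⁆, S⁆ ⊓ T)
    (le_inf (Subgroup.commutator_le_left _ _) (Subgroup.commutator_le_right _ _))
    (Subgroup.commutator_mono inf_le_left inf_le_right) (pow_mem ha_mem 6) fun χ hχ hχ_zero => ?_
  have hχ' : IsCentralCharacter (⁅⁅S, S⁆, S⁆ ⊓ T) T χ :=
    ⟨hχ, fun x hx => hχ_zero x (Subgroup.commutator_mono inf_le_left le_rfl hx)⟩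
  rw [hχ.map_pow ha_mem]
  exact_mod_cast hχ'.six_smul_apply_eq_zero hρ ha

theorem pow_six_mem [IsFreeGroup F] (ha : ε a - 1 ∈ mixedIdeal (S ⊓ T) S T) :
    a ^ 6 ∈ ⁅⁅⁅S, S⁆, S⁆, T⁆ := by
  have hS : S ≤ S ⊔ T := le_sup_left
  have hT : T ≤ S ⊔ T := le_sup_right
  have haS : a ∈ S := (mem_of_of_sub_one_mem_augI (mixedIdeal_le_augI ha)).1
  lift a to ↥(S ⊔ T) using hS haS
  have h_sup : S.subgroupOf (S ⊔ T) ⊔ T.subgroupOf (S ⊔ T) = ⊤ := by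
    rw [← Subgroup.subgroupOf_sup hS hT, Subgroup.subgroupOf_self]
  obtain ⟨ρ, hρ⟩ := exists_isProjectionAlong h_sup
  have h_mem := Subgroup.mem_map_of_mem (S ⊔ T).subtype <|
    hρ.pow_six_mem (of_sub_one_mem_mixedIdeal_subgroupOf (inf_le_left.trans hS) hS hT ha)
  simpa only [Subgroup.map_commutator, Subgroup.map_subgroupOf_eq_of_le hS,
    Subgroup.map_subgroupOf_eq_of_le hT, map_pow, Subgroup.coe_subtype] using h_mem

end SixthPower

end FourFold

theorem four_fold_statement_general (F : Type) [Group F] [IsFreeGroup F]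
    (R S T : Subgroup F) [R.Normal] [S.Normal] [T.Normal] (hRS : R ≤ S) (a : F)
    (ha : (MonoidAlgebra.of ℤ F a) - 1 ∈
      augI R * augI S * augI S * augI T + augI T * augI S * augI S * augI R) :
    ((MonoidAlgebra.of ℤ F (a ^ 2)) - 1 ∈
      augI R * augI S * augI S * augI S + augI S * augI S * augI S * augI R +
        augI T * augI S * augI S * augI S + augI S * augI S * augI S * augI T +
          aug ⁅S, S⁆ * augI S) ∧
      a ^ 6 ∈ ⁅⁅⁅S, S⁆, S⁆, R ⊔ T⁆ := by
  constructor
  · have h_sq := FourFold.of_sq_sub_one_mem (FourFold.mixedIdeal_mul_top S S T).le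
      (FourFold.mixedIdeal_mono hRS le_rfl ha)
    refine (?_ : FourFold.mixedIdeal S S T ≤ _) h_sq
    simp only [FourFold.mixedIdeal, Submodule.add_eq_sup]
    exact sup_le (le_sup_of_le_left le_sup_right)
      (le_sup_of_le_left (le_sup_of_le_left le_sup_right))
  · exact FourFold.pow_six_mem (FourFold.mixedIdeal_mono (le_inf hRS le_sup_left) le_sup_right ha)

/-- Theorem 5.5: if `R ⊆ S`, `R ⊆ T` and `a ∈ D(F, 𝐫𝐬𝐬𝐭 + 𝐭𝐬𝐬𝐫)`, then
`a² ∈ D(F, 𝐫𝐬𝐬𝐬 + 𝐬𝐬𝐬𝐫 + 𝐭𝐬𝐬𝐬 + 𝐬𝐬𝐬𝐭 + Δ([S,S])𝐬)` and `a⁶ ∈ [S,S,S,RT]`. -/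
theorem four_fold_statement (F : Type) [Group F] [IsFreeGroup F]
    (R S T : Subgroup F) [R.Normal] [S.Normal] [T.Normal]
    (hRS : R ≤ S) (hRT : R ≤ T) (a : F)
    (ha : (MonoidAlgebra.of ℤ F a) - 1 ∈
      augI R * augI S * augI S * augI T + augI T * augI S * augI S * augI R) :
    ((MonoidAlgebra.of ℤ F (a ^ 2)) - 1 ∈
      augI R * augI S * augI S * augI S + augI S * augI S * augI S * augI R +
        augI T * augI S * augI S * augI S + augI S * augI S * augI S * augI T +
          aug ⁅S, S⁆ * augI S) ∧
      a ^ 6 ∈ ⁅⁅⁅S, S⁆, S⁆, R ⊔ T⁆ :=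
  four_fold_statement_general F R S T hRS a ha
end

section
/- Let F be a free group and R a normal subgroup of F, with 𝐫 and 𝐟 the two-sided ideals of ℤ[F] generated by the augmentation ideals of R and F. If a ∈ D(F, 𝐫𝐫𝐫𝐟 + 𝐟𝐫𝐫𝐫 + Δ([R,R])𝐫), where Δ([R,R])𝐫 denotes the additive span of products (c−1)·α with c ∈ [R,R] and α ∈ 𝐫, then a³ ∈ [R, R, R, F] = [[[R,R],R],F]. -/
/-! A function `c` on `F` extends linearly to `ℤ[F]`, and left multiplication by `r - 1` becomes
the difference operator `(Δ_r c)(f) = c (r f) - c f`. Hence the extension of `c` kills the ideal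
`𝐫𝐫𝐫𝐟 + 𝐟𝐫𝐫𝐫 + Δ([R,R])𝐫` as soon as the third differences of `c` along `R` are constant and
invariant under conjugation by `F`, and `Δ_r Δ_u c = 0` for `u ∈ [R,R]` and `r ∈ R`; if `a - 1`
lies in the ideal, it follows that `c a = c 1`. The indicator function of `R` is such a `c`, so
`a ∈ R`, and it remains to find enough such functions on `R`, which are transported to `F` by an
`R`-equivariant retraction `F → R`.

The group `R` is free, so functions on it can be prescribed by their increments along the edges of
the Cayley tree. Homomorphisms on `R`, and quadratic maps on `R` extending an invariant
homomorphism on `[R,R]`, show that `a ∈ [R,R,R]`. An invariant homomorphism `φ` on `[R,R,R]` need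
not extend, but there is a cubic map on `R` with third difference
`(q, r, s) ↦ φ [[s, q], r] + φ [[s, r], q]`, and the Jacobi identity shows that it restricts to
`3 φ` on `[R,R,R]`. Thus `3 φ a = 0`; the universal choice of `φ` is the quotient map
`[R,R,R] → [R,R,R] / [R,R,R,F]`. -/

open IsFreeGroup
open scoped commutatorElement IsMulCommutative

section Commutators

variable {G L : Type*} [Group G] [AddCommGroup L]

/-- Maps `G × G → L` that are additive in each variable, that is, bilinear forms on the
abelianization of `G`, written as functions on `G`. -/
structure IsBiadditive (B : G → G → L) : Prop where
  map_mul_left (x y z : G) : B (x * y) z = B x z + B y z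
  map_mul_right (x y z : G) : B x (y * z) = B x y + B x z

theorem eq_of_mem_commutator {A B : Subgroup G} {f φ : G → L}
    (hf : ∀ u ∈ ⁅A, B⁆, ∀ v, f (u * v) = f u + f v)
    (hφ : ∀ u ∈ ⁅A, B⁆, ∀ v ∈ ⁅A, B⁆, φ (u * v) = φ u + φ v)
    (h : ∀ x ∈ A, ∀ y ∈ B, φ ⁅x, y⁆ = f (x * y) - f (y * x)) :
    ∀ u ∈ ⁅A, B⁆, f u = φ u := by
  let δ (u : G) : L := f u - φ u
  have δ_mul (u : G) (hu : u ∈ ⁅A, B⁆) (v : G) (hv : v ∈ ⁅A, B⁆) : δ (u * v) = δ u + δ v := by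
    simp only [δ, hf u hu, hφ u hu v hv, add_sub_add_comm]
  have δ_one : δ 1 = 0 := by
    have h1 := δ_mul 1 (one_mem _) 1 (one_mem _)
    rwa [mul_one, left_eq_add] at h1
  suffices hδ : ∀ u ∈ ⁅A, B⁆, δ u = 0 from fun u hu => sub_eq_zero.1 (hδ u hu)
  intro u hu
  refine Subgroup.closure_induction (p := fun u _ => δ u = 0) ?_ δ_one
    (fun u v hu hv hδu hδv => by rw [δ_mul u hu v hv, hδu, hδv, add_zero]) (fun u hu hδu => ?_) hu
  · rintro _ ⟨x, hx, y, hy, rfl⟩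
    have hxy : x * y = ⁅x, y⁆ * (y * x) := by group
    rw [sub_eq_zero, h x hx y hy, hxy, hf _ (Subgroup.commutator_mem_commutator hx hy),
      add_sub_cancel_right]
  · have hinv := δ_mul u hu u⁻¹ (inv_mem hu)
    rwa [mul_inv_cancel, δ_one, hδu, zero_add, eq_comm] at hinv

theorem IsBiadditive.apply_eq_zero_of_mem_commutator {B : G → G → L} (hB : IsBiadditive B) {u : G}
    (hu : u ∈ commutator G) (y : G) : B u y = 0 := by
  refine eq_of_mem_commutator (f := (B · y)) (φ := 0) (fun u _ v => hB.map_mul_left u v y)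
    (fun _ _ _ _ => (add_zero 0).symm) (fun x _ z _ => ?_) u hu
  rw [Pi.zero_apply, hB.map_mul_left, hB.map_mul_left, add_comm, sub_self]

theorem IsBiadditive.eq_of_mem_commutator {B : G → G → L} (hB : IsBiadditive B) {q φ : G → L}
    (hq : ∀ r s, q (r * s) = q r + q s + B r s)
    (hφ : ∀ u ∈ commutator G, ∀ v ∈ commutator G, φ (u * v) = φ u + φ v)
    (h : ∀ x y, φ ⁅x, y⁆ = B x y - B y x) :
    ∀ u ∈ commutator G, q u = φ u := by
  refine _root_.eq_of_mem_commutator (fun u hu v => ?_) hφ fun x _ y _ => ?_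
  · rw [hq, hB.apply_eq_zero_of_mem_commutator hu, add_zero]
  · rw [h, hq, hq]
    abel

/-- `φ` restricts to a homomorphism from `N` to `L` that is invariant under conjugation by `G`, so
that it factors through `N ⧸ [N, G]`. The values of `φ` off `N` are irrelevant. -/
structure IsInvariantHomOn (N : Subgroup G) (φ : G → L) : Prop where
  map_mul : ∀ u ∈ N, ∀ v ∈ N, φ (u * v) = φ u + φ v
  map_conj : ∀ u ∈ N, ∀ g, φ (g * u * g⁻¹) = φ u

namespace IsInvariantHomOn

variable {N A : Subgroup G} {φ : G → L}

theorem map_one (hφ : IsInvariantHomOn N φ) : φ 1 = 0 := by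
  have h := hφ.map_mul 1 N.one_mem 1 N.one_mem
  rwa [mul_one, left_eq_add] at h

theorem map_inv (hφ : IsInvariantHomOn N φ) {u : G} (hu : u ∈ N) : φ u⁻¹ = -φ u := by
  have h := hφ.map_mul u hu u⁻¹ (N.inv_mem hu)
  rw [mul_inv_cancel, hφ.map_one] at h
  exact eq_neg_of_add_eq_zero_right h.symm

theorem map_pow (hφ : IsInvariantHomOn N φ) {u : G} (hu : u ∈ N) (n : ℕ) :
    φ (u ^ n) = n • φ u := by
  induction n with
  | zero => rw [pow_zero, zero_smul, hφ.map_one]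
  | succ n ih => rw [pow_succ, hφ.map_mul _ (N.pow_mem hu n) _ hu, ih, succ_nsmul]

theorem comp {H : Type*} [Group H] {M : Subgroup H} {f : H →* G} (hφ : IsInvariantHomOn N φ)
    (hf : ∀ u ∈ M, f u ∈ N) : IsInvariantHomOn M (φ ∘ f) where
  map_mul u hu v hv := by
    simp only [Function.comp_apply, _root_.map_mul, hφ.map_mul _ (hf u hu) _ (hf v hv)]
  map_conj u hu g := by
    simp only [Function.comp_apply, _root_.map_mul, _root_.map_inv, hφ.map_conj _ (hf u hu)]

theorem commutator_mul_right [A.Normal] (hφ : IsInvariantHomOn ⁅A, (⊤ : Subgroup G)⁆ φ) {u : G}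
    (hu : u ∈ A) (z w : G) : φ ⁅u, z * w⁆ = φ ⁅u, z⁆ + φ ⁅u, w⁆ := by
  have mem (t : G) : ⁅u, t⁆ ∈ ⁅A, (⊤ : Subgroup G)⁆ :=
    Subgroup.commutator_mem_commutator hu (Subgroup.mem_top t)
  rw [commutatorElement_mul_right_eq_mul_conj, mul_assoc, mul_assoc, ← mul_assoc z,
    hφ.map_mul _ (mem z) _ (Subgroup.Normal.conj_mem inferInstance _ (mem w) z),
    hφ.map_conj _ (mem w)]

theorem commutator_conj_right [A.Normal] (hφ : IsInvariantHomOn ⁅A, (⊤ : Subgroup G)⁆ φ) {u : G}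
    (hu : u ∈ A) (g z : G) : φ ⁅u, g * z * g⁻¹⁆ = φ ⁅u, z⁆ := by
  have h : φ ⁅u, g⁆ + φ ⁅u, g⁻¹⁆ = 0 := by
    rw [← hφ.commutator_mul_right hu, mul_inv_cancel, commutatorElement_one_right, hφ.map_one]
  rw [hφ.commutator_mul_right hu, hφ.commutator_mul_right hu, add_right_comm, h, zero_add]

theorem commutator_left [A.Normal] (hφ : IsInvariantHomOn ⁅A, (⊤ : Subgroup G)⁆ φ) (z : G) :
    IsInvariantHomOn A (φ ⁅·, z⁆) where
  map_mul u hu v hv := by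
    have mem {t : G} (ht : t ∈ A) : ⁅t, z⁆ ∈ ⁅A, (⊤ : Subgroup G)⁆ :=
      Subgroup.commutator_mem_commutator ht (Subgroup.mem_top z)
    rw [commutatorElement_mul_left_eq_conj_mul,
      hφ.map_mul _ (Subgroup.Normal.conj_mem inferInstance _ (mem hv) u) _ (mem hu),
      hφ.map_conj _ (mem hv), add_comm]
  map_conj u hu g := by
    have h : ⁅g * u * g⁻¹, z⁆ = g * ⁅u, g⁻¹ * z * g⁻¹⁻¹⁆ * g⁻¹ := by group
    rw [h, hφ.map_conj _ (Subgroup.commutator_mem_commutator hu (Subgroup.mem_top _)),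
      hφ.commutator_conj_right hu]

theorem isBiadditive_commutator (hφ : IsInvariantHomOn (commutator G) φ) :
    IsBiadditive fun x y => φ ⁅x, y⁆ where
  map_mul_left x y z := (hφ.commutator_left z).map_mul x (Subgroup.mem_top x) y (Subgroup.mem_top y)
  map_mul_right x y z := hφ.commutator_mul_right (Subgroup.mem_top x) y z

theorem jacobi (hφ : IsInvariantHomOn ⁅commutator G, (⊤ : Subgroup G)⁆ φ) (x y z : G) :
    φ ⁅⁅x, y⁆, z⁆ + φ ⁅⁅y, z⁆, x⁆ + φ ⁅⁅z, x⁆, y⁆ = 0 := by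
  have mem (a b : G) : ⁅a, b⁆ ∈ commutator G :=
    Subgroup.commutator_mem_commutator (Subgroup.mem_top a) (Subgroup.mem_top b)
  have mem' (a b t : G) : ⁅⁅a, b⁆, t⁆ ∈ ⁅commutator G, (⊤ : Subgroup G)⁆ :=
    Subgroup.commutator_mem_commutator (mem a b) (Subgroup.mem_top t)
  have h := congrArg φ (commutatorElement_commutatorElement_conj_mul x y z)
  rwa [hφ.map_mul _ (mul_mem (mem' x y _) (mem' y z _)) _ (mem' z x _),
    hφ.map_mul _ (mem' x y _) _ (mem' y z _), hφ.commutator_conj_right (mem x y),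
    hφ.commutator_conj_right (mem y z), hφ.commutator_conj_right (mem z x), hφ.map_one] at h

end IsInvariantHomOn

theorem exists_isInvariantHomOn.{u} {G : Type u} [Group G] (N : Subgroup G) [N.Normal] :
    ∃ (L : Type u) (_ : AddCommGroup L) (φ : G → L), IsInvariantHomOn N φ ∧
      ∀ u ∈ N, φ u = 0 → u ∈ ⁅N, (⊤ : Subgroup G)⁆ := by
  classical
  let π : G →* G ⧸ ⁅N, (⊤ : Subgroup G)⁆ := QuotientGroup.mk' _
  have hπ {u : G} : π u = 1 ↔ u ∈ ⁅N, (⊤ : Subgroup G)⁆ := QuotientGroup.eq_one_iff u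
  have mem_center (u : G) (hu : u ∈ N) : π u ∈ Subgroup.center (G ⧸ ⁅N, (⊤ : Subgroup G)⁆) := by
    refine Subgroup.mem_center_iff.2 fun x => ?_
    obtain ⟨g, rfl⟩ := QuotientGroup.mk'_surjective _ x
    refine (commutatorElement_eq_one_iff_mul_comm.1 ?_).symm
    rw [← map_commutatorElement]
    exact hπ.2 (Subgroup.commutator_mem_commutator hu (Subgroup.mem_top g))
  let φ (u : G) : Additive (Subgroup.center (G ⧸ ⁅N, (⊤ : Subgroup G)⁆)) :=
    .ofMul (if hu : u ∈ N then ⟨π u, mem_center u hu⟩ else 1)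
  have coe_φ (u : G) (hu : u ∈ N) : ((φ u).toMul : G ⧸ ⁅N, (⊤ : Subgroup G)⁆) = π u := by
    simp only [φ, dif_pos hu, toMul_ofMul]
  have ext_φ {a b : Additive (Subgroup.center (G ⧸ ⁅N, (⊤ : Subgroup G)⁆))}
      (h : (a.toMul : G ⧸ ⁅N, (⊤ : Subgroup G)⁆) = b.toMul) : a = b := Subtype.ext h
  refine ⟨_, inferInstance, φ, ⟨fun u hu v hv => ?_, fun u hu g => ?_⟩, fun u hu h => ?_⟩
  · apply ext_φ
    rw [toMul_add, Subgroup.coe_mul, coe_φ u hu, coe_φ v hv, coe_φ _ (mul_mem hu hv), map_mul]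
  · apply ext_φ
    rw [coe_φ u hu, coe_φ _ (Subgroup.Normal.conj_mem inferInstance u hu g), map_mul, map_mul,
      map_inv, Subgroup.mem_center_iff.1 (mem_center u hu), mul_inv_cancel_right]
  · rw [← hπ, ← coe_φ u hu, h]
    rfl

end Commutators

section FreeGroups

variable {S : Type*} [Group S] [IsFreeGroup S]

theorem closure_range_of_eq_top : Subgroup.closure (Set.range (of : Generators S → S)) = ⊤ := by
  have h := congrArg (Subgroup.map (mulEquiv S).toMonoidHom)
    (FreeGroup.closure_range_of (Generators S))
  rwa [MonoidHom.map_closure, ← Set.range_comp,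
    Subgroup.map_top_of_surjective _ (mulEquiv S).surjective] at h

theorem induction_on_mul_of {p : S → Prop} (one : p 1) (mul_of : ∀ s x, p (s * of x) ↔ p s)
    (s : S) : p s := by
  have hs : s ∈ Subgroup.closure (Set.range (of : Generators S → S)) := by
    simp only [closure_range_of_eq_top, Subgroup.mem_top]
  induction hs using Subgroup.closure_induction_right with
  | one => exact one
  | mul_right s _ x hx ih =>
    obtain ⟨x, rfl⟩ := hx
    exact (mul_of s x).2 ih
  | mul_inv_cancel s _ x hx ih =>
    obtain ⟨x, rfl⟩ := hx
    exact (mul_of _ x).1 (by rwa [inv_mul_cancel_right])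

variable {L : Type*}

theorem exists_apply_mul_of_eq_add [AddGroup L] (d : Generators S → S → L) :
    ∃ c : S → L, c 1 = 0 ∧ ∀ s x, c (s * of x) = c s + d x s := by
  -- The generators act on `S × L` by shears; the graph of `c` is the orbit of `(1, 0)`.
  let shear (x : Generators S) : Equiv.Perm (S × L) :=
    Equiv.prodShear (Equiv.mulRight (of x)) fun s => Equiv.addRight (d x s)
  let Φ : S →* Equiv.Perm (S × L) := lift fun x => (shear x)⁻¹
  have apply_mul_of (s : S) (x : Generators S) (p : S × L) :
      (Φ (s * of x))⁻¹ p = shear x ((Φ s)⁻¹ p) := by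
    simp only [map_mul, Φ, lift_of, mul_inv_rev, inv_inv, Equiv.Perm.mul_apply]
  have fst_eq : ∀ s, ((Φ s)⁻¹ (1, 0)).1 = s := by
    refine induction_on_mul_of (by rw [map_one, inv_one, Equiv.Perm.one_apply]) fun s x => ?_
    rw [apply_mul_of]
    exact mul_left_inj (of x)
  refine ⟨fun s => ((Φ s)⁻¹ (1, 0)).2, by simp only [map_one, inv_one, Equiv.Perm.one_apply],
    fun s x => ?_⟩
  calc ((Φ (s * of x))⁻¹ (1, 0)).2
      = ((Φ s)⁻¹ (1, 0)).2 + d x ((Φ s)⁻¹ (1, 0)).1 := by rw [apply_mul_of]; rfl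
    _ = ((Φ s)⁻¹ (1, 0)).2 + d x s := by rw [fst_eq]

theorem eq_apply_one_add_of_apply_mul_of [AddGroup L] {f ℓ : S → L}
    (hℓ : ∀ s t, ℓ (s * t) = ℓ s + ℓ t) (hf : ∀ s x, f (s * of x) = f s + ℓ (of x)) :
    ∀ s, f s = f 1 + ℓ s := by
  refine induction_on_mul_of ?_ fun s x => ?_
  · have h : ℓ 1 = 0 := by simpa using hℓ 1 1
    rw [h, add_zero]
  · rw [hf, hℓ, ← add_assoc, add_left_inj]

theorem exists_eq_div_swap {A : Type*} [CommGroup A] (C : S →* S →* A) (hC : ∀ s, C s s = 1) :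
    ∃ B : S →* S →* A, ∀ s t, C s t = B s t / B t s := by
  have hswap (s t : S) : C s t = 1 / C t s := by
    have h := hC (s * t)
    simp only [map_mul, MonoidHom.mul_apply, hC, one_mul, mul_one] at h
    rw [one_div, eq_inv_of_mul_eq_one_right h]
  let _ : LinearOrder (Generators S) := IsWellOrder.linearOrder WellOrderingRel
  let B : S →* S →* A := lift fun x => lift fun y => if x < y then C (of x) (of y) else 1
  suffices h : C = B / B.flip from
    ⟨B, fun s t => DFunLike.congr_fun (DFunLike.congr_fun h s) t⟩
  refine ext_hom fun x => ext_hom fun y => ?_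
  change _ = B (of x) (of y) / B (of y) (of x)
  simp only [B, lift_of]
  rcases lt_trichotomy x y with hxy | rfl | hyx
  · rw [if_pos hxy, if_neg hxy.asymm, div_one]
  · rw [if_neg (lt_irrefl x), div_one, hC]
  · rw [if_neg hyx.asymm, if_pos hyx, hswap]

variable [AddCommGroup L]

theorem IsBiadditive.exists_eq_sub_swap {C : S → S → L} (hC : IsBiadditive C)
    (hself : ∀ s, C s s = 0) :
    ∃ B : S → S → L, IsBiadditive B ∧ ∀ s t, C s t = B s t - B t s := by
  let C' : S →* S →* Multiplicative L := MonoidHom.mk' (fun s => MonoidHom.mk'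
    (fun t => .ofAdd (C s t)) fun t t' => congrArg Multiplicative.ofAdd (hC.map_mul_right s t t'))
    fun s s' => MonoidHom.ext fun t => congrArg Multiplicative.ofAdd (hC.map_mul_left s s' t)
  obtain ⟨B, hB⟩ := exists_eq_div_swap C' fun s => congrArg Multiplicative.ofAdd (hself s)
  exact ⟨fun s t => (B s t).toAdd,
    ⟨fun x y z => by rw [map_mul, MonoidHom.mul_apply, toAdd_mul],
      fun x y z => by rw [map_mul, toAdd_mul]⟩,
    fun s t => congrArg Multiplicative.toAdd (hB s t)⟩

theorem IsBiadditive.exists_apply_mul_eq {B : S → S → L} (hB : IsBiadditive B) :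
    ∃ q : S → L, ∀ r s, q (r * s) = q r + q s + B r s := by
  obtain ⟨q, hq1, hq⟩ := exists_apply_mul_of_eq_add fun x r => B r (of x)
  refine ⟨q, fun r s => ?_⟩
  have h := eq_apply_one_add_of_apply_mul_of (f := fun s => q (r * s) - q s) (hB.map_mul_right r)
    (fun s x => by simp only [← mul_assoc, hq, hB.map_mul_left]; abel) s
  rw [sub_eq_iff_eq_add, mul_one, hq1, sub_zero] at h
  rw [h, add_right_comm]

end FreeGroups

section CubicMaps

variable {S L : Type*} [Group S] [AddCommGroup L]

/-- The difference operator `Δ_r` attached to `r`. It is left multiplication by `r - 1` transported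
to the functions on a set on which `S` acts, see `linearExtension_of_sub_one_mul`. -/
def leftDiff {X : Type*} [SMul S X] (r : S) (c : X → L) (x : X) : L :=
  c (r • x) - c x

/-- Maps of degree at most three along the action of `S`: the third differences
`Δ_s Δ_r Δ_q c` are constant with value `T q r s`. Moreover `Δ_r Δ_u c` vanishes for `u` in the
commutator subgroup, which reflects the summand `Δ([R,R])𝐫` of the ideal of the theorem. -/
structure IsCubicMap {X : Type*} [MulAction S X] (c : X → L) (T : S → S → S → L) : Prop where
  leftDiff_leftDiff_leftDiff (q r s : S) (x : X) :
    leftDiff s (leftDiff r (leftDiff q c)) x = T q r s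
  leftDiff_leftDiff_of_mem_commutator : ∀ u ∈ commutator S, ∀ (r : S) (x : X),
    leftDiff r (leftDiff u c) x = 0

theorem IsCubicMap.comp {X Y : Type*} [MulAction S X] [MulAction S Y] {c : Y → L}
    {T : S → S → S → L} (hc : IsCubicMap c T) (f : X →[S] Y) : IsCubicMap (c ∘ f) T := by
  have hdiff (r : S) (c : Y → L) : leftDiff r (c ∘ f) = leftDiff r c ∘ f :=
    funext fun x => by simp only [leftDiff, Function.comp_apply, map_smul]
  exact ⟨fun q r s x => by
      simp only [hdiff, Function.comp_apply, hc.leftDiff_leftDiff_leftDiff],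
    fun u hu r x => by
      simp only [hdiff, Function.comp_apply, hc.leftDiff_leftDiff_of_mem_commutator u hu]⟩

theorem IsBiadditive.isCubicMap {B : S → S → L} (hB : IsBiadditive B) {q : S → L}
    (hq : ∀ r s, q (r * s) = q r + q s + B r s) : IsCubicMap q (0 : S → S → S → L) := by
  have hdiff (r s h : S) : leftDiff s (leftDiff r q) h = B r s := by
    simp only [leftDiff, smul_eq_mul, hq, hB.map_mul_right]
    abel
  refine ⟨fun r s t h => ?_, fun u hu r h => ?_⟩
  · rw [leftDiff, hdiff, hdiff, sub_self]
    rfl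
  · rw [hdiff, hB.apply_eq_zero_of_mem_commutator hu]

theorem exists_isCubicMap [IsFreeGroup S] {T : S → S → S → L} (hT : ∀ q, IsBiadditive (T q))
    (hsymm : ∀ q r h, T q r h = T r q h) : ∃ c : S → L, c 1 = 0 ∧ IsCubicMap c T := by
  have map_mul_left (q q' r h : S) : T (q * q') r h = T q r h + T q' r h := by
    simp only [hsymm _ r h, (hT r).map_mul_left]
  have hT' (h : S) : IsBiadditive (T · · h) :=
    ⟨fun q q' r => map_mul_left q q' r h,
      fun q r r' => (hT q).map_mul_left r r' h⟩
  choose q hq using fun x : Generators S => (hT' (of x)).exists_apply_mul_eq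
  obtain ⟨c, c_one, c_mul_of⟩ := exists_apply_mul_of_eq_add q
  have q_eq_zero (x : Generators S) (u : S) (hu : u ∈ commutator S) : q x u = 0 :=
    (hT' (of x)).eq_of_mem_commutator (hq x) (φ := 0) (fun _ _ _ _ => (add_zero 0).symm)
      (fun r s => by rw [hsymm, sub_self, Pi.zero_apply]) u hu
  have leftDiff_leftDiff (r s : S) : ∀ h,
      leftDiff s (leftDiff r c) h = leftDiff s (leftDiff r c) 1 + T r s h := by
    refine eq_apply_one_add_of_apply_mul_of ((hT r).map_mul_right s) fun h x => ?_
    simp only [leftDiff, smul_eq_mul, ← mul_assoc, c_mul_of, hq, map_mul_left]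
    abel
  have leftDiff_commutator (u : S) (hu : u ∈ commutator S) :
      ∀ h, leftDiff u c h = leftDiff u c 1 + 0 := by
    refine eq_apply_one_add_of_apply_mul_of (ℓ := 0) (fun _ _ => (add_zero 0).symm) fun h x => ?_
    simp only [leftDiff, smul_eq_mul, ← mul_assoc, c_mul_of, hq, q_eq_zero x u hu,
      (hT' (of x)).apply_eq_zero_of_mem_commutator hu, Pi.zero_apply]
    abel
  refine ⟨c, c_one, fun r s t h => ?_, fun u hu r h => ?_⟩
  · rw [leftDiff, leftDiff_leftDiff r s (t • h), leftDiff_leftDiff r s h, smul_eq_mul,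
      (hT r).map_mul_right, add_sub_add_left_eq_sub, add_sub_cancel_right]
  · rw [leftDiff, leftDiff_commutator u hu, leftDiff_commutator u hu h, sub_self]

theorem IsCubicMap.map_mul_of_mem_commutator {c : S → L} {T : S → S → S → L} (hc : IsCubicMap c T)
    (hc1 : c 1 = 0) {u : S} (hu : u ∈ commutator S) (h : S) : c (u * h) = c u + c h := by
  have hdiff := hc.leftDiff_leftDiff_of_mem_commutator u hu h 1
  simp only [leftDiff, smul_eq_mul, mul_one, hc1, sub_zero, sub_eq_zero] at hdiff
  rw [← hdiff, sub_add_cancel]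

/-- The triple Lie bracket `(h, q, r) ↦ [[h, q], r]` symmetrized in `q` and `r`, read through `φ`.
It is the third difference of the cubic map which extends `3 φ`. -/
def doubleBracketSum (φ : S → L) (q r h : S) : L :=
  φ ⁅⁅h, q⁆, r⁆ + φ ⁅⁅h, r⁆, q⁆

variable {φ : S → L}

theorem IsInvariantHomOn.isBiadditive_doubleBracketSum
    (hφ : IsInvariantHomOn ⁅commutator S, (⊤ : Subgroup S)⁆ φ) (q : S) :
    IsBiadditive (doubleBracketSum φ q) where
  map_mul_left r r' h := by
    simp only [doubleBracketSum, (hφ.commutator_left q).isBiadditive_commutator.map_mul_right h,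
      hφ.commutator_mul_right (Subgroup.commutator_mem_commutator (Subgroup.mem_top h)
        (Subgroup.mem_top q))]
    abel
  map_mul_right r h h' := by
    simp only [doubleBracketSum,
      (hφ.commutator_left q).isBiadditive_commutator.map_mul_left h h' r,
      (hφ.commutator_left r).isBiadditive_commutator.map_mul_left h h' q]
    abel

theorem IsInvariantHomOn.doubleBracketSum_sub_swap
    (hφ : IsInvariantHomOn ⁅commutator S, (⊤ : Subgroup S)⁆ φ) (x y z : S) :
    doubleBracketSum φ z x y - doubleBracketSum φ z y x = -(3 • φ ⁅⁅x, y⁆, z⁆) := by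
  have antisymm (x y z : S) : φ ⁅⁅y, x⁆, z⁆ = -φ ⁅⁅x, y⁆, z⁆ := by
    rw [← commutatorElement_inv x y]
    exact (hφ.commutator_left z).map_inv
      (Subgroup.commutator_mem_commutator (Subgroup.mem_top x) (Subgroup.mem_top y))
  have hjacobi : φ ⁅⁅y, z⁆, x⁆ + φ ⁅⁅z, x⁆, y⁆ = -φ ⁅⁅x, y⁆, z⁆ := by
    rw [← add_eq_zero_iff_eq_neg, ← hφ.jacobi x y z]
    abel
  calc doubleBracketSum φ z x y - doubleBracketSum φ z y x
      = (φ ⁅⁅y, z⁆, x⁆ + φ ⁅⁅z, x⁆, y⁆) - 2 • φ ⁅⁅x, y⁆, z⁆ := by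
        rw [doubleBracketSum, doubleBracketSum, antisymm x y, antisymm z x]
        abel
    _ = -(3 • φ ⁅⁅x, y⁆, z⁆) := by
        rw [hjacobi]
        abel

theorem IsCubicMap.eq_three_nsmul {c : S → L}
    (hφ : IsInvariantHomOn ⁅commutator S, (⊤ : Subgroup S)⁆ φ)
    (hc : IsCubicMap c (doubleBracketSum φ)) (hc1 : c 1 = 0) :
    ∀ a ∈ ⁅commutator S, (⊤ : Subgroup S)⁆, c a = 3 • φ a := by
  have polar_commutator (z : S) : ∀ u ∈ commutator S,
      leftDiff z c u - leftDiff z c 1 = -(3 • φ ⁅u, z⁆) := by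
    refine (hφ.isBiadditive_doubleBracketSum z).eq_of_mem_commutator
      (q := fun u => leftDiff z c u - leftDiff z c 1) (φ := fun u => -(3 • φ ⁅u, z⁆))
      (fun r s => ?_) (fun u hu v hv => ?_) fun x y => ?_
    · have h := hc.leftDiff_leftDiff_leftDiff z r s 1
      simp only [leftDiff, smul_eq_mul, mul_one] at h ⊢
      rw [← h]
      abel
    · rw [(hφ.commutator_left z).map_mul u hu v hv, smul_add, neg_add]
    · exact (hφ.doubleBracketSum_sub_swap x y z).symm
  refine eq_of_mem_commutator (fun u hu v => hc.map_mul_of_mem_commutator hc1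
    (Subgroup.commutator_le_left _ _ hu) v)
    (fun u hu v hv => by rw [hφ.map_mul u hu v hv, smul_add])
    fun u hu z _ => ?_
  have h := polar_commutator z u hu
  simp only [leftDiff, smul_eq_mul, mul_one, hc1] at h
  calc 3 • φ ⁅u, z⁆ = -(-(3 • φ ⁅u, z⁆)) := (neg_neg _).symm
    _ = c (u * z) - c (z * u) := by
      rw [← h, hc.map_mul_of_mem_commutator hc1 hu]
      abel

theorem IsInvariantHomOn.exists_isCubicMap_zero [IsFreeGroup S]
    (hφ : IsInvariantHomOn (commutator S) φ) :
    ∃ b : S → L, IsCubicMap b (0 : S → S → S → L) ∧ ∀ u ∈ commutator S, b u = φ u := by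
  obtain ⟨B, hB, hBφ⟩ := hφ.isBiadditive_commutator.exists_eq_sub_swap fun s => by
    rw [commutatorElement_self, hφ.map_one]
  obtain ⟨b, hb⟩ := hB.exists_apply_mul_eq
  exact ⟨b, hB.isCubicMap hb, hB.eq_of_mem_commutator hb hφ.map_mul hBφ⟩

theorem IsInvariantHomOn.exists_isCubicMap_doubleBracketSum [IsFreeGroup S]
    (hφ : IsInvariantHomOn ⁅commutator S, (⊤ : Subgroup S)⁆ φ) :
    ∃ c : S → L, IsCubicMap c (doubleBracketSum φ) ∧
      ∀ a ∈ ⁅commutator S, (⊤ : Subgroup S)⁆, c a = 3 • φ a := by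
  obtain ⟨c, hc1, hc⟩ := exists_isCubicMap hφ.isBiadditive_doubleBracketSum fun q r h =>
    add_comm (φ ⁅⁅h, q⁆, r⁆) (φ ⁅⁅h, r⁆, q⁆)
  exact ⟨c, hc, hc.eq_three_nsmul hφ hc1⟩

end CubicMaps

section GroupRing

variable {F L : Type*} [AddCommGroup L]

/-- The `ℤ`-linear form on `ℤ[F]` whose values on the group elements are given by `c`. -/
noncomputable def linearExtension (c : F → L) : MonoidAlgebra ℤ F →ₗ[ℤ] L :=
  (MonoidAlgebra.basis F ℤ).constr ℤ c

theorem le_ker_linearExtension_of_eq_zero {c : F → L} (hc : ∀ f, c f = 0)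
    (P : Submodule ℤ (MonoidAlgebra ℤ F)) : P ≤ LinearMap.ker (linearExtension c) := by
  obtain rfl : c = 0 := funext hc
  rw [linearExtension, map_zero, LinearMap.ker_zero]
  exact le_top

variable [Group F]

theorem linearExtension_of (c : F → L) (g : F) :
    linearExtension c (MonoidAlgebra.of ℤ F g) = c g :=
  (MonoidAlgebra.basis F ℤ).constr_basis ℤ c g

theorem linearExtension_of_sub_one_mul (c : F → L) (g : F) (x : MonoidAlgebra ℤ F) :
    linearExtension c ((MonoidAlgebra.of ℤ F g - 1) * x) = linearExtension (leftDiff g c) x := by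
  induction x using MonoidAlgebra.induction_on with
  | of h =>
    rw [sub_mul, one_mul, ← map_mul, map_sub, linearExtension_of, linearExtension_of,
      linearExtension_of, leftDiff, smul_eq_mul]
  | add x y hx hy => rw [mul_add, map_add, map_add, hx, hy]
  | smul n x hx => rw [mul_smul_comm, map_smul, map_smul, hx]

end GroupRing

section Augmentation

variable {F : Type} [Group F] {L : Type*} [AddCommGroup L]

theorem aug_mul_le_ker_linearExtension {N : Subgroup F} {P : Submodule ℤ (MonoidAlgebra ℤ F)}
    {c : F → L} (h : ∀ n ∈ N, P ≤ LinearMap.ker (linearExtension (leftDiff n c))) :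
    aug N * P ≤ LinearMap.ker (linearExtension c) := by
  refine Submodule.mul_le.2 fun x hx p hp => ?_
  induction hx using Submodule.span_induction with
  | mem x hx =>
    obtain ⟨n, hn, rfl⟩ := hx
    rw [LinearMap.mem_ker, linearExtension_of_sub_one_mul]
    exact h n hn hp
  | zero => rw [zero_mul]; exact zero_mem _
  | add x y _ _ hx hy => rw [add_mul]; exact add_mem hx hy
  | smul n x _ hx => rw [smul_mul_assoc]; exact Submodule.smul_mem _ n hx

theorem top_mul_aug_le (N : Subgroup F) [hN : N.Normal] : ⊤ * aug N ≤ augI N := by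
  suffices h : ∀ x, ∀ y ∈ aug N, x * y ∈ augI N from Submodule.mul_le.2 fun x _ => h x
  intro x y hy
  induction x using MonoidAlgebra.induction_on with
  | of f =>
    induction hy using Submodule.span_induction with
    | mem y hy =>
      obtain ⟨n, hn, rfl⟩ := hy
      have hconj : MonoidAlgebra.of ℤ F f * (MonoidAlgebra.of ℤ F n - 1) =
          (MonoidAlgebra.of ℤ F (f * n * f⁻¹) - 1) * MonoidAlgebra.of ℤ F f := by
        rw [mul_sub, sub_mul, mul_one, one_mul, ← map_mul, ← map_mul, inv_mul_cancel_right]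
      rw [hconj]
      exact Submodule.mul_mem_mul (Submodule.subset_span ⟨_, hN.conj_mem n hn f, rfl⟩)
        Submodule.mem_top
    | zero => rw [mul_zero]; exact zero_mem _
    | add x y _ _ hx hy => rw [mul_add]; exact add_mem hx hy
    | smul n x _ hx => rw [mul_smul_comm]; exact Submodule.smul_mem _ n hx
  | add x x' hx hx' => rw [add_mul]; exact add_mem hx hx'
  | smul n x hx => rw [smul_mul_assoc]; exact Submodule.smul_mem _ n hx

theorem augI_mul_augI_le (M N : Subgroup F) [N.Normal] : augI M * augI N ≤ aug M * augI N :=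
  calc augI M * augI N = aug M * (⊤ * aug N * ⊤) := by simp only [augI, mul_assoc]
    _ ≤ aug M * (augI N * ⊤) := by gcongr; exact top_mul_aug_le N
    _ = aug M * (aug N * (⊤ * ⊤)) := by simp only [augI, mul_assoc]
    _ ≤ aug M * augI N := by unfold augI; gcongr; exact le_top

theorem augI_mul_augI_mul_augI_mul_augI_le (A B C D : Subgroup F) [B.Normal] [C.Normal]
    [D.Normal] : augI A * augI B * augI C * augI D ≤ aug A * (aug B * (aug C * (aug D * ⊤))) :=
  calc augI A * augI B * augI C * augI D
      ≤ aug A * augI B * augI C * augI D := by gcongr ?_ * _ * _; exact augI_mul_augI_le A B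
    _ = aug A * (augI B * augI C) * augI D := by simp only [mul_assoc]
    _ ≤ aug A * (aug B * augI C) * augI D := by gcongr _ * ?_ * _; exact augI_mul_augI_le B C
    _ = aug A * (aug B * (augI C * augI D)) := by simp only [mul_assoc]
    _ ≤ aug A * (aug B * (aug C * augI D)) := by gcongr _ * (_ * ?_); exact augI_mul_augI_le C D

/-- The ideal `𝐫𝐫𝐫𝐟 + 𝐟𝐫𝐫𝐫 + Δ([R,R])𝐫` of `ℤ[F]`. -/
noncomputable def cubeIdeal (R : Subgroup F) : Submodule ℤ (MonoidAlgebra ℤ F) :=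
  augI R * augI R * augI R * augI (⊤ : Subgroup F) +
    augI (⊤ : Subgroup F) * augI R * augI R * augI R + aug ⁅R, R⁆ * augI R

variable {R : Subgroup F} [R.Normal]

/-- Invariance of a function of three variables in `R` under simultaneous conjugation by the
elements of `F`. -/
def IsConjInvariant (T : R → R → R → L) : Prop :=
  ∀ (g : F) (q r s : R),
    T (MulAut.conjNormal g q) (MulAut.conjNormal g r) (MulAut.conjNormal g s) = T q r s

theorem IsCubicMap.cubeIdeal_le_ker {c : F → L} {T : R → R → R → L} (hc : IsCubicMap c T)
    (hT : IsConjInvariant T) : cubeIdeal R ≤ LinearMap.ker (linearExtension c) := by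
  refine sup_le (sup_le ?_ ?_) ?_
  · refine (augI_mul_augI_mul_augI_mul_augI_le R R R ⊤).trans ?_
    refine aug_mul_le_ker_linearExtension fun q hq => aug_mul_le_ker_linearExtension fun r hr =>
      aug_mul_le_ker_linearExtension fun s hs => aug_mul_le_ker_linearExtension fun g _ =>
      le_ker_linearExtension_of_eq_zero (fun f => ?_) _
    have h := hc.leftDiff_leftDiff_leftDiff ⟨q, hq⟩ ⟨r, hr⟩ ⟨s, hs⟩
    exact sub_eq_zero.2 ((h (g * f)).trans (h f).symm)
  · refine (augI_mul_augI_mul_augI_mul_augI_le ⊤ R R R).trans ?_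
    refine aug_mul_le_ker_linearExtension fun g _ => aug_mul_le_ker_linearExtension fun q hq =>
      aug_mul_le_ker_linearExtension fun r hr => aug_mul_le_ker_linearExtension fun s hs =>
      le_ker_linearExtension_of_eq_zero (fun f => ?_) _
    have h := hc.leftDiff_leftDiff_leftDiff ⟨q, hq⟩ ⟨r, hr⟩ ⟨s, hs⟩ f
    rw [← hT g, ← hc.leftDiff_leftDiff_leftDiff _ _ _ (g * f)] at h
    simp only [leftDiff, Subgroup.smul_def, smul_eq_mul, MulAut.conjNormal_apply, mul_assoc,
      inv_mul_cancel_left] at h ⊢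
    rw [← sub_eq_zero.2 h.symm]
    abel
  · refine aug_mul_le_ker_linearExtension fun u hu => aug_mul_le_ker_linearExtension fun r hr =>
      le_ker_linearExtension_of_eq_zero (fun f => ?_) _
    rw [← Subgroup.map_subtype_commutator] at hu
    obtain ⟨u, hu, rfl⟩ := hu
    exact hc.leftDiff_leftDiff_of_mem_commutator u hu ⟨r, hr⟩ f

theorem IsCubicMap.map_eq_map_one {c : F → L} {T : R → R → R → L} (hc : IsCubicMap c T)
    (hT : IsConjInvariant T) {a : F} (ha : MonoidAlgebra.of ℤ F a - 1 ∈ cubeIdeal R) :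
    c a = c 1 := by
  have h := LinearMap.mem_ker.1 (hc.cubeIdeal_le_ker hT ha)
  rwa [map_sub, ← map_one (MonoidAlgebra.of ℤ F), linearExtension_of, linearExtension_of,
    sub_eq_zero] at h

theorem mem_of_of_sub_one_mem_cubeIdeal {a : F} (ha : MonoidAlgebra.of ℤ F a - 1 ∈ cubeIdeal R) :
    a ∈ R := by
  classical
  let χ (f : F) : ℤ := if f ∈ R then 1 else 0
  have χ_smul (r : R) (f : F) : χ (r • f) = χ f := by
    simp only [χ, Subgroup.smul_def, smul_eq_mul, Subgroup.mul_mem_cancel_left R r.2]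
  have hχ : IsCubicMap χ (0 : R → R → R → ℤ) :=
    ⟨fun q r s f => by simp only [leftDiff, χ_smul, sub_self, Pi.zero_apply],
      fun u _ r f => by simp only [leftDiff, χ_smul, sub_self]⟩
  have h := hχ.map_eq_map_one (fun _ _ _ _ => rfl) ha
  by_contra haR
  simp only [χ, if_neg haR, if_pos R.one_mem, zero_ne_one] at h

theorem exists_equivariant_retraction {F : Type*} [Group F] (R : Subgroup F) :
    ∃ τ : F →[R] R, ∀ r : R, τ r = r := by
  obtain ⟨T, hT, hT1⟩ := R.exists_isComplement_right 1
  exact ⟨⟨fun f => (hT.equiv f).1, fun r f => congrArg Prod.fst (hT.equiv_mul_left r f)⟩,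
    fun r => hT.equiv_fst_eq_self_of_mem_of_one_mem hT1 r.2⟩

theorem IsCubicMap.map_eq_map_one_of_subgroup {c : R → L} {T : R → R → R → L}
    (hc : IsCubicMap c T) (hT : IsConjInvariant T) {a : R}
    (ha : MonoidAlgebra.of ℤ F a - 1 ∈ cubeIdeal R) : c a = c 1 := by
  obtain ⟨τ, hτ⟩ := exists_equivariant_retraction R
  have h := (hc.comp τ).map_eq_map_one hT ha
  rwa [Function.comp_apply, Function.comp_apply, hτ, ← R.coe_one, hτ] at h

theorem mem_commutator_of_of_sub_one_mem_cubeIdeal {a : R}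
    (ha : MonoidAlgebra.of ℤ F a - 1 ∈ cubeIdeal R) : a ∈ commutator R := by
  obtain ⟨L, _, φ, hφ, hker⟩ := exists_isInvariantHomOn (⊤ : Subgroup R)
  have hzero : IsBiadditive (0 : R → R → L) :=
    ⟨fun _ _ _ => (add_zero 0).symm, fun _ _ _ => (add_zero 0).symm⟩
  have hcubic : IsCubicMap φ (0 : R → R → R → L) := hzero.isCubicMap fun r s => by
    rw [hφ.map_mul r (Subgroup.mem_top r) s (Subgroup.mem_top s), Pi.zero_apply, Pi.zero_apply,
      add_zero]
  have h := hcubic.map_eq_map_one_of_subgroup (fun _ _ _ _ => rfl) ha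
  exact hker a (Subgroup.mem_top a) (h.trans hφ.map_one)

variable [IsFreeGroup R]

theorem mem_commutator_commutator_of_of_sub_one_mem_cubeIdeal {a : R}
    (ha : MonoidAlgebra.of ℤ F a - 1 ∈ cubeIdeal R) :
    a ∈ ⁅commutator R, (⊤ : Subgroup R)⁆ := by
  obtain ⟨L, _, φ, hφ, hker⟩ := exists_isInvariantHomOn (commutator R)
  obtain ⟨b, hb, hbφ⟩ := hφ.exists_isCubicMap_zero
  have haR := mem_commutator_of_of_sub_one_mem_cubeIdeal ha
  have h := hb.map_eq_map_one_of_subgroup (fun _ _ _ _ => rfl) ha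
  rw [hbφ a haR, hbφ 1 (one_mem _), hφ.map_one] at h
  exact hker a haR h

theorem pow_three_mem_of_of_sub_one_mem_cubeIdeal {a : R}
    (ha : MonoidAlgebra.of ℤ F a - 1 ∈ cubeIdeal R) :
    (a : F) ^ 3 ∈ ⁅⁅⁅R, R⁆, R⁆, (⊤ : Subgroup F)⁆ := by
  obtain ⟨L, _, φ, hφ, hker⟩ := exists_isInvariantHomOn ⁅⁅R, R⁆, R⁆
  have coe_mem {x : R} (hx : x ∈ ⁅commutator R, (⊤ : Subgroup R)⁆) : (x : F) ∈ ⁅⁅R, R⁆, R⁆ := by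
    have h := Subgroup.mem_map_of_mem R.subtype hx
    rwa [Subgroup.map_commutator, Subgroup.map_subtype_commutator, ← MonoidHom.range_eq_map,
      R.range_subtype] at h
  have hφR : IsInvariantHomOn ⁅commutator R, (⊤ : Subgroup R)⁆ (φ ∘ R.subtype) :=
    hφ.comp fun _ => coe_mem
  obtain ⟨c, hc, hcφ⟩ := hφR.exists_isCubicMap_doubleBracketSum
  have map_conj (g : F) (x y z : R) :
      (φ ∘ R.subtype) ⁅⁅MulAut.conjNormal g x, MulAut.conjNormal g y⁆, MulAut.conjNormal g z⁆ =
        (φ ∘ R.subtype) ⁅⁅x, y⁆, z⁆ := by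
    rw [← map_commutatorElement, ← map_commutatorElement, Function.comp_apply, R.subtype_apply,
      MulAut.conjNormal_apply]
    exact hφ.map_conj _ (coe_mem (Subgroup.commutator_mem_commutator
      (Subgroup.commutator_mem_commutator (Subgroup.mem_top x) (Subgroup.mem_top y))
      (Subgroup.mem_top z))) g
  have haR := mem_commutator_commutator_of_of_sub_one_mem_cubeIdeal ha
  have h := hc.map_eq_map_one_of_subgroup (fun g q r s =>
    congrArg₂ (· + ·) (map_conj g s q r) (map_conj g s r q)) ha
  rw [hcφ a haR, hcφ 1 (one_mem _), hφR.map_one, smul_zero] at h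
  refine hker _ (pow_mem (coe_mem haR) 3) ?_
  rwa [hφ.map_pow (coe_mem haR)]

end Augmentation

theorem cube_statement_general {F : Type} [Group F] (R : Subgroup F) [R.Normal] [IsFreeGroup R]
    {a : F} (ha : MonoidAlgebra.of ℤ F a - 1 ∈
      augI R * augI R * augI R * augI (⊤ : Subgroup F) +
        augI (⊤ : Subgroup F) * augI R * augI R * augI R +
          aug ⁅R, R⁆ * augI R) :
    a ^ 3 ∈ ⁅⁅⁅R, R⁆, R⁆, (⊤ : Subgroup F)⁆ := by
  lift a to R using mem_of_of_sub_one_mem_cubeIdeal ha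
  exact pow_three_mem_of_of_sub_one_mem_cubeIdeal ha

/-- (5.4) in the paper: if `a ∈ D(F, 𝐫𝐫𝐫𝐟 + 𝐟𝐫𝐫𝐫 + Δ([R,R])𝐫)`,
then `a³ ∈ [R,R,R,F]`. -/
theorem cube_statement (F : Type) [Group F] [IsFreeGroup F]
    (R : Subgroup F) [R.Normal] (a : F)
    (ha : (MonoidAlgebra.of ℤ F a) - 1 ∈
      augI R * augI R * augI R * augI (⊤ : Subgroup F) +
        augI (⊤ : Subgroup F) * augI R * augI R * augI R +
          aug ⁅R, R⁆ * augI R) :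
    a ^ 3 ∈ ⁅⁅⁅R, R⁆, R⁆, (⊤ : Subgroup F)⁆ := by
  have : IsFreeGroup R := subgroupIsFreeOfIsFree R
  exact cube_statement_general R ha
end
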